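/- arXiv:2307.08661 — 6 statements merged into one kernel-verified Lean document; each statement's English description precedes it below -/
import Mathlib

section
/- For every integer c there exists an oriented complete multipartite graph with no induced subdigraph isomorphic to C⃗3(1, 2, 2) whose dichromatic number is greater than c. (In other words, C⃗3(1,2,2) is not a hero in oriented complete multipartite graphs.) -/
/-!
Finite sequences of natural numbers form a rooted tree (the prefix order), and the lexicographic order
is a linear order in which ancestors come first and subtrees are intervals. A graph on the tree,
`List.Edge`, joins certain nodes to ancestors in such a way that edges along one branch never cross.
The vertices of the digraph are the increasing paths `(i, j, k)` with two edges; two of them are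
nonadjacent exactly when they have the same middle node. Arcs go from the smaller to the larger middle
node, except that `(j, k, l)` sends an arc back to every `(i, j, k)`.

*No copy of `C⃗3(1,2,2)`.* All backward arcs leaving a vertex end in a single part, and all backward
arcs entering a vertex start in a single part. The vertices of an embedded tournament lie in distinct
parts, so each of them has at most one backward arc out and at most one in. Essentially one ordering
of `C⃗3(1,2,2)` satisfies this, and it would produce edges `p q`, `q r`, `m y` with
`p < m < q < y < r`. As subtrees are intervals, `p, m, q, y` would then lie on one branch, where `p q`
and `m y` cross: a contradiction (`List.not_edge_of_crossing`).

*Large dichromatic number.* The edges have no proper colouring with finitely many colours, even below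
a given node (`List.exists_edge_mono`). This is the argument that the on-line chromatic number of
forests is unbounded: walking down the tree, one can force any number of colours on nodes over which
no edge passes, and every set of such nodes is the neighbourhood of a child of the current node.
The classical argument for shift graphs then yields, for every colouring of the vertices of the
digraph, vertices `(i, j, k)` and `(j, k, l)` of the same colour. Below a node where the number of
colours is minimal, every subtree contains all the colours, so there is `(x, m, y)` of that same
colour with `m` in a subtree between `j` and `k`
(`List.exists_pattern`), and `(i, j, k) → (x, m, y) → (j, k, l) → (i, j, k)` is a monochromatic
directed cycle. Compactness gives a finite induced subdigraph of large dichromatic number.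
-/


def GoodColouring {V : Type} (A : V → V → Prop) {k : ℕ} (φ : V → Fin k) : Prop :=
  ∀ c : Fin k, ∀ v : V, φ v = c →
    ¬ Relation.TransGen (fun a b => A a b ∧ φ a = c ∧ φ b = c) v v

noncomputable def dichrom {V : Type} (A : V → V → Prop) : ℕ :=
  sInf {k : ℕ | ∃ φ : V → Fin k, GoodColouring A φ}

def IsOriented {V : Type} (A : V → V → Prop) : Prop := ∀ u v : V, A u v → ¬ A v u

def HasInducedCopy {V W : Type} (A : V → V → Prop) (B : W → W → Prop) : Prop :=
  ∃ f : W → V, Function.Injective f ∧ ∀ a b : W, B a b ↔ A (f a) (f b)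

def IsCompleteMultipartite {V : Type} (A : V → V → Prop) : Prop :=
  IsOriented A ∧ ∃ r : V → V → Prop, Equivalence r ∧
    ∀ u v : V, u ≠ v → ((A u v ∨ A v u) ↔ ¬ r u v)

def cyc3 {W1 W2 W3 : Type} (B1 : W1 → W1 → Prop) (B2 : W2 → W2 → Prop)
    (B3 : W3 → W3 → Prop) : (W1 ⊕ W2 ⊕ W3) → (W1 ⊕ W2 ⊕ W3) → Prop
  | Sum.inl a, Sum.inl b => B1 a b
  | Sum.inr (Sum.inl a), Sum.inr (Sum.inl b) => B2 a b
  | Sum.inr (Sum.inr a), Sum.inr (Sum.inr b) => B3 a b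
  | Sum.inl _, Sum.inr (Sum.inl _) => True
  | Sum.inr (Sum.inl _), Sum.inr (Sum.inr _) => True
  | Sum.inr (Sum.inr _), Sum.inl _ => True
  | _, _ => False

/-- `C⃗3(1,2,2)`: the cyclic composition of `K1`, `TT2`, `TT2`. -/
def C3122 : (Unit ⊕ Fin 2 ⊕ Fin 2) → (Unit ⊕ Fin 2 ⊕ Fin 2) → Prop :=
  cyc3 (fun _ _ : Unit => False) (fun i j : Fin 2 => i < j) (fun i j : Fin 2 => i < j)

/-! ### The order and the edges on the tree of finite sequences -/

namespace List

variable {a b p m q u v w : List ℕ}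

/-- `p` is a proper prefix of `q`, that is, a proper ancestor of `q` in the tree. -/
def Below (p q : List ℕ) : Prop := p <+: q ∧ p ≠ q

lemma Below.lt (h : Below p q) : p < q := by
  obtain ⟨⟨s, rfl⟩, hne⟩ := h
  induction p with
  | nil => cases s with
    | nil => simp at hne
    | cons x s => simp
  | cons a p ih =>
    simp only [List.cons_append, List.cons_lt_cons_iff, lt_irrefl, true_and, false_or]
    exact ih (by simpa using hne)

lemma Below.trans_prefix (h : Below p q) (h' : q <+: m) : Below p m := by
  refine ⟨h.1.trans h', ?_⟩
  rintro rfl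
  exact h.2 (h.1.eq_of_length (le_antisymm h.1.length_le h'.length_le))

lemma below_of_prefix_of_below (h : p <+: q) (h' : Below q m) : Below p m := by
  refine ⟨h.trans h'.1, ?_⟩
  rintro rfl
  exact h'.2 (h'.1.eq_of_length (le_antisymm h'.1.length_le h.length_le))

lemma not_below_of_prefix (h : p <+: q) : ¬ Below q p := fun h' =>
  (below_of_prefix_of_below h h').2 rfl

lemma prefix_or_below (h : p <+: m) (h' : q <+: m) : p <+: q ∨ Below q p := by
  rcases List.prefix_or_prefix_of_prefix h h' with h1 | h1
  · exact Or.inl h1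
  · by_cases e : q = p
    · exact Or.inl (e ▸ List.prefix_refl _)
    · exact Or.inr ⟨h1, e⟩

/-- Subtrees are intervals of the lexicographic order. -/
lemma prefix_of_lt_of_lt (h : p <+: q) (h1 : p < m) (h2 : m < q) : p <+: m := by
  induction p generalizing m q with
  | nil => simp
  | cons a p ih =>
    obtain ⟨s, rfl⟩ := h
    cases m with
    | nil => simp at h1
    | cons b m =>
      simp only [List.cons_append, List.cons_lt_cons_iff] at h1 h2
      obtain rfl : a = b := by omega
      simp only [lt_irrefl, true_and, false_or] at h1 h2
      simpa using ih (List.prefix_append p s) h1 h2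

/-- The subtree of `j ++ [0]` lies to the left of the other subtrees hanging from `j`. -/
lemma lt_of_zero_prefix (hm : p ++ [0] <+: m) (hq : Below p q) (h0 : ¬ p ++ [0] <+: q) :
    m < q := by
  obtain ⟨s, rfl⟩ := hm
  obtain ⟨⟨t, rfl⟩, hne⟩ := hq
  cases t with
  | nil => simp at hne
  | cons x t =>
    have hx : 0 < x := by
      rcases Nat.eq_zero_or_pos x with rfl | h
      · exact absurd ⟨t, by simp⟩ h0
      · exact h
    clear h0 hne
    induction p with
    | nil => simpa [List.cons_lt_cons_iff] using Or.inl hx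
    | cons a p ih => simpa [List.cons_lt_cons_iff] using ih

/-- The candidate edges. The last entry `n + 1` of a node `w = v ++ [n + 1]` encodes a finite set of
lengths, and `w` is joined to its proper ancestors of these lengths. -/
def Cand (u w : List ℕ) : Prop :=
  ∃ n v, w = v ++ [n + 1] ∧ u <+: v ∧ u.length ∈ Denumerable.ofNat (Finset ℕ) n

/-- The edges of the ordered graph on `List ℕ`: the candidate edges `u w` such that `w` is not in the
leftmost subtree hanging from `u`, and such that no candidate edge `a b` with `b` a proper ancestor
of `w` passes over `u`. -/
def Edge (u w : List ℕ) : Prop :=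
  Cand u w ∧ ¬ u ++ [0] <+: w ∧ ∀ a b, Cand a b → Below a u → Below u b → ¬ Below b w

lemma Cand.below (h : Cand u w) : Below u w := by
  obtain ⟨n, v, rfl, h, -⟩ := h
  refine ⟨h.trans (List.prefix_append _ _), ?_⟩
  rintro rfl
  have := h.length_le
  simp at this

lemma Edge.below (h : Edge u w) : Below u w := h.1.below

lemma Edge.lt (h : Edge u w) : u < w := h.below.lt

/-- Along a branch of the tree edges do not cross, hence no edge `m y` crosses both edges of a path
`p, q, r`. -/
lemma not_edge_of_crossing {p m q y r : List ℕ} (hpq : Edge p q) (hqr : Edge q r) (h1 : p < m)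
    (h2 : m < q) (h3 : q < y) (h4 : y < r) : ¬ Edge m y := by
  intro hmy
  have hqy : q <+: y := prefix_of_lt_of_lt hqr.below.1 h3 h4
  have hpm : p <+: m := prefix_of_lt_of_lt hpq.below.1 h1 h2
  have hmq : Below m q := by
    refine ⟨?_, h2.ne⟩
    rcases prefix_or_below hmy.below.1 hqy with h | h
    · exact h
    · exact absurd h.lt h2.not_gt
  exact hmy.2.2 p q hpq.1 ⟨hpm, h1.ne⟩ hmq ⟨hqy, h3.ne⟩

/-! ### The chromatic number of the edge relation -/

/-- `v` is a descendant of `u`, not in the leftmost subtree hanging from `u`, and candidate edges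
ending strictly below `u` on the branch to `v` also start strictly below `u`. -/
def Fresh (u v : List ℕ) : Prop :=
  Below u v ∧ ¬ u ++ [0] <+: v ∧ ∀ a b, Cand a b → Below u b → b <+: v → Below u a

lemma not_zero_prefix (h : p <+: w) (hw : p = w ∨ ¬ p ++ [0] <+: w) (hv : Below w v)
    (h0 : ¬ w ++ [0] <+: v) : ¬ p ++ [0] <+: v := by
  rcases hw with rfl | hw
  · exact h0
  · intro h1
    rcases prefix_or_below h1 hv.1 with h2 | h2
    · exact hw h2
    · obtain rfl : p = w := by
        refine h.eq_of_length (le_antisymm h.length_le ?_)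
        have h3 := h2.1.length_le
        have h4 : w.length ≠ (p ++ [0]).length := fun e => h2.2 (h2.1.eq_of_length e)
        simp at h3 h4
        omega
      exact h0 h1

/-- If the edges below `u₀` are properly coloured by `g`, then below any node a vertex avoiding a
prescribed set `C` of colours can be reached freshly. By induction, one walks down the tree collecting
nodes of all the colours in `C` over which no candidate edge passes, and then steps to the child
joined to exactly these nodes. -/
lemma exists_fresh_notMem {K : Type} [DecidableEq K] (g : List ℕ → K) (u₀ : List ℕ)
    (hg : ∀ j k, u₀ <+: j → Edge j k → g j ≠ g k) (t : ℕ) :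
    ∀ C : Finset K, C.card = t → ∀ u, u₀ <+: u → ∃ v, Fresh u v ∧ g v ∉ C := by
  induction t using Nat.strong_induction_on with
  | _ t ih =>
  intro C hC u hu
  by_contra! hcon
  have walk : ∀ n ≤ t, ∃ (P : Finset (List ℕ)) (w : List ℕ), (P.image g).card = n ∧
      (w = u ∨ Fresh u w) ∧ ∀ p ∈ P, Fresh u p ∧ p <+: w ∧ (p = w ∨ ¬ p ++ [0] <+: w) ∧
        ∀ a b, Cand a b → Below a p → Below p b → ¬ b <+: w := by
    intro n
    induction n with
    | zero => exact fun _ => ⟨∅, u, by simp, Or.inl rfl, by simp⟩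
    | succ n ihn =>
      intro hn
      obtain ⟨P, w, hP, hw, hp⟩ := ihn (by omega)
      have huw : u <+: w := by
        rcases hw with rfl | hw
        · exact List.prefix_refl _
        · exact hw.1.1
      obtain ⟨v, hv, hgv⟩ := ih n (by omega) (P.image g) hP w (hu.trans huw)
      have huv : Fresh u v := by
        refine ⟨below_of_prefix_of_below huw hv.1, ?_, ?_⟩
        · exact not_zero_prefix huw (hw.imp Eq.symm (fun h => h.2.1)) hv.1 hv.2.1
        · intro a b hab hub hbv
          rcases prefix_or_below hbv hv.1.1 with h | h
          · rcases hw with rfl | hw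
            · exact absurd hub (not_below_of_prefix h)
            · exact hw.2.2 a b hab hub h
          · exact below_of_prefix_of_below huw (hv.2.2 a b hab h hbv)
      refine ⟨insert v P, v, ?_, Or.inr huv, ?_⟩
      · rw [Finset.image_insert, Finset.card_insert_of_notMem hgv, hP]
      · intro p hpP
        rcases Finset.mem_insert.1 hpP with rfl | hpP
        · exact ⟨huv, List.prefix_refl _, Or.inl rfl, fun a b _ _ h h' => not_below_of_prefix h' h⟩
        · obtain ⟨h1, h2, h3, h4⟩ := hp p hpP
          refine ⟨h1, h2.trans hv.1.1, Or.inr (not_zero_prefix h2 h3 hv.1 hv.2.1), ?_⟩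
          intro a b hab hap hpb hbv
          rcases prefix_or_below hbv hv.1.1 with h | h
          · exact h4 a b hab hap hpb h
          · exact not_below_of_prefix (hap.1.trans h2) (hv.2.2 a b hab h hbv)
  obtain ⟨P, w, hP, hw, hp⟩ := walk t le_rfl
  have hPC : P.image g = C := by
    refine Finset.eq_of_subset_of_card_le ?_ (by omega)
    intro x hx
    obtain ⟨p, hpP, rfl⟩ := Finset.mem_image.1 hx
    exact hcon p (hp p hpP).1
  have huw : u <+: w := by
    rcases hw with rfl | hw
    · exact List.prefix_refl _
    · exact hw.1.1
  obtain ⟨N, hN⟩ : ∃ N, Denumerable.ofNat (Finset ℕ) N = P.image List.length :=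
    ⟨_, Denumerable.ofNat_encode _⟩
  let v := w ++ [N + 1]
  have hwv : Below w v := ⟨List.prefix_append _ _, by simp [v]⟩
  have hwv0 : ¬ w ++ [0] <+: v := by simp [v]
  have hbv : ∀ b, b <+: v → b = v ∨ b <+: w := fun b hb => List.prefix_concat_iff.1 hb
  have huv : Fresh u v := by
    refine ⟨below_of_prefix_of_below huw hwv, ?_, ?_⟩
    · exact not_zero_prefix huw (hw.imp Eq.symm (fun h => h.2.1)) hwv hwv0
    · intro a b hab hub hb
      rcases hbv b hb with rfl | h
      · obtain ⟨n, v', e, hav, hlen⟩ := hab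
        obtain ⟨rfl, e2⟩ := List.append_inj' e rfl
        simp only [List.cons.injEq, Nat.add_right_cancel_iff, and_true] at e2
        rw [← e2, hN] at hlen
        obtain ⟨p, hpP, hpl⟩ := Finset.mem_image.1 hlen
        obtain ⟨h1, h2, -⟩ := hp p hpP
        obtain rfl : p = a :=
          (List.prefix_of_prefix_length_le h2 hav hpl.le).eq_of_length hpl
        exact h1.1
      · rcases hw with rfl | hw
        · exact absurd hub (not_below_of_prefix h)
        · exact hw.2.2 a b hab hub h
  have hgv : g v ∈ P.image g := hPC ▸ hcon v huv
  obtain ⟨p, hpP, e⟩ := Finset.mem_image.1 hgv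
  obtain ⟨h1, h2, h3, h4⟩ := hp p hpP
  refine hg p v (hu.trans h1.1.1) ⟨⟨N, w, rfl, h2, ?_⟩, not_zero_prefix h2 h3 hwv hwv0, ?_⟩ e
  · rw [hN]
    exact Finset.mem_image_of_mem _ hpP
  · intro a b hab hap hpb hb
    rcases hbv b hb.1 with h | h
    · exact hb.2 h
    · exact h4 a b hab hap hpb h

/-- Even below a given node, the edges admit no proper colouring with finitely many colours. -/
lemma exists_edge_mono {K : Type} [Finite K] (g : List ℕ → K) (u₀ : List ℕ) :
    ∃ j k, u₀ <+: j ∧ Edge j k ∧ g j = g k := by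
  classical
  have := Fintype.ofFinite K
  by_contra! hcon
  obtain ⟨v, -, hv⟩ := exists_fresh_notMem g u₀ hcon _ Finset.univ rfl u₀ (List.prefix_refl _)
  exact hv (Finset.mem_univ _)

/-! ### Colourings of paths with two edges -/

/-- Every colouring `f` of the paths with two edges has equally coloured paths `i, j, k`; `j, k, l`;
`x, m, y` with `j < m < k`. A node is chosen below which as few colours as possible occur, so that
every subtree below it carries the same colours, in particular the leftmost one hanging from `j`.
With `A j k` the set of colours of the paths `·, j, k` and `B k` the set of all `A j k`, two adjacent
nodes with the same value of `B` provide `i, j, k, l`. -/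
lemma exists_pattern {K : Type} [Finite K] (f : List ℕ → List ℕ → List ℕ → K) :
    ∃ i j k l x m y, Edge i j ∧ Edge j k ∧ Edge k l ∧ Edge x m ∧ Edge m y ∧ j < m ∧ m < k ∧
      f i j k = f j k l ∧ f x m y = f j k l := by
  let S : List ℕ → Set K := fun u => {s | ∃ x m y, u <+: m ∧ Edge x m ∧ Edge m y ∧ f x m y = s}
  have hanti : ∀ u w, u <+: w → S w ⊆ S u := by
    rintro u w h s ⟨x, m, y, hm, hs⟩
    exact ⟨x, m, y, h.trans hm, hs⟩
  obtain ⟨u, hu⟩ : ∃ u, ∀ w, (S u).ncard ≤ (S w).ncard :=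
    ⟨_, fun w => Function.argmin_le (f := fun w => (S w).ncard) w⟩
  have hS : ∀ w, u <+: w → S w = S u := fun w h =>
    Set.eq_of_subset_of_ncard_le (hanti u w h) (hu w) (Set.toFinite _)
  let A : List ℕ → List ℕ → Set K := fun j k => {s | ∃ i, Edge i j ∧ f i j k = s}
  let B : List ℕ → Set (Set K) := fun k => {T | ∃ j, u <+: j ∧ Edge j k ∧ A j k = T}
  obtain ⟨k, l, huk, hkl, hB⟩ := exists_edge_mono B u
  have h1 : A k l ∈ B k := by
    rw [hB]
    exact ⟨k, huk, hkl, rfl⟩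
  obtain ⟨j, huj, hjk, hA⟩ := h1
  have h2 : f j k l ∈ A j k := by
    rw [hA]
    exact ⟨j, hjk, rfl⟩
  obtain ⟨i, hij, hc⟩ := h2
  have h3 : f j k l ∈ S (j ++ [0]) := by
    rw [hS _ (huj.trans (List.prefix_append _ _))]
    exact ⟨j, k, l, huk, hjk, hkl, rfl⟩
  obtain ⟨x, m, y, hm, hxm, hmy, hc'⟩ := h3
  have hj0 : Below j (j ++ [0]) := ⟨List.prefix_append _ _, by simp⟩
  exact ⟨i, j, k, l, x, m, y, hij, hjk, hkl, hxm, hmy, (hj0.trans_prefix hm).lt,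
    lt_of_zero_prefix hm hjk.below hjk.2.1, hc, hc'⟩

end List

/-! ### The digraph on paths with two edges -/

/-- The directed paths `lo, mid, hi` with two edges. -/
structure EdgePath where
  lo : List ℕ
  mid : List ℕ
  hi : List ℕ
  edge_lo : List.Edge lo mid
  edge_hi : List.Edge mid hi

namespace EdgePath

/-- `u` and `v` are consecutive: together they form a path with three edges. -/
def Next (u v : EdgePath) : Prop := u.mid = v.lo ∧ u.hi = v.mid

/-- Arcs of the construction: forward arcs increase `mid`, and the backward arcs are
`(j, k, l) → (i, j, k)`. -/
def Arc (u v : EdgePath) : Prop := (u.mid < v.mid ∧ ¬ Next u v) ∨ Next v u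

lemma Next.mid_lt {u v : EdgePath} (h : Next u v) : u.mid < v.mid := h.1 ▸ v.edge_lo.lt

lemma isCompleteMultipartite_arc : IsCompleteMultipartite Arc := by
  refine ⟨?_, fun u v => u.mid = v.mid, ⟨fun _ => rfl, Eq.symm, Eq.trans⟩, ?_⟩
  · rintro u v (⟨h1, h2⟩ | h1) (⟨h3, h4⟩ | h3)
    · exact lt_asymm h1 h3
    · exact h2 h3
    · exact h4 h1
    · exact lt_asymm h1.mid_lt h3.mid_lt
  · intro u v _
    constructor
    · rintro ((h | h) | (h | h))
      · exact h.1.ne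
      · exact h.mid_lt.ne'
      · exact h.1.ne'
      · exact h.mid_lt.ne
    · intro h
      rcases lt_or_gt_of_ne h with h | h
      · by_cases hn : Next u v
        · exact Or.inr (Or.inr hn)
        · exact Or.inl (Or.inl ⟨h, hn⟩)
      · by_cases hn : Next v u
        · exact Or.inl (Or.inr hn)
        · exact Or.inr (Or.inl ⟨h, hn⟩)

lemma Arc.lt_or_next {u v : EdgePath} (h : Arc u v) : u.mid < v.mid ∨ Next v u :=
  h.imp_left And.left

/-- The only ordering of `C⃗3(1,2,2)` in which every vertex has at most one backward arc out and at
most one in is `b₀, c₀, a, b₁, c₁`, up to exchanging `b₀, b₁` and `c₀, c₁`. Its backward arcs are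
`c₁ → a → b₀` and `b₁ → c₀`, and the edges of the underlying graph corresponding to them cross in the
way excluded by `List.not_edge_of_crossing`. -/
lemma not_crossing {a b₀ b₁ c₀ c₁ : EdgePath} (h1 : Next b₀ a) (h2 : Next a c₁) (h3 : Next c₀ b₁)
    (l1 : b₀.mid < c₀.mid) (l2 : c₀.mid < a.mid) (l3 : a.mid < b₁.mid) (l4 : b₁.mid < c₁.mid) :
    False := by
  have e1 := a.edge_lo
  have e2 := a.edge_hi
  have e3 := b₁.edge_lo
  rw [← h1.1] at e1
  rw [h2.2] at e2
  rw [← h3.1] at e3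
  exact List.not_edge_of_crossing e1 e2 l1 l2 l3 l4 e3

lemma not_hasInducedCopy_arc : ¬ HasInducedCopy Arc C3122 := by
  rintro ⟨f, -, hf⟩
  have out {u v v' : EdgePath} (h : Next v u) (h' : Next v' u) : v.mid = v'.mid :=
    h.1.trans h'.1.symm
  have inn {u v v' : EdgePath} (h : Next u v) (h' : Next u v') : v.mid = v'.mid :=
    h.2.symm.trans h'.2
  have hac (i : Fin 2) := ((hf (Sum.inl ()) (Sum.inr (Sum.inl i))).1 trivial).lt_or_next
  have hbc (i j : Fin 2) :=
    ((hf (Sum.inr (Sum.inl i)) (Sum.inr (Sum.inr j))).1 trivial).lt_or_next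
  have hca (j : Fin 2) := ((hf (Sum.inr (Sum.inr j)) (Sum.inl ())).1 trivial).lt_or_next
  have hb := ((hf (Sum.inr (Sum.inl 0)) (Sum.inr (Sum.inl 1))).1 Fin.zero_lt_one).lt_or_next
  have hc := ((hf (Sum.inr (Sum.inr 0)) (Sum.inr (Sum.inr 1))).1 Fin.zero_lt_one).lt_or_next
  have a0 := hac 0
  have a1 := hac 1
  have b00 := hbc 0 0
  have b01 := hbc 0 1
  have b10 := hbc 1 0
  have b11 := hbc 1 1
  have c0 := hca 0
  have c1 := hca 1
  clear hac hbc hca hf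
  generalize f (Sum.inl ()) = a at *
  generalize f (Sum.inr (Sum.inl 0)) = b₀ at *
  generalize f (Sum.inr (Sum.inl 1)) = b₁ at *
  generalize f (Sum.inr (Sum.inr 0)) = c₀ at *
  generalize f (Sum.inr (Sum.inr 1)) = c₁ at *
  grind [Next.mid_lt, not_crossing]

end EdgePath

/-! ### The dichromatic number -/

/-- A good colouring contains no monochromatic directed triangle. -/
lemma GoodColouring.not_triangle {V : Type} {A : V → V → Prop} {k : ℕ} {φ : V → Fin k}
    (hφ : GoodColouring A φ) {u v w : V} (huv : A u v) (hvw : A v w) (hwu : A w u)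
    (h1 : φ u = φ w) (h2 : φ v = φ w) : False :=
  hφ _ w rfl
    (((Relation.TransGen.single ⟨hwu, rfl, h1⟩).tail ⟨huv, h1, h2⟩).tail ⟨hvw, h2, rfl⟩)

open EdgePath in
lemma exists_mono_triangle {c : ℕ} (φ : EdgePath → Fin (c + 1)) :
    ∃ u v w, Arc u v ∧ Arc v w ∧ Arc w u ∧ φ u = φ w ∧ φ v = φ w := by
  classical
  -- The value `0` outside the paths is never looked at.
  obtain ⟨i, j, k, l, x, m, y, hij, hjk, hkl, hxm, hmy, hjm, hmk, e1, e2⟩ :=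
    List.exists_pattern fun i j k =>
      if h : List.Edge i j ∧ List.Edge j k then φ ⟨i, j, k, h.1, h.2⟩ else 0
  rw [dif_pos ⟨hij, hjk⟩, dif_pos ⟨hjk, hkl⟩] at e1
  rw [dif_pos ⟨hxm, hmy⟩, dif_pos ⟨hjk, hkl⟩] at e2
  exact ⟨⟨i, j, k, hij, hjk⟩, ⟨x, m, y, hxm, hmy⟩, ⟨j, k, l, hjk, hkl⟩,
    Or.inl ⟨hjm, fun h => hmk.ne' h.2⟩, Or.inl ⟨hmk, fun h => hjm.ne' h.1⟩, Or.inr ⟨rfl, rfl⟩,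
    e1, e2⟩

open EdgePath in
/-- By compactness, a finite induced subdigraph has no good colouring with at most `c` colours. -/
lemma exists_finset_not_goodColouring (c : ℕ) : ∃ s : Finset EdgePath, ∀ k ≤ c,
    ∀ φ : s → Fin k, ¬ GoodColouring (fun u v : s => Arc u v) φ := by
  classical
  by_contra! hcon
  choose k hk φ hφ using hcon
  obtain ⟨χ, hχ⟩ := Finset.rado_selection_subtype (β := fun _ => Fin (c + 1))
    (fun (s : Finset EdgePath) a => Fin.castLE (Nat.le_succ_of_le (hk s)) (φ s a))
  obtain ⟨u, v, w, huv, hvw, hwu, h1, h2⟩ := exists_mono_triangle χ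
  obtain ⟨t, hst, ht⟩ := hχ {u, v, w}
  have hu := ht ⟨u, by simp⟩
  have hv := ht ⟨v, by simp⟩
  have hw := ht ⟨w, by simp⟩
  rw [hu, hw] at h1
  rw [hv, hw] at h2
  exact (hφ t).not_triangle (u := ⟨u, hst (by simp)⟩) (v := ⟨v, hst (by simp)⟩)
    (w := ⟨w, hst (by simp)⟩) huv hvw hwu (Fin.castLE_injective _ h1) (Fin.castLE_injective _ h2)

/-- Colourings exist: colour the vertices pairwise differently. This rules out the junk value
`sInf ∅ = 0` of `dichrom`. -/
lemma exists_goodColouring {V : Type} [Fintype V] {A : V → V → Prop} (hA : IsOriented A) :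
    ∃ k, ∃ φ : V → Fin k, GoodColouring A φ := by
  refine ⟨_, Fintype.equivFin V, fun c v _ h => ?_⟩
  obtain ⟨w, ⟨hvw, hv, hw⟩, -⟩ := Relation.TransGen.head'_iff.1 h
  obtain rfl := (Fintype.equivFin V).injective (hv.trans hw.symm)
  exact hA _ _ hvw hvw

lemma IsCompleteMultipartite.induce {V : Type} {A : V → V → Prop} (h : IsCompleteMultipartite A)
    (s : Finset V) : IsCompleteMultipartite (fun u v : s => A u v) := by
  obtain ⟨h1, r, hr, h2⟩ := h
  exact ⟨fun u v => h1 u v, fun u v => r u v, hr.comap _,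
    fun u v huv => h2 u v (fun e => huv (Subtype.ext e))⟩

lemma HasInducedCopy.of_induce {V W : Type} {A : V → V → Prop} {B : W → W → Prop} {s : Finset V}
    (h : HasInducedCopy (fun u v : s => A u v) B) : HasInducedCopy A B := by
  obtain ⟨f, hf, hfB⟩ := h
  exact ⟨fun w => f w, Subtype.val_injective.comp hf, hfB⟩

/-- `C⃗3(1,2,2)` is not a hero in oriented complete multipartite graphs. -/
theorem stmt8 : ∀ c : ℕ, ∃ (V : Type) (_ : Fintype V) (A : V → V → Prop),
    IsCompleteMultipartite A ∧ ¬ HasInducedCopy A C3122 ∧ c < dichrom A := by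
  intro c
  obtain ⟨s, hs⟩ := exists_finset_not_goodColouring c
  have hA := EdgePath.isCompleteMultipartite_arc.induce s
  refine ⟨s, inferInstance, fun u v => EdgePath.Arc u v, hA,
    fun h => EdgePath.not_hasInducedCopy_arc h.of_induce, ?_⟩
  obtain ⟨φ, hφ⟩ : dichrom (fun u v : s => EdgePath.Arc u v) ∈ _ :=
    Nat.sInf_mem (exists_goodColouring hA.1)
  by_contra! hle
  exact hs _ hle φ hφ
end

section
/- Let D be a strongly connected oriented graph on n vertices. The following two conditions are equivalent: (1) for every vertex x, the set x⁺ of out-neighbours of x induces a tournament and the set x⁻ of in-neighbours of x induces an acyclic digraph; (2) there exists an enumeration v1,…,vn of the vertices such that for every arc v_i v_j and every vertex v_k lying strictly between v_i and v_j in the associated cyclic order, v_k v_j is also an arc. -/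
def IsTournament {V : Type} (A : V → V → Prop) : Prop :=
  IsOriented A ∧ ∀ u v : V, u ≠ v → A u v ∨ A v u

/-- A relation with no directed cycle (no nontrivial closed walk). -/
def AcyclicRel {V : Type} (A : V → V → Prop) : Prop :=
  ∀ v : V, ¬ Relation.TransGen A v v

/-- Cyclic distance: number of forward steps from position `a` to position `b`. -/
def cycDist {n : ℕ} (a b : Fin n) : ℕ := ((b : ℕ) + n - (a : ℕ)) % n

/-! ### Cyclic distance -/

lemma cycDist_eq {n : ℕ} (a b : Fin n) :
    cycDist a b = if (a : ℕ) ≤ b then (b : ℕ) - a else (b : ℕ) + n - a := by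
  have ha := a.2
  have hb := b.2
  unfold cycDist
  split_ifs with h
  · have : (b : ℕ) + n - a = (b - a) + n := by omega
    rw [this, Nat.add_mod_right, Nat.mod_eq_of_lt (by omega)]
  · rw [Nat.mod_eq_of_lt (by omega)]

/-! ### From an in-round enumeration to the local conditions -/

lemma local_of_inRound {V : Type} {n : ℕ} (A : V → V → Prop) (hor : IsOriented A)
    (e : V ≃ Fin n)
    (he : ∀ v w : V, A v w → ∀ z : V,
        0 < cycDist (e v) (e z) → cycDist (e v) (e z) < cycDist (e v) (e w) → A z w) (x : V) :
    IsTournament (fun a b : {v : V // A x v} => A a.1 b.1) ∧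
        AcyclicRel (fun a b : {v : V // A v x} => A a.1 b.1) := by
  have hne : ∀ u v : V, u ≠ v → (e u : ℕ) ≠ e v := fun u v h h' =>
    h (e.injective (Fin.ext h'))
  have hirr : ∀ u v : V, A u v → u ≠ v := by
    rintro u v h rfl
    exact hor _ _ h h
  refine ⟨⟨fun u v => hor _ _, ?_⟩, ?_⟩
  · rintro ⟨a, ha⟩ ⟨b, hb⟩ hab
    have hab' : a ≠ b := fun h => hab (Subtype.ext h)
    have h1 := hne _ _ hab'
    have h2 := hne _ _ (hirr _ _ ha)
    have h3 := hne _ _ (hirr _ _ hb)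
    have l1 := (e a).2
    have l2 := (e b).2
    have l3 := (e x).2
    rcases lt_trichotomy (cycDist (e x) (e a)) (cycDist (e x) (e b)) with h | h | h
    · refine Or.inl (he x b hb a ?_ h)
      rw [cycDist_eq]; split_ifs <;> omega
    · rw [cycDist_eq, cycDist_eq] at h
      split_ifs at h <;> omega
    · refine Or.inr (he x a ha b ?_ h)
      rw [cycDist_eq]; split_ifs <;> omega
  · have step : ∀ a b : {v : V // A v x}, A a.1 b.1 →
        cycDist (e b.1) (e x) < cycDist (e a.1) (e x) := by
      rintro ⟨a, ha⟩ ⟨b, hb⟩ hab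
      replace hab : A a b := hab
      change cycDist (e b) (e x) < cycDist (e a) (e x)
      by_contra hlt
      -- otherwise `x` lies strictly between `a` and `b`
      refine hor _ _ hb (he a b hab x ?_ ?_)
      all_goals
        have h1 := hne _ _ (hirr _ _ hab)
        have h2 := hne _ _ (hirr _ _ ha)
        have h3 := hne _ _ (hirr _ _ hb)
        have l1 := (e a).2
        have l2 := (e b).2
        have l3 := (e x).2
        simp only [cycDist_eq] at hlt ⊢
        split_ifs at hlt ⊢ <;> omega
    intro v hv
    have : ∀ a b : {v : V // A v x},
        Relation.TransGen (fun a b : {v : V // A v x} => A a.1 b.1) a b →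
        cycDist (e b.1) (e x) < cycDist (e a.1) (e x) := by
      intro a b h
      induction h with
      | single h => exact step _ _ h
      | tail _ h ih => exact (step _ _ h).trans ih
    exact lt_irrefl _ (this v v hv)

/-! ### Sources of out-neighbourhoods -/

/-- A path starting in `M` can be cut at its last vertex in `M`. -/
lemma exists_last {V : Type} {A : V → V → Prop} (M : Set V) {a x : V} (ha : a ∈ M)
    (h : Relation.ReflTransGen A a x) :
    ∃ p ∈ M, Relation.ReflTransGen (fun u w => A u w ∧ w ∉ M) p x := by
  induction h with
  | refl => exact ⟨a, ha, .refl⟩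
  | @tail b c _ hbc ih =>
    by_cases hc : c ∈ M
    · exact ⟨c, hc, .refl⟩
    · obtain ⟨p, hp, hpb⟩ := ih
      exact ⟨p, hp, hpb.tail ⟨hbc, hc⟩⟩

/-- If `a` lies on a cycle of `x⁺` and dominates a vertex `z` which does not lie on such a cycle,
then some arc `q₀ → q` of that cycle satisfies `q₀ → z → q`: otherwise `z` would be dominated by
the whole cycle. -/
lemma exists_turn {V : Type} {A : V → V → Prop}
    (ht : ∀ x u v : V, A x u → A x v → u ≠ v → A u v ∨ A v u)
    (hac : ∀ x : V, AcyclicRel (fun a b : {v : V // A v x} => A a.1 b.1))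
    {x z : V} (a : {v : V // A x v})
    (ha : Relation.TransGen (fun a b : {v : V // A x v} => A a.1 b.1) a a) (haz : A a.1 z)
    (hz : ∀ c : {v : V // A x v},
      Relation.TransGen (fun a b : {v : V // A x v} => A a.1 b.1) c c → c.1 ≠ z) :
    ∃ q₀ q : {v : V // A x v},
      Relation.TransGen (fun a b : {v : V // A x v} => A a.1 b.1) q q ∧
      A q₀.1 q.1 ∧ A q₀.1 z ∧ A z q.1 := by
  by_contra hno
  have key : ∀ b : {v : V // A x v},
      Relation.TransGen (fun a b : {v : V // A x v} => A a.1 b.1) a b →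
      Relation.ReflTransGen (fun a b : {v : V // A x v} => A a.1 b.1) b a →
      ∃ hb : A b.1 z, Relation.TransGen (fun a b : {v : V // A v z} => A a.1 b.1)
        ⟨a.1, haz⟩ ⟨b.1, hb⟩ := by
    have nxt : ∀ b c : {v : V // A x v}, A b.1 z → A b.1 c.1 →
        Relation.TransGen (fun a b : {v : V // A x v} => A a.1 b.1) a c →
        Relation.ReflTransGen (fun a b : {v : V // A x v} => A a.1 b.1) c a → A c.1 z := by
      intro b c hbz hbc hac' hca
      have hcc := Relation.TransGen.trans_right hca hac'
      rcases ht b.1 c.1 z hbc hbz (hz c hcc) with h | h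
      · exact h
      · exact absurd ⟨b, c, hcc, hbc, hbz, h⟩ hno
    intro b hab
    induction hab with
    | @single b h =>
      intro hba
      have hb := nxt a b haz h (.single h) hba
      exact ⟨hb, .single h⟩
    | @tail b c hab h ih =>
      intro hca
      obtain ⟨hb, hpath⟩ := ih (.head h hca)
      have hc := nxt b c hb h (.tail hab h) hca
      exact ⟨hc, .tail hpath h⟩
  obtain ⟨_, h⟩ := key a ha .refl
  exact hac z _ h

lemma out_acyclic {V : Type} {A : V → V → Prop} (hor : IsOriented A)
    (hstrong : ∀ u v : V, Relation.ReflTransGen A u v)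
    (ht : ∀ x u v : V, A x u → A x v → u ≠ v → A u v ∨ A v u)
    (hac : ∀ x : V, AcyclicRel (fun a b : {v : V // A v x} => A a.1 b.1)) (x : V) :
    AcyclicRel (fun a b : {v : V // A x v} => A a.1 b.1) := by
  intro a ha
  -- `C` is the set of vertices on cycles of `x⁺`, and `M` adds the vertices dominated by `C`.
  let C : Set V := {c | ∃ h : A x c,
    Relation.TransGen (fun a b : {v : V // A x v} => A a.1 b.1) ⟨c, h⟩ ⟨c, h⟩}
  let M : Set V := {z | z ∈ C ∨ ∃ c ∈ C, A c z}
  have hxC : x ∉ C := fun ⟨h, _⟩ => hor _ _ h h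
  have hxM : x ∉ M := by
    rintro (h | ⟨c, ⟨h, _⟩, hc⟩)
    · exact hxC h
    · exact hor _ _ h hc
  obtain ⟨p, hpM, hpx⟩ := exists_last M (a := a.1) (Or.inl ⟨a.2, ha⟩) (hstrong a.1 x)
  have hpC : p ∉ C := by
    intro hpC
    rcases Relation.ReflTransGen.cases_head hpx with h | ⟨c, ⟨h, hc⟩, _⟩
    · exact hxC (h ▸ hpC)
    · exact hc (Or.inr ⟨p, hpC, h⟩)
  obtain ⟨c, ⟨hxc, hcc⟩, hcp⟩ := hpM.resolve_left hpC
  obtain ⟨q₀, q, hqq, hq₀q, hq₀p, hpq⟩ := exists_turn ht hac ⟨c, hxc⟩ hcc hcp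
    (fun d hd hdp => hpC (hdp ▸ ⟨d.2, hd⟩))
  have hqC : q.1 ∈ C := ⟨q.2, hqq⟩
  have key : ∀ w, Relation.ReflTransGen (fun u w => A u w ∧ w ∉ M) p w →
      ∃ hw : A w q.1, Relation.ReflTransGen (fun a b : {v : V // A v q.1} => A a.1 b.1)
        ⟨p, hpq⟩ ⟨w, hw⟩ := by
    intro w hw
    induction hw with
    | refl => exact ⟨hpq, .refl⟩
    | @tail b d _ hbd ih =>
      obtain ⟨hb, hpath⟩ := ih
      have hdq : d ≠ q.1 := fun h => hbd.2 (h ▸ Or.inl hqC)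
      rcases ht b d q.1 hbd.1 hb hdq with h | h
      · exact ⟨h, hpath.tail hbd.1⟩
      · exact absurd (Or.inr ⟨q.1, hqC, h⟩) hbd.2
  obtain ⟨hxq, hpath⟩ := key x hpx
  refine hac q.1 ⟨x, hxq⟩ (Relation.TransGen.trans_left (b := ⟨p, hpq⟩) ?_ hpath)
  exact .tail (b := ⟨q₀.1, hq₀q⟩) (.single q₀.2) hq₀p

/-- A nonempty out-neighbourhood has a source; for a vertex without out-neighbours the claim is
trivially met by any vertex. -/
lemma exists_succ {V : Type} [Finite V] {A : V → V → Prop} (hor : IsOriented A)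
    (hstrong : ∀ u v : V, Relation.ReflTransGen A u v)
    (ht : ∀ x u v : V, A x u → A x v → u ≠ v → A u v ∨ A v u)
    (hac : ∀ x : V, AcyclicRel (fun a b : {v : V // A v x} => A a.1 b.1)) (x : V) :
    ∃ y, ∀ w, A x w → A x y ∧ (y = w ∨ A y w) := by
  by_cases hx : ∃ w, A x w
  · obtain ⟨w₀, hw₀⟩ := hx
    let R := Relation.TransGen (fun a b : {v : V // A x v} => A a.1 b.1)
    have hacx := out_acyclic hor hstrong ht hac x
    have : IsTrans {v : V // A x v} R := ⟨fun _ _ _ h h' => h.trans h'⟩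
    have : Std.Irrefl R := ⟨hacx⟩
    have hwf : WellFounded R := Finite.wellFounded_of_trans_of_irrefl R
    obtain ⟨m, -, hm⟩ := hwf.has_min Set.univ ⟨⟨w₀, hw₀⟩, trivial⟩
    refine ⟨m.1, fun w hw => ⟨m.2, ?_⟩⟩
    by_cases h : m.1 = w
    · exact Or.inl h
    · refine Or.inr ((ht x m.1 w m.2 hw h).resolve_right fun h' => ?_)
      exact hm ⟨w, hw⟩ trivial (.single h')
  · exact ⟨x, fun w hw => absurd ⟨w, hw⟩ hx⟩

/-! ### The successor map is a cyclic permutation -/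

lemma reach_of_arc {V : Type} [Finite V] {A : V → V → Prop}
    (hac : ∀ x : V, AcyclicRel (fun a b : {v : V // A v x} => A a.1 b.1))
    {s : V → V} (hs : ∀ x w, A x w → A x (s x) ∧ (s x = w ∨ A (s x) w))
    {v w : V} (hvw : A v w) : ∃ k, s^[k] v = w := by
  by_contra! hno
  have hA : ∀ k, A (s^[k] v) w := by
    intro k
    induction k with
    | zero => exact hvw
    | succ k ih =>
      have := hno (k + 1)
      rw [Function.iterate_succ_apply'] at this ⊢
      exact (hs _ _ ih).2.resolve_left this
  -- the iterates stay in the finite acyclic set `w⁻`, so two of them coincide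
  have hpath : ∀ i d, Relation.TransGen (fun a b : {v : V // A v w} => A a.1 b.1)
      ⟨s^[i] v, hA i⟩ ⟨s^[i + d + 1] v, hA (i + d + 1)⟩ := by
    have h1 : ∀ k, A (s^[k] v) (s^[k + 1] v) := fun k => by
      rw [Function.iterate_succ_apply']
      exact (hs _ _ (hA k)).1
    intro i d
    induction d with
    | zero => exact .single (h1 i)
    | succ d ih => exact .tail ih (h1 (i + d + 1))
  obtain ⟨i, j, hij, heq⟩ := Finite.exists_ne_map_eq_of_infinite (fun k : ℕ => s^[k] v)
  wlog hlt : i < j generalizing i j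
  · exact this j i hij.symm heq.symm (by omega)
  obtain ⟨d, rfl⟩ : ∃ d, j = i + d + 1 := ⟨j - i - 1, by omega⟩
  have hp := hpath i d
  have h2 : (⟨s^[i + d + 1] v, hA (i + d + 1)⟩ : {v : V // A v w}) = ⟨s^[i] v, hA i⟩ :=
    Subtype.ext heq.symm
  rw [h2] at hp
  exact hac w _ hp

/-- A transitive self-map of a finite type can be turned into an enumeration. -/
lemma exists_enum {V : Type} [Fintype V] (s : V → V) (hs : ∀ u v, ∃ k, s^[k] u = v) (v₀ : V) :
    ∃ e : V ≃ Fin (Fintype.card V), (∀ v, s^[(e v : ℕ)] v₀ = v) ∧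
      s^[Fintype.card V] v₀ = v₀ := by
  have hper : v₀ ∈ Function.periodicPts s := by
    obtain ⟨k, hk⟩ := hs (s v₀) v₀
    exact ⟨k + 1, Nat.succ_pos k, hk⟩
  have hpos := Function.minimalPeriod_pos_of_mem_periodicPts hper
  let f : Fin (Function.minimalPeriod s v₀) → V := fun i => s^[(i : ℕ)] v₀
  have hf : Function.Bijective f := by
    constructor
    · intro i j hij
      exact Fin.ext (Function.iterate_injOn_Iio_minimalPeriod i.2 j.2 hij)
    · intro v
      obtain ⟨k, hk⟩ := hs v₀ v
      refine ⟨⟨k % _, Nat.mod_lt _ hpos⟩, ?_⟩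
      show s^[k % _] v₀ = v
      rw [Function.iterate_mod_minimalPeriod_eq, hk]
  have hcard : Function.minimalPeriod s v₀ = Fintype.card V := by
    simpa using Fintype.card_of_bijective hf
  refine ⟨(Equiv.ofBijective f hf).symm.trans (finCongr hcard), fun v => ?_, ?_⟩
  · exact (Equiv.ofBijective f hf).apply_symm_apply v
  · rw [← hcard]
    exact Function.iterate_minimalPeriod

lemma inRound_of_local {V : Type} [Fintype V] (A : V → V → Prop) (hor : IsOriented A)
    (hstrong : ∀ u v : V, Relation.ReflTransGen A u v)
    (ht : ∀ x u v : V, A x u → A x v → u ≠ v → A u v ∨ A v u)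
    (hac : ∀ x : V, AcyclicRel (fun a b : {v : V // A v x} => A a.1 b.1)) :
    ∃ e : V ≃ Fin (Fintype.card V), ∀ v w : V, A v w → ∀ z : V,
        0 < cycDist (e v) (e z) → cycDist (e v) (e z) < cycDist (e v) (e w) → A z w := by
  rcases isEmpty_or_nonempty V with hV | ⟨⟨v₀⟩⟩
  · exact ⟨Fintype.equivFin V, fun v => hV.elim v⟩
  choose s hs using exists_succ hor hstrong ht hac
  have hreach : ∀ u v, ∃ k, s^[k] u = v := by
    intro u v
    induction hstrong u v with
    | refl => exact ⟨0, rfl⟩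
    | tail _ h ih =>
      obtain ⟨k, hk⟩ := ih
      obtain ⟨l, hl⟩ := reach_of_arc hac hs h
      exact ⟨l + k, by rw [Function.iterate_add_apply, hk, hl]⟩
  obtain ⟨e, he, hper⟩ := exists_enum s hreach v₀
  have hdist : ∀ u v, s^[cycDist (e u) (e v)] u = v := by
    intro u v
    conv_lhs => rw [← he u]
    rw [← Function.iterate_add_apply, he u, cycDist_eq]
    have hu := (e u).2
    split_ifs with h
    · rw [Nat.sub_add_cancel h, he]
    · rw [Nat.sub_add_cancel (by omega), Function.iterate_add_apply, hper, he]
  -- `cycDist` is the least number of steps of `s` leading from `u` to `v`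
  have hmin : ∀ u v k, k < cycDist (e u) (e v) → s^[k] u ≠ v := by
    rintro u v k hk rfl
    have hpos : ∀ i, i < Fintype.card V → (e (s^[i] v₀) : ℕ) = i := by
      intro i hi
      have h1 := he (e.symm ⟨i, hi⟩)
      rw [Equiv.apply_symm_apply] at h1
      change s^[i] v₀ = _ at h1
      rw [h1, Equiv.apply_symm_apply]
    have hu := (e u).2
    have hv := (e (s^[k] u)).2
    have h2 : s^[k + (e u : ℕ)] v₀ = s^[k] u := by
      rw [Function.iterate_add_apply, he]
    rw [cycDist_eq] at hk
    by_cases hlt : k + (e u : ℕ) < Fintype.card V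
    · have h3 := hpos _ hlt
      rw [h2] at h3
      split_ifs at hk <;> omega
    · obtain ⟨r, hr⟩ := Nat.exists_eq_add_of_le' (not_lt.mp hlt)
      rw [hr, Function.iterate_add_apply, hper] at h2
      by_cases hrn : r < Fintype.card V
      · have h3 := hpos r hrn
        rw [h2] at h3
        split_ifs at hk <;> omega
      · split_ifs at hk <;> omega
  refine ⟨e, fun v w hvw z _ hzw => ?_⟩
  have hdom : ∀ k, k < cycDist (e v) (e w) → A (s^[k] v) w := by
    intro k
    induction k with
    | zero => exact fun _ => hvw
    | succ k ih =>
      intro hk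
      have h1 := hmin v w (k + 1) hk
      rw [Function.iterate_succ_apply'] at h1 ⊢
      exact (hs _ _ (ih (by omega))).2.resolve_left h1
  have := hdom _ hzw
  rwa [hdist] at this

/-- Theorem 8.3.1: a strong oriented graph has all out-neighbourhoods inducing
tournaments and all in-neighbourhoods inducing acyclic digraphs iff it is in-round. -/
theorem stmt9 {V : Type} [Fintype V] (A : V → V → Prop) (hor : IsOriented A)
    (hstrong : ∀ u v : V, Relation.ReflTransGen A u v) :
    ((∀ x : V, IsTournament (fun a b : {v : V // A x v} => A a.1 b.1) ∧
        AcyclicRel (fun a b : {v : V // A v x} => A a.1 b.1)) ↔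
      ∃ e : V ≃ Fin (Fintype.card V), ∀ v w : V, A v w → ∀ z : V,
        0 < cycDist (e v) (e z) → cycDist (e v) (e z) < cycDist (e v) (e w) → A z w) := by
  constructor
  · intro h
    refine inRound_of_local A hor hstrong (fun x u v hu hv huv => ?_) (fun x => (h x).2)
    exact (h x).1.2 ⟨u, hu⟩ ⟨v, hv⟩ fun h => huv (congrArg Subtype.val h)
  · rintro ⟨e, he⟩ x
    exact local_of_inRound A hor e he x
end

section
/- Let D be a locally out-transitive oriented graph, i.e. an oriented graph in which the out-neighbourhood of every vertex induces a transitive tournament, and let T be a subset of the vertices of D inducing a transitive tournament. Then D admits a 2-dicolouring in which all vertices of T receive the same colour. In particular, every locally out-transitive oriented graph has dichromatic number at most 2. -/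
/-- A relation is a transitive tournament iff it is a tournament with no directed cycle. -/
def IsTransitiveTournament {V : Type} (A : V → V → Prop) : Prop :=
  IsTournament A ∧ AcyclicRel A

open Relation

/-- The arcs of the subdigraph induced by `X`. -/
def Res {V : Type} (A : V → V → Prop) (X : Set V) (a b : V) : Prop := A a b ∧ a ∈ X ∧ b ∈ X

/-- `X` induces an acyclic subdigraph. -/
def Acyc {V : Type} (A : V → V → Prop) (X : Set V) : Prop := ∀ v, ¬ TransGen (Res A X) v v

/-- `C` induces a strongly connected subdigraph, expressed by cuts: a set that meets `C` and is
closed under the arcs of `C` contains `C`. -/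
def Strong {V : Type} (A : V → V → Prop) (C : Set V) : Prop :=
  ∀ Y : Set V, (∃ y ∈ C, y ∈ Y) → (∀ a ∈ C, a ∈ Y → ∀ b ∈ C, A a b → b ∈ Y) → C ⊆ Y

/-- Local out-transitivity in terms of single vertices: no digons, and each out-neighbourhood is
totally and transitively ordered by the arcs. -/
structure LOT {V : Type} (A : V → V → Prop) : Prop where
  asymm : ∀ {u v}, A u v → ¬ A v u
  total : ∀ {x a b}, A x a → A x b → a ≠ b → A a b ∨ A b a
  trans : ∀ {x a b c}, A x a → A x b → A x c → A a b → A b c → A a c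

/-- `C` is a strong nontrivial subset of `X` dominating a vertex of `X` outside it. -/
def Hub {V : Type} (A : V → V → Prop) (X C : Set V) : Prop :=
  C ⊆ X ∧ Strong A C ∧ C.Nontrivial ∧ ∃ w ∈ X, w ∉ C ∧ ∀ x ∈ C, A x w

section
variable {V : Type} {A : V → V → Prop}

/-! ### Acyclic and strong sets -/

theorem Acyc.mono {X Y : Set V} (h : Acyc A Y) (hXY : X ⊆ Y) : Acyc A X := fun v hv =>
  h v (TransGen.mono (fun _ _ h => ⟨h.1, hXY h.2.1, hXY h.2.2⟩) _ _ hv)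

/-- A cycle in `R` cannot cross a cut all of whose arcs go in the same direction. -/
theorem Acyc.split {R Y : Set V} (hY : ∀ a ∈ R, a ∈ Y → ∀ b ∈ R, A a b → b ∈ Y)
    (h1 : Acyc A (R ∩ Y)) (h2 : Acyc A (R \ Y)) : Acyc A R := by
  have in_Y : ∀ a b, TransGen (Res A R) a b → a ∈ Y → b ∈ Y ∧ TransGen (Res A (R ∩ Y)) a b := by
    intro a b h ha
    induction h with
    | single h =>
      have hb := hY _ h.2.1 ha _ h.2.2 h.1
      exact ⟨hb, .single ⟨h.1, ⟨h.2.1, ha⟩, h.2.2, hb⟩⟩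
    | tail _ h ih =>
      have hb := hY _ h.2.1 ih.1 _ h.2.2 h.1
      exact ⟨hb, ih.2.tail ⟨h.1, ⟨h.2.1, ih.1⟩, h.2.2, hb⟩⟩
  have off_Y : ∀ a b, TransGen (Res A R) a b → b ∉ Y → TransGen (Res A (R \ Y)) a b := by
    intro a b h
    induction h with
    | single h =>
      intro hb
      exact .single ⟨h.1, ⟨h.2.1, fun ha => hb (hY _ h.2.1 ha _ h.2.2 h.1)⟩, h.2.2, hb⟩
    | tail _ h ih =>
      intro hb
      have ha := fun ha => hb (hY _ h.2.1 ha _ h.2.2 h.1)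
      exact (ih ha).tail ⟨h.1, ⟨h.2.1, ha⟩, h.2.2, hb⟩
  intro v hv
  by_cases hvY : v ∈ Y
  · exact h1 v (in_Y v v hv hvY).2
  · exact h2 v (off_Y v v hv hvY)

theorem LOT.irrefl (hA : LOT A) (v : V) : ¬ A v v := fun h => hA.asymm h h

/-- A minimal set inducing a cycle is strong. -/
theorem exists_strong [Finite V] (hA : LOT A) {X : Set V} (hX : ¬ Acyc A X) :
    ∃ C ⊆ X, Strong A C ∧ C.Nontrivial := by
  obtain ⟨C, hC⟩ := (Set.toFinite {C : Set V | C ⊆ X ∧ ¬ Acyc A C}).exists_minimal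
    ⟨X, subset_rfl, hX⟩
  have hmin : ∀ D, D ⊆ C → ¬ C ⊆ D → Acyc A D := by
    intro D hD hn
    by_contra h
    exact hn (hC.2 ⟨hD.trans hC.1.1, h⟩ hD)
  refine ⟨C, hC.1.1, ?_, ?_⟩
  · rintro Y ⟨y, hy, hyY⟩ hcl
    by_contra hn
    refine hC.1.2 (Acyc.split hcl (hmin _ Set.inter_subset_left fun h => hn fun v hv => (h hv).2)
      (hmin _ Set.sdiff_subset fun h => (h hy).2 hyY))
  · by_contra hn
    rw [Set.not_nontrivial_iff] at hn
    refine hC.1.2 fun v hv => ?_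
    obtain ⟨b, hb, -⟩ := TransGen.head'_iff.1 hv
    exact hA.irrefl v (by simpa [hn hb.2.1 hb.2.2] using hb.1)

/-! ### Closed out-neighbourhoods and digraphs without hubs -/

theorem acyc_closed_nbhd (hA : LOT A) (s : V) : Acyc A {v | v = s ∨ A s v} := by
  have key : ∀ a b, TransGen (Res A {v | v = s ∨ A s v}) a b → A a b := by
    intro a b h
    induction h with
    | single h => exact h.1
    | @tail b c h1 h ih =>
      obtain ⟨hbc, hb, hc⟩ := h
      obtain ⟨d, hd, -⟩ := TransGen.head'_iff.1 h1
      have ha := hd.2.1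
      have ne_s : ∀ u v, A u v → (u = s ∨ A s u) → v ≠ s := by
        rintro u v huv (rfl | hu) rfl
        · exact hA.irrefl _ huv
        · exact hA.asymm hu huv
      have hb' : A s b := hb.resolve_left (ne_s _ _ ih ha)
      have hc' : A s c := hc.resolve_left (ne_s _ _ hbc hb)
      rcases ha with rfl | ha
      · exact hc'
      · exact hA.trans ha hb' hc' ih hbc
  exact fun v hv => hA.irrefl v (key v v hv)

theorem exists_source [Finite V] (hA : LOT A) {T : Set V} (hne : T.Nonempty)
    (htot : ∀ a ∈ T, ∀ b ∈ T, a ≠ b → A a b ∨ A b a)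
    (htr : ∀ a ∈ T, ∀ b ∈ T, ∀ c ∈ T, A a b → A b c → A a c) :
    ∃ s ∈ T, ∀ t ∈ T, t = s ∨ A s t := by
  -- the source is the vertex whose out-neighbourhood inside `T` is largest
  obtain ⟨s, hs⟩ := (Set.toFinite T).exists_maximalFor (fun s => {t | t ∈ T ∧ A s t}) T hne
  refine ⟨s, hs.1, fun t ht => ?_⟩
  by_contra! hn
  have hts := (htot t ht s hs.1 hn.1).resolve_right hn.2
  have := hs.2 ht (fun u hu => ⟨hu.1, htr t ht s hs.1 u hu.1 hts hu.2⟩) ⟨hs.1, hts⟩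
  exact hA.irrefl s this.2

/-- The case without hubs: every strong nontrivial set receives an arc from each vertex outside,
so deleting `N⁺[s]` destroys all cycles. -/
theorem split_of_no_hub [Finite V] (hA : LOT A) {X : Set V} (hX : Strong A X)
    (hno : ¬ ∃ C, Hub A X C) {s : V} (hs : s ∈ X) : Acyc A (X \ {v | v = s ∨ A s v}) := by
  by_contra hn
  obtain ⟨C, hCX, hC, hnt⟩ := exists_strong hA hn
  have hCX' : C ⊆ X := hCX.trans Set.sdiff_subset
  have out_C : ∀ x ∈ C, ∀ v ∈ X, A x v → v ∈ C ∨ ∃ x ∈ C, A v x := by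
    intro x hx v hv hxv
    by_contra! hn
    refine hno ⟨C, hCX', hC, hnt, v, hv, hn.1, fun y hy => ?_⟩
    refine hC {y | A y v} ⟨x, hx, hxv⟩ (fun a _ hav b hb hab => ?_) hy
    exact (hA.total hab hav fun h => hn.1 (h ▸ hb)).resolve_right (hn.2 b hb)
  obtain ⟨x, hx⟩ := hnt.nonempty
  have hs' := hX {v | v ∈ C ∨ ∃ x ∈ C, A v x} ⟨x, hCX' hx, .inl hx⟩ (by
    rintro a - (ha | ⟨x, hx, hax⟩) b hb hab
    · exact out_C a ha b hb hab
    · by_cases hbx : b = x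
      · exact .inl (hbx ▸ hx)
      rcases hA.total hab hax hbx with h | h
      · exact .inr ⟨x, hx, h⟩
      · exact out_C x hx b hb h) hs
  rcases hs' with h | ⟨x, hx, h⟩
  · exact (hCX h).2 (.inl rfl)
  · exact (hCX hx).2 (.inr h)

/-! ### Contracting a set to one of its vertices -/

/-- If all arcs between `C` and `P₁ \ C` also exist at `x₀` in place of their end in `C`, then
cycles meeting both sides project to cycles through `x₀`. -/
theorem acyc_glue {C P₁ P₂ : Set V} {x₀ : V} (hx₀ : x₀ ∈ P₁)
    (hin : ∀ z ∈ P₁, z ∉ C → ∀ x ∈ C, A z x → A z x₀)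
    (hout : ∀ x ∈ C, ∀ y ∈ P₁, y ∉ C → A x y → A x₀ y)
    (h1 : Acyc A P₁) (h2 : Acyc A P₂) (hP₂ : P₂ ⊆ C) : Acyc A ((P₁ \ C) ∪ P₂) := by
  classical
  let h : V → V := fun v => if v ∈ C then x₀ else v
  have hC : ∀ v ∈ C, h v = x₀ := fun v hv => if_pos hv
  have hn : ∀ v, v ∉ C → h v = v := fun v hv => if_neg hv
  have mem : ∀ v ∈ (P₁ \ C) ∪ P₂, v ∉ C → v ∈ P₁ := fun v hv hvC =>
    hv.elim And.left fun h => (hvC (hP₂ h)).elim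
  have mem2 : ∀ v ∈ (P₁ \ C) ∪ P₂, v ∈ C → v ∈ P₂ := fun v hv hvC =>
    hv.elim (fun h => (h.2 hvC).elim) id
  have step : ∀ a b, Res A ((P₁ \ C) ∪ P₂) a b →
      (a ∈ C ∧ b ∈ C ∧ Res A P₂ a b) ∨ Res A P₁ (h a) (h b) := by
    rintro a b ⟨hab, ha, hb⟩
    by_cases haC : a ∈ C <;> by_cases hbC : b ∈ C
    · exact .inl ⟨haC, hbC, hab, mem2 _ ha haC, mem2 _ hb hbC⟩
    · rw [hC a haC, hn b hbC]
      exact .inr ⟨hout a haC b (mem b hb hbC) hbC hab, hx₀, mem b hb hbC⟩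
    · rw [hC b hbC, hn a haC]
      exact .inr ⟨hin a (mem a ha haC) haC b hbC hab, mem a ha haC, hx₀⟩
    · rw [hn a haC, hn b hbC]
      exact .inr ⟨hab, mem a ha haC, mem b hb hbC⟩
  have key : ∀ a b, TransGen (Res A ((P₁ \ C) ∪ P₂)) a b →
      (a ∈ C ∧ b ∈ C ∧ TransGen (Res A P₂) a b) ∨ TransGen (Res A P₁) (h a) (h b) := by
    intro a b hab
    induction hab with
    | single hab => exact (step _ _ hab).imp (fun h => ⟨h.1, h.2.1, .single h.2.2⟩) .single
    | tail _ hbc ih =>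
      rcases step _ _ hbc with hs | hs
      · rcases ih with ih | ih
        · exact .inl ⟨ih.1, hs.2.1, ih.2.2.tail hs.2.2⟩
        · rw [hC _ hs.1, ← hC _ hs.2.1] at ih
          exact .inr ih
      · rcases ih with ih | ih
        · rw [hC _ ih.2.1, ← hC _ ih.1] at hs
          exact .inr (.single hs)
        · exact .inr (ih.tail hs)
  intro v hv
  rcases key v v hv with h | h
  · exact h2 v h.2.2
  · exact h1 _ h

/-! ### Maximal hubs -/

/-- Enlarging a strong set `C ⊆ M` by all walks of `M` that start and end in `C` keeps it
strong. -/
theorem strong_closure {C M : Set V} (hC : Strong A C) :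
    Strong A {v | (∃ x ∈ C, ReflTransGen (Res A M) x v) ∧
      ∃ x ∈ C, ReflTransGen (Res A M) v x} := by
  set C' : Set V := {v | (∃ x ∈ C, ReflTransGen (Res A M) x v) ∧
      ∃ x ∈ C, ReflTransGen (Res A M) v x} with hC'
  rintro Y ⟨y, hy, hyY⟩ hcl
  have hCC' : C ⊆ C' := fun x hx => ⟨⟨x, hx, .refl⟩, x, hx, .refl⟩
  have fwd : ∀ a x, ReflTransGen (Res A M) a x → x ∈ C → a ∈ C' → a ∈ Y → x ∈ Y := by
    intro a x h hx
    induction h using ReflTransGen.head_induction_on with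
    | refl => exact fun _ h => h
    | head hab hbx ih =>
      intro ha haY
      obtain ⟨⟨u, hu, hua⟩, -⟩ := ha
      have hb : _ ∈ C' := ⟨⟨u, hu, hua.tail hab⟩, x, hx, hbx⟩
      exact ih hb (hcl _ ⟨⟨u, hu, hua⟩, x, hx, hbx.head hab⟩ haY _ hb hab.1)
  obtain ⟨x, hx, hyx⟩ := hy.2
  have hCY : C ⊆ Y := hC Y ⟨x, hx, fwd y x hyx hx hy hyY⟩
    fun a ha haY b hb hab => hcl a (hCC' ha) haY b (hCC' hb) hab
  rintro v ⟨⟨u, hu, huv⟩, hv⟩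
  induction huv with
  | refl => exact hCY hu
  | tail hub hbc ih =>
    obtain ⟨x, hx, hcx⟩ := hv
    have hb : ∃ x ∈ C, ReflTransGen (Res A M) _ x := ⟨x, hx, hcx.head hbc⟩
    exact hcl _ ⟨⟨u, hu, hub⟩, hb⟩ (ih hb) _ ⟨⟨u, hu, hub.tail hbc⟩, x, hx, hcx⟩ hbc.1

/-- In a relation whose out-neighbourhoods are cliques, the vertices reachable from a given one
are pairwise comparable under reachability. -/
theorem reach_comparable {B : V → V → Prop}
    (hB : ∀ a b c, B a b → B a c → b = c ∨ B b c ∨ B c b) {a y z : V}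
    (hy : ReflTransGen B a y) (hz : ReflTransGen B a z) :
    ReflTransGen B y z ∨ ReflTransGen B z y := by
  have one : ∀ a b, B a b → ReflTransGen B a z → ReflTransGen B b z ∨ ReflTransGen B z b := by
    intro a b hab h
    induction h using ReflTransGen.head_induction_on with
    | refl => exact .inr (.single hab)
    | head hac hcz ih =>
      rcases hB _ _ _ hab hac with rfl | h | h
      · exact .inl hcz
      · exact .inl (hcz.head h)
      · exact ih h
  induction hy using ReflTransGen.head_induction_on with
  | refl => exact .inl hz
  | head hab hby ih =>
    rcases one _ _ hab hz with h | h
    · exact ih h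
    · exact .inr (h.trans hby)

section hub
variable {X C : Set V}

/-- A walk among the in-neighbours of a vertex dominated by a maximal hub `C` cannot leave `C` and
come back. -/
theorem mem_of_walk (hC : Hub A X C) (hmax : ∀ D, Hub A X D → C ⊆ D → D ⊆ C) (hA : LOT A)
    {t : V} (htX : t ∈ X) (ht : ∀ x ∈ C, A x t) {v x x' : V} (hx : x ∈ C) (hx' : x' ∈ C)
    (hv : ReflTransGen (Res A {v | v ∈ X ∧ A v t}) x v)
    (hv' : ReflTransGen (Res A {v | v ∈ X ∧ A v t}) v x') : v ∈ C := by
  have hsub : ∀ u, (∃ x ∈ C, ReflTransGen (Res A {v | v ∈ X ∧ A v t}) x u) → u ∈ X ∧ A u t := by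
    rintro u ⟨x, hx, h⟩
    rcases ReflTransGen.cases_tail h with rfl | ⟨b, -, h⟩
    · exact ⟨hC.1 hx, ht _ hx⟩
    · exact h.2.2
  have hCC' : C ⊆ {v | (∃ x ∈ C, ReflTransGen (Res A {v | v ∈ X ∧ A v t}) x v) ∧
      ∃ x ∈ C, ReflTransGen (Res A {v | v ∈ X ∧ A v t}) v x} :=
    fun x hx => ⟨⟨x, hx, .refl⟩, x, hx, .refl⟩
  refine hmax _ ⟨fun u hu => (hsub u hu.1).1, strong_closure hC.2.1, hC.2.2.1.mono hCC',
    t, htX, fun h => hA.irrefl t (hsub t h.1).2, fun u hu => (hsub u hu.1).2⟩ hCC'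
    ⟨⟨x, hx, hv⟩, x', hx', hv'⟩

/-- A maximal hub dominates all its out-neighbours. -/
theorem dom_of_arc (hC : Hub A X C) (hmax : ∀ D, Hub A X D → C ⊆ D → D ⊆ C) (hA : LOT A)
    {x y : V} (hx : x ∈ C) (hyX : y ∈ X) (hyC : y ∉ C) (hxy : A x y) : ∀ u ∈ C, A u y := by
  obtain ⟨w, hwX, hwC, hw⟩ := hC.2.2.2
  by_cases hyw : y = w
  · exact hyw ▸ hw
  rcases hA.total hxy (hw x hx) hyw with h | h
  · have hno : ∀ b ∈ C, ¬ A y b := by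
      intro b hb hyb
      refine hyC (mem_of_walk hC hmax hA hwX hw hx hb (.single ?_) (.single ?_))
      · exact ⟨hxy, ⟨hC.1 hx, hw x hx⟩, hyX, h⟩
      · exact ⟨hyb, ⟨hyX, h⟩, hC.1 hb, hw b hb⟩
    exact fun u hu => hC.2.1 {u | A u y} ⟨x, hx, hxy⟩ (fun a _ ha b hb hab =>
      (hA.total hab ha fun h => hyC (h ▸ hb)).resolve_right (hno b hb)) hu
  · exact fun u hu => hC.2.1 {u | A u y} ⟨x, hx, hxy⟩ (fun a haC ha b hb hab =>
      hA.trans hab (hw a haC) ha (hw b hb) h) hu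

/-- The out-neighbourhoods in a maximal hub `C` of the vertices outside form a chain. Such a vertex
is reached from a vertex dominated by `C` through vertices not dominated by `C`; along such walks
the out-neighbourhood in `C` grows, and by maximality two of these walks may be assumed to start
at the same vertex. -/
theorem nested (hX : Strong A X) (hC : Hub A X C) (hmax : ∀ D, Hub A X D → C ⊆ D → D ⊆ C)
    (hA : LOT A) {z₁ z₂ : V} (hz₁ : z₁ ∈ X) (hz₁C : z₁ ∉ C) (h₁ : ∃ x ∈ C, A z₁ x)
    (hz₂ : z₂ ∈ X) (hz₂C : z₂ ∉ C) (h₂ : ∃ x ∈ C, A z₂ x) :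
    (∀ x ∈ C, A z₁ x → A z₂ x) ∨ (∀ x ∈ C, A z₂ x → A z₁ x) := by
  have hdom := @dom_of_arc V A X C hC hmax hA
  obtain ⟨x₁, hx₁⟩ := hC.2.2.1.nonempty
  set S : Set V := {y | y ∈ X ∧ y ∉ C ∧ ∀ x ∈ C, A x y} with hS
  -- arcs avoiding `C` and ending outside `S`
  set B : V → V → Prop := fun a b => A a b ∧ b ∈ X ∧ b ∉ C ∧ b ∉ S with hB
  have hBt : ∀ a b c, B a b → B a c → b = c ∨ B b c ∨ B c b := by
    intro a b c hb hc
    by_cases hbc : b = c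
    · exact .inl hbc
    · exact .inr ((hA.total hb.1 hc.1 hbc).imp (fun h => ⟨h, hc.2⟩) fun h => ⟨h, hb.2⟩)
  have reach : ∀ z ∈ X, z ∉ C → ∃ t ∈ S, ReflTransGen B t z := by
    intro z hz hzC
    refine (hX {v | v ∈ C ∨ ∃ t ∈ S, ReflTransGen B t v} ⟨x₁, hC.1 hx₁, .inl hx₁⟩ ?_
      hz).resolve_left hzC
    intro a _ ha b hb hab
    by_cases hbC : b ∈ C
    · exact .inl hbC
    by_cases hbS : b ∈ S
    · exact .inr ⟨b, hbS, .refl⟩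
    rcases ha with ha | ⟨t, ht, hta⟩
    · exact (hbS ⟨hb, hbC, hdom ha hb hbC hab⟩).elim
    · exact .inr ⟨t, ht, hta.tail ⟨hab, hb, hbC, hbS⟩⟩
  have shift : ∀ t₁ ∈ S, ∀ t₂ ∈ S, A t₁ t₂ → ∀ z, z ∉ C → (∃ x ∈ C, A z x) →
      ReflTransGen B t₁ z → ReflTransGen B t₂ z := by
    rintro t₁ ht₁ t₂ ht₂ h12 z hzC ⟨x, hx, hzx⟩ hz
    have main : ∀ a, ReflTransGen B a z → a ∈ X → A a t₂ →
        ReflTransGen (Res A {v | v ∈ X ∧ A v t₂}) x a → ReflTransGen B t₂ z := by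
      intro a haz
      induction haz using ReflTransGen.head_induction_on with
      | refl =>
        intro hzX hzt hxz
        refine (hzC (mem_of_walk hC hmax hA ht₂.1 ht₂.2.2 hx hx hxz (.single ?_))).elim
        exact ⟨hzx, ⟨hzX, hzt⟩, hC.1 hx, ht₂.2.2 x hx⟩
      | @head a b hab hbz ih =>
        intro haX hat hxa
        rcases hA.total hab.1 hat (fun h => hab.2.2.2 (h ▸ ht₂)) with h | h
        · exact ih hab.2.1 h (hxa.tail ⟨hab.1, ⟨haX, hat⟩, hab.2.1, h⟩)
        · exact hbz.head ⟨h, hab.2⟩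
    exact main t₁ hz ht₁.1 h12 (.single ⟨ht₁.2.2 x hx, ⟨hC.1 hx, ht₂.2.2 x hx⟩, ht₁.1, h12⟩)
  have grow : ∀ a b, ReflTransGen B a b → ∀ x ∈ C, A a x → A b x := by
    intro a b h x hx hax
    induction h with
    | refl => exact hax
    | tail _ hbc ih =>
      refine (hA.total hbc.1 ih fun h => hbc.2.2.1 (h ▸ hx)).resolve_right fun h => ?_
      exact hbc.2.2.2 ⟨hbc.2.1, hbc.2.2.1, hdom hx hbc.2.1 hbc.2.2.1 h⟩
  obtain ⟨t₁, ht₁, hr₁⟩ := reach z₁ hz₁ hz₁C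
  obtain ⟨t₂, ht₂, hr₂⟩ := reach z₂ hz₂ hz₂C
  have : ∃ t, ReflTransGen B t z₁ ∧ ReflTransGen B t z₂ := by
    by_cases h : t₁ = t₂
    · exact ⟨t₁, hr₁, h ▸ hr₂⟩
    rcases hA.total (ht₁.2.2 x₁ hx₁) (ht₂.2.2 x₁ hx₁) h with h | h
    · exact ⟨t₂, shift t₁ ht₁ t₂ ht₂ h z₁ hz₁C h₁ hr₁, hr₂⟩
    · exact ⟨t₁, hr₁, shift t₂ ht₂ t₁ ht₁ h z₂ hz₂C h₂ hr₂⟩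
  obtain ⟨t, h1, h2⟩ := this
  exact (reach_comparable hBt h1 h2).imp (grow _ _) (grow _ _)

/-- The least nonempty and the largest member of the chain of `nested`: a vertex `x₀` of `C` that
receives an arc from every vertex with an arc into `C`, and a vertex `z` dominating all vertices of
`C` that can be entered from outside. -/
theorem exists_entry [Finite V] (hX : Strong A X) (hC : Hub A X C)
    (hmax : ∀ D, Hub A X D → C ⊆ D → D ⊆ C) (hA : LOT A) :
    (∃ x₀ ∈ C, ∀ z ∈ X, z ∉ C → ∀ x ∈ C, A z x → A z x₀) ∧
    ∃ z, ∀ z' ∈ X, z' ∉ C → ∀ x ∈ C, A z' x → A z x := by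
  set Z : Set V := {z | z ∈ X ∧ z ∉ C ∧ ∃ x ∈ C, A z x} with hZ
  obtain ⟨x₁, hx₁⟩ := hC.2.2.1.nonempty
  have hn : ∀ z₁ ∈ Z, ∀ z₂ ∈ Z, (∀ x ∈ C, A z₁ x → A z₂ x) ∨ (∀ x ∈ C, A z₂ x → A z₁ x) :=
    fun z₁ h₁ z₂ h₂ => nested hX hC hmax hA h₁.1 h₁.2.1 h₁.2.2 h₂.1 h₂.2.1 h₂.2.2
  rcases Z.eq_empty_or_nonempty with hE | hne
  · have : ∀ z ∈ X, z ∉ C → ∀ x ∈ C, ¬ A z x := fun z hz hzC x hx h =>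
      hE.le (show z ∈ Z from ⟨hz, hzC, x, hx, h⟩)
    exact ⟨⟨x₁, hx₁, fun z hz hzC x hx h => (this z hz hzC x hx h).elim⟩,
      x₁, fun z hz hzC x hx h => (this z hz hzC x hx h).elim⟩
  · obtain ⟨m, hm⟩ := (Set.toFinite Z).exists_minimalFor (fun z => {x | x ∈ C ∧ A z x}) Z hne
    obtain ⟨M, hM⟩ := (Set.toFinite Z).exists_maximalFor (fun z => {x | x ∈ C ∧ A z x}) Z hne
    obtain ⟨x₀, hx₀, hmx⟩ := hm.1.2.2
    refine ⟨⟨x₀, hx₀, fun z hz hzC x hx h => ?_⟩, M, fun z hz hzC x hx h => ?_⟩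
    · have hzZ : z ∈ Z := ⟨hz, hzC, x, hx, h⟩
      rcases hn m hm.1 z hzZ with h' | h'
      · exact h' x₀ hx₀ hmx
      · exact (hm.2 hzZ (fun u hu => ⟨hu.1, h' u hu.1 hu.2⟩) ⟨hx₀, hmx⟩).2
    · have hzZ : z ∈ Z := ⟨hz, hzC, x, hx, h⟩
      rcases hn M hM.1 z hzZ with h' | h'
      · exact (hM.2 hzZ (fun u hu => ⟨hu.1, h' u hu.1 hu.2⟩) ⟨hx, h⟩).2
      · exact h' x hx h

end hub

/-! ### The induction -/

/-- The set `X` splits into two acyclic parts `R` and `X \ R` with `N⁺[s] ∩ X ⊆ R`. -/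
def Splits (A : V → V → Prop) (X : Set V) (s : V) : Prop :=
  ∃ R ⊆ X, (∀ v ∈ X, (v = s ∨ A s v) → v ∈ R) ∧ Acyc A R ∧ Acyc A (X \ R)

/-- The inductive step in the presence of a hub. -/
theorem splits_of_hub [Finite V] (hA : LOT A) {X : Set V} (hX : Strong A X)
    (hhub : ∃ C, Hub A X C) (ih : ∀ Y, Y ⊂ X → ∀ s, Splits A Y s) {s : V} (hs : s ∈ X) :
    Splits A X s := by
  obtain ⟨C, hC⟩ := (Set.toFinite {C : Set V | Hub A X C}).exists_maximal hhub
  have hmax : ∀ D, Hub A X D → C ⊆ D → D ⊆ C := fun D hD h => hC.2 hD h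
  replace hC : Hub A X C := hC.1
  have hdom := @dom_of_arc V A X C hC hmax hA
  obtain ⟨⟨x₀, hx₀, hx₀in⟩, z, hz⟩ := exists_entry hX hC hmax hA
  obtain ⟨w, hwX, hwC, -⟩ := hC.2.2.2
  have hCss : C ⊂ X := ⟨hC.1, fun h => hwC (h hwX)⟩
  obtain ⟨x₁, hx₁, hne⟩ := hC.2.2.1.exists_ne x₀
  have hX'ss : (X \ C) ∪ {x₀} ⊂ X := by
    refine ⟨Set.union_subset Set.sdiff_subset (Set.singleton_subset_iff.2 (hC.1 hx₀)), fun h => ?_⟩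
    rcases h (hC.1 hx₁) with h | h
    · exact h.2 hx₁
    · exact hne h
  set X' := (X \ C) ∪ {x₀} with hX'
  have hX'C : ∀ v ∈ X', v ∉ C → v ∈ X := fun v hv _ => hX'ss.1 hv
  have hx₀X' : x₀ ∈ X' := .inr rfl
  have hX'x₀ : ∀ v ∈ X', v ∈ C → v = x₀ := fun v hv hvC => hv.elim (fun h => (h.2 hvC).elim) id
  have hXX' : ∀ v ∈ X, v ∉ C → v ∈ X' := fun v hv hvC => .inl ⟨hv, hvC⟩
  have glue : ∀ P₁ P₂ : Set V, P₁ ⊆ X' → P₂ ⊆ C → x₀ ∈ P₁ → Acyc A P₁ → Acyc A P₂ →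
      Acyc A ((P₁ \ C) ∪ P₂) := fun P₁ P₂ hP₁ hP₂ hx h1 h2 =>
    acyc_glue hx (fun z hz hzC => hx₀in z (hX'C z (hP₁ hz) hzC) hzC)
      (fun x hx y hy hyC hxy => hdom hx (hX'C y (hP₁ hy) hyC) hyC hxy x₀ hx₀) h1 h2 hP₂
  have split_C : ∀ P₁ P₂ : Set V, P₂ ⊆ C → Acyc A P₁ → Acyc A P₂ →
      Acyc A (((P₁ \ C) ∪ P₂) ∩ C) ∧ Acyc A (((P₁ \ C) ∪ P₂) \ C) := by
    intro P₁ P₂ hP₂ h1 h2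
    refine ⟨h2.mono ?_, h1.mono ?_⟩
    · rintro v ⟨h | h, hv⟩
      · exact (h.2 hv).elim
      · exact h
    · rintro v ⟨h | h, hv⟩
      · exact h.1
      · exact (hv (hP₂ h)).elim
  -- vertices not dominated by `z` receive no arc from outside `C`, so no cycle uses both sets
  have noIn : ∀ P₁ P₂ : Set V, P₁ ⊆ X' → P₂ ⊆ C → (∀ x ∈ P₂, ¬ A z x) → Acyc A P₁ → Acyc A P₂ →
      Acyc A ((P₁ \ C) ∪ P₂) := by
    intro P₁ P₂ hP₁ hP₂ hzP h1 h2
    have h := split_C P₁ P₂ hP₂ h1 h2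
    refine Acyc.split (Y := Cᶜ) ?_ (h.2.mono fun v hv => hv)
      (h.1.mono fun v hv => ⟨hv.1, not_not.1 hv.2⟩)
    rintro a (ha | ha) haC b (hb | hb) hab
    · exact hb.2
    · exact (hzP b hb (hz a (hX'C a (hP₁ ha.1) haC) haC b (hP₂ hb) hab)).elim
    · exact (haC (hP₂ ha)).elim
    · exact (haC (hP₂ ha)).elim
  -- the complement of a union of colour classes, one from `X'` and one from `C`
  have compl : ∀ R₁ R₂ : Set V, X \ ((R₁ \ C) ∪ R₂) ⊆ ((X' \ R₁) \ C) ∪ (C \ R₂) := by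
    rintro R₁ R₂ v ⟨hv, hn⟩
    by_cases hvC : v ∈ C
    · exact .inr ⟨hvC, fun h => hn (.inr h)⟩
    · exact .inl ⟨⟨hXX' v hv hvC, fun h => hn (.inl ⟨h, hvC⟩)⟩, hvC⟩
  have hsubX : ∀ R₁ R₂ : Set V, R₁ ⊆ X' → R₂ ⊆ C → (R₁ \ C) ∪ R₂ ⊆ X := fun R₁ R₂ h1 h2 =>
    Set.union_subset (Set.sdiff_subset.trans (h1.trans hX'ss.1)) (h2.trans hC.1)
  by_cases hsC : s ∈ C
  · obtain ⟨R₁, hR₁, hN₁, ha₁, hb₁⟩ := ih X' hX'ss x₀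
    obtain ⟨R₂, hR₂, hN₂, ha₂, hb₂⟩ := ih C hCss s
    refine ⟨(R₁ \ C) ∪ R₂, hsubX _ _ hR₁ hR₂, ?_,
      glue R₁ R₂ hR₁ hR₂ (hN₁ x₀ hx₀X' (.inl rfl)) ha₁ ha₂, Acyc.mono ?_ (compl R₁ R₂)⟩
    · intro v hv hsv
      by_cases hvC : v ∈ C
      · exact .inr (hN₂ v hvC hsv)
      · have hsv' : A s v := hsv.resolve_left fun h => hvC (h ▸ hsC)
        exact .inl ⟨hN₁ v (hXX' v hv hvC) (.inr (hdom hsC hv hvC hsv' x₀ hx₀)), hvC⟩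
    · have h := split_C (X' \ R₁) (C \ R₂) Set.sdiff_subset hb₁ hb₂
      refine Acyc.split (Y := C) ?_ h.1 h.2
      rintro a - haC b (hb | hb) hab
      · exact (hb.1.2 (hN₁ b hb.1.1
          (.inr (hdom haC (hX'C b hb.1.1 hb.2) hb.2 hab x₀ hx₀)))).elim
      · exact hb.1
  · obtain ⟨R₁, hR₁, hN₁, ha₁, hb₁⟩ := ih X' hX'ss s
    obtain ⟨R₂, hR₂, hN₂, ha₂, hb₂⟩ := ih C hCss z
    have hR₂z : ∀ x ∈ C \ R₂, ¬ A z x := fun x hx h => hx.2 (hN₂ x hx.1 (.inr h))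
    by_cases hx₀R : x₀ ∈ R₁
    · refine ⟨(R₁ \ C) ∪ R₂, hsubX _ _ hR₁ hR₂, ?_, glue R₁ R₂ hR₁ hR₂ hx₀R ha₁ ha₂,
        Acyc.mono (noIn _ _ Set.sdiff_subset Set.sdiff_subset hR₂z hb₁ hb₂) (compl R₁ R₂)⟩
      intro v hv hsv
      by_cases hvC : v ∈ C
      · have hsv' : A s v := hsv.resolve_left fun h => hsC (h ▸ hvC)
        exact .inr (hN₂ v hvC (.inr (hz s hs hsC v hvC hsv')))
      · exact .inl ⟨hN₁ v (hXX' v hv hvC) hsv, hvC⟩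
    · refine ⟨(R₁ \ C) ∪ (C \ R₂), hsubX _ _ hR₁ Set.sdiff_subset, ?_,
        noIn R₁ _ hR₁ Set.sdiff_subset hR₂z ha₁ hb₂,
        Acyc.mono (glue (X' \ R₁) R₂ Set.sdiff_subset hR₂ ⟨hx₀X', hx₀R⟩ hb₁ ha₂) ?_⟩
      · intro v hv hsv
        by_cases hvC : v ∈ C
        · have hsv' : A s v := hsv.resolve_left fun h => hsC (h ▸ hvC)
          exact (hx₀R (hN₁ x₀ hx₀X' (.inr (hx₀in s hs hsC v hvC hsv')))).elim
        · exact .inl ⟨hN₁ v (hXX' v hv hvC) hsv, hvC⟩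
      · refine (compl _ _).trans (Set.union_subset_union_right _ ?_)
        exact fun v hv => by_contra fun h => hv.2 ⟨hv.1, h⟩

theorem exists_split [Finite V] (hA : LOT A) (X : Set V) : ∀ s, Splits A X s := by
  induction X using WellFoundedLT.induction with
  | ind X ih =>
  replace ih : ∀ Y, Y ⊂ X → ∀ s, Splits A Y s := ih
  by_cases hX : Strong A X
  · have main : ∀ s ∈ X, Splits A X s := by
      intro s hs
      by_cases hhub : ∃ C, Hub A X C
      · exact splits_of_hub hA hX hhub ih hs
      · refine ⟨X ∩ {v | v = s ∨ A s v}, Set.inter_subset_left, fun v hv h => ⟨hv, h⟩,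
          (acyc_closed_nbhd hA s).mono Set.inter_subset_right, ?_⟩
        rw [Set.sdiff_self_inter]
        exact split_of_no_hub hA hX hhub hs
    intro s
    by_cases hs : s ∈ X
    · exact main s hs
    -- a vertex `s` outside `X` is replaced by the source of `N⁺(s) ∩ X`
    rcases (X ∩ {v | A s v}).eq_empty_or_nonempty with hE | hne
    · have hno : ∀ v ∈ X, ¬ (v = s ∨ A s v) := by
        rintro v hv (rfl | h)
        · exact hs hv
        · exact hE.le (show v ∈ X ∩ {v | A s v} from ⟨hv, h⟩)
      rcases X.eq_empty_or_nonempty with rfl | ⟨s', hs'⟩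
      · refine ⟨∅, subset_rfl, fun v hv => hv.elim, ?_, ?_⟩ <;>
        · intro v hv
          obtain ⟨b, hb, -⟩ := TransGen.head'_iff.1 hv
          simpa using hb.2.1
      · obtain ⟨R, hR, -, h⟩ := main s' hs'
        exact ⟨R, hR, fun v hv h => (hno v hv h).elim, h⟩
    · obtain ⟨s', hs', hsrc⟩ := exists_source hA hne
        (fun a ha b hb => hA.total ha.2 hb.2)
        (fun a ha b hb c hc => hA.trans ha.2 hb.2 hc.2)
      obtain ⟨R, hR, hN, h⟩ := main s' hs'.1
      refine ⟨R, hR, fun v hv hsv => hN v hv (hsrc v ⟨hv, ?_⟩), h⟩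
      exact hsv.resolve_left fun h => hs (h ▸ hv)
  · intro s
    unfold Strong at hX
    push Not at hX
    obtain ⟨Y, ⟨y, hyX, hyY⟩, hcl, hn⟩ := hX
    obtain ⟨R₁, hR₁, hN₁, ha₁, hb₁⟩ :=
      ih (X ∩ Y) ⟨Set.inter_subset_left, fun h => hn fun v hv => (h hv).2⟩ s
    obtain ⟨R₂, hR₂, hN₂, ha₂, hb₂⟩ := ih (X \ Y) ⟨Set.sdiff_subset, fun h => (h hyX).2 hyY⟩ s
    have hsub : R₁ ∪ R₂ ⊆ X :=
      Set.union_subset (hR₁.trans Set.inter_subset_left) (hR₂.trans Set.sdiff_subset)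
    refine ⟨R₁ ∪ R₂, hsub, ?_, ?_, ?_⟩
    · intro v hv h
      by_cases hvY : v ∈ Y
      · exact .inl (hN₁ v ⟨hv, hvY⟩ h)
      · exact .inr (hN₂ v ⟨hv, hvY⟩ h)
    · refine Acyc.split (Y := Y) (fun a ha haY b hb => hcl a (hsub ha) haY b (hsub hb))
        (ha₁.mono ?_) (ha₂.mono ?_)
      · rintro v ⟨h | h, hv⟩
        · exact h
        · exact ((hR₂ h).2 hv).elim
      · rintro v ⟨h | h, hv⟩
        · exact (hv (hR₁ h).2).elim
        · exact h
    · refine Acyc.split (Y := Y) (fun a ha haY b hb => hcl a ha.1 haY b hb.1)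
        (hb₁.mono ?_) (hb₂.mono ?_)
      · exact fun v hv => ⟨⟨hv.1.1, hv.2⟩, fun h => hv.1.2 (.inl h)⟩
      · exact fun v hv => ⟨⟨hv.1.1, hv.2⟩, fun h => hv.1.2 (.inr h)⟩

/-- A transitive tournament, defined by the absence of cycles, is transitive as a relation. -/
theorem IsTransitiveTournament.rel_trans {W : Type} {B : W → W → Prop}
    (h : IsTransitiveTournament B) {a b c : W} (hab : B a b) (hbc : B b c) : B a c := by
  by_cases hac : a = c
  · subst hac
    exact (h.1.1 a b hab hbc).elim
  · exact (h.1.2 a c hac).resolve_right fun hca =>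
      h.2 a (((TransGen.single hab).tail hbc).tail hca)

end

theorem stmt10 {V : Type} [Fintype V] (A : V → V → Prop) (hor : IsOriented A)
    (hloc : ∀ x : V, IsTransitiveTournament (fun a b : {v : V // A x v} => A a.1 b.1))
    (T : Set V) (hT : IsTransitiveTournament (fun a b : T => A a.1 b.1)) :
    (∃ φ : V → Fin 2, GoodColouring A φ ∧ ∀ u ∈ T, ∀ v ∈ T, φ u = φ v) ∧
    dichrom A ≤ 2 := by
  classical
  have hA : LOT A :=
    { asymm := fun h => hor _ _ h
      total := fun {x a b} ha hb hab => (hloc x).1.2 ⟨a, ha⟩ ⟨b, hb⟩ fun h => hab (congrArg (·.1) h)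
      trans := fun {x a b c} ha hb hc hab hbc =>
        (hloc x).rel_trans (a := ⟨a, ha⟩) (b := ⟨b, hb⟩) (c := ⟨c, hc⟩) hab hbc }
  have hR : ∃ R : Set V, T ⊆ R ∧ Acyc A R ∧ Acyc A Rᶜ := by
    have key : ∀ s, (∀ t ∈ T, t = s ∨ A s t) → ∃ R : Set V, T ⊆ R ∧ Acyc A R ∧ Acyc A Rᶜ := by
      intro s hs
      obtain ⟨R, -, hN, h1, h2⟩ := exists_split hA Set.univ s
      exact ⟨R, fun t ht => hN t trivial (hs t ht), h1, h2.mono fun v hv => ⟨trivial, hv⟩⟩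
    rcases T.eq_empty_or_nonempty with rfl | hne
    · rcases isEmpty_or_nonempty V with hV | ⟨⟨s⟩⟩
      · exact ⟨∅, subset_rfl, fun v => hV.elim v, fun v => hV.elim v⟩
      · exact key s fun t ht => ht.elim
    · obtain ⟨s, -, hs⟩ := exists_source hA hne
        (fun a ha b hb hab => hT.1.2 ⟨a, ha⟩ ⟨b, hb⟩ fun h => hab (congrArg (·.1) h))
        (fun a ha b hb c hc hab hbc =>
          hT.rel_trans (a := ⟨a, ha⟩) (b := ⟨b, hb⟩) (c := ⟨c, hc⟩) hab hbc)
      exact key s hs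
  obtain ⟨R, hTR, h1, h2⟩ := hR
  have hφ : ∃ φ : V → Fin 2, GoodColouring A φ ∧ ∀ u ∈ T, ∀ v ∈ T, φ u = φ v := by
    refine ⟨fun v => if v ∈ R then 0 else 1, fun c v _ hv => ?_, fun u hu v hv => ?_⟩
    · fin_cases c
      · refine h1 v (TransGen.mono (fun a b h => ⟨h.1, ?_, ?_⟩) _ _ hv)
        · simpa using h.2.1
        · simpa using h.2.2
      · refine h2 v (TransGen.mono (fun a b h => ⟨h.1, ?_, ?_⟩) _ _ hv)
        · simpa using h.2.1
        · simpa using h.2.2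
    · simp [hTR hu, hTR hv]
  obtain ⟨φ, hφ1, hφ2⟩ := hφ
  exact ⟨⟨φ, hφ1, hφ2⟩, Nat.sInf_le ⟨φ, hφ1⟩⟩
end

section
/- Let k ≥ 2 and let D be a locally in-tournament oriented graph on n ≥ 1 vertices (i.e. an oriented graph in which the in-neighbourhood of every vertex induces a tournament) containing no directed cycle of length at most k. Then D contains a vertex whose out-degree is strictly less than n/k. -/
noncomputable def outDeg {V : Type} (A : V → V → Prop) (v : V) : ℕ := {w | A v w}.ncard

/-! ### Closed walks -/

/-- `Reach A n u v`: there is a walk of length `n` from `u` to `v`, vertices possibly repeated. -/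
def Reach {V : Type} (A : V → V → Prop) : ℕ → V → V → Prop
  | 0, u, v => u = v
  | n + 1, u, v => ∃ w, Reach A n u w ∧ A w v

theorem Reach.exists_fun {V : Type} {A : V → V → Prop} {n : ℕ} {u v : V} (h : Reach A n u v) :
    ∃ f : ℕ → V, f 0 = u ∧ f n = v ∧ ∀ i < n, A (f i) (f (i + 1)) := by
  induction n generalizing v with
  | zero => exact ⟨fun _ => u, rfl, h, by simp⟩
  | succ n ih =>
    obtain ⟨w, hw, hwv⟩ := h
    obtain ⟨f, h0, hn, hf⟩ := ih hw
    refine ⟨fun i => if i ≤ n then f i else v, by simp [h0], by simp, fun i hi => ?_⟩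
    rcases Nat.lt_succ_iff_lt_or_eq.1 hi with h | h
    · simpa [h.le, Nat.succ_le_of_lt h] using hf i h
    · subst h
      simpa [hn] using hwv

/-- Without directed cycles of length at most `k` there are no closed walks of such length. -/
theorem no_closed_walk {V : Type} {A : V → V → Prop} {k : ℕ} (hor : IsOriented A)
    (hgirth : ¬ ∃ m : ℕ, 2 ≤ m ∧ m ≤ k ∧ ∃ c : ZMod m → V,
      Function.Injective c ∧ ∀ i : ZMod m, A (c i) (c (i + 1)))
    (m : ℕ) (h1 : 1 ≤ m) (hmk : m ≤ k) (f : ℕ → V) (hf : ∀ i < m, A (f i) (f (i + 1))) :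
    f 0 ≠ f m := by
  induction m using Nat.strong_induction_on generalizing f with
  | _ m ih =>
    intro hcl
    by_cases hinj : ∃ i j, i < j ∧ j < m ∧ f i = f j
    ·
      -- a repeated vertex cuts out a shorter closed walk
      obtain ⟨i, j, hij, hjm, he⟩ := hinj
      refine ih (j - i) (by omega) (by omega) (by omega) (fun l => f (i + l)) (fun l hl => ?_) ?_
      · exact hf (i + l) (by omega)
      · simpa [Nat.add_sub_cancel' hij.le] using he
    · push Not at hinj
      by_cases hm : m = 1
      · subst hm
        have := hf 0 (by omega)
        simp only [zero_add] at this
        rw [← hcl] at this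
        exact hor _ _ this this
      · have : NeZero m := ⟨by omega⟩
        have : Fact (1 < m) := ⟨by omega⟩
        refine hgirth ⟨m, by omega, hmk, fun i => f i.val, fun a b hab => ?_, fun i => ?_⟩
        · rcases lt_trichotomy a.val b.val with h | h | h
          · exact absurd hab (hinj _ _ h (ZMod.val_lt b))
          · exact ZMod.val_injective m h
          · exact absurd hab.symm (hinj _ _ h (ZMod.val_lt a))
        · have hlt := ZMod.val_lt i
          have hs := hf i.val hlt
          have hv : (i + 1).val = (i.val + 1) % m := by
            rw [ZMod.val_add, ZMod.val_one]
          show A (f i.val) (f (i + 1).val)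
          rw [hv]
          by_cases hlast : i.val + 1 = m
          · rw [hlast] at hs
            rw [hlast, Nat.mod_self, hcl]
            exact hs
          · rw [Nat.mod_eq_of_lt (by omega)]
            exact hs

/-! ### Double counting -/

/-- The double counting step. If each vertex `v` is given `k` representatives `r v i` and the
numbers `M v w` of representatives of `v` dominating `w` satisfy `M v w + M w v ≤ 2`, strictly for
some pair, then the `k * n` out-degrees of representatives sum to less than `n ^ 2`. -/
theorem exists_small_of_reps {V : Type} [Fintype V] (A : V → V → Prop) (k : ℕ)
    (r : V → ℕ → V) (M : V → V → ℕ)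
    (hM : ∀ v w, M v w = {i ∈ (Finset.range k : Set ℕ) | A (r v i) w}.ncard)
    (h2 : ∀ v w, M v w + M w v ≤ 2) (hlt : ∃ v w, M v w + M w v < 2) :
    ∃ v : V, outDeg A v * k < Fintype.card V := by
  classical
  by_contra! hcon
  set n := Fintype.card V with hn
  have hM' : ∀ v w, M v w = ∑ i ∈ Finset.range k, if A (r v i) w then 1 else 0 := by
    intro v w
    rw [hM, ← Finset.card_filter, ← Set.ncard_coe_finset]
    congr 1
    ext; simp
  have hout : ∀ v, outDeg A v = ∑ w, if A v w then 1 else 0 := by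
    intro v
    rw [outDeg, ← Finset.card_filter, ← Set.ncard_coe_finset]
    congr 1
    ext; simp
  have hsum : ∑ v, ∑ w, M v w = ∑ v, ∑ i ∈ Finset.range k, outDeg A (r v i) := by
    refine Finset.sum_congr rfl fun v _ => ?_
    simp_rw [hM', hout]
    exact Finset.sum_comm
  have hlow : n * (k * n) ≤ (∑ v, ∑ w, M v w) * k := by
    rw [hsum, Finset.sum_mul]
    have : ∀ v : V, k * n ≤ (∑ i ∈ Finset.range k, outDeg A (r v i)) * k := by
      intro v
      rw [Finset.sum_mul]
      calc k * n = ∑ i ∈ Finset.range k, n := by simp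
        _ ≤ _ := Finset.sum_le_sum fun i _ => hcon _
    calc n * (k * n) = ∑ v : V, k * n := by simp [hn]
      _ ≤ _ := Finset.sum_le_sum fun v _ => this v
  have hup : 2 * ∑ v, ∑ w, M v w < 2 * (n * n) := by
    have e : 2 * ∑ v, ∑ w, M v w = ∑ v, ∑ w, (M v w + M w v) := by
      simp_rw [Finset.sum_add_distrib]
      rw [two_mul]
      congr 1
      exact Finset.sum_comm
    have e2 : 2 * (n * n) = ∑ v : V, ∑ w : V, 2 := by
      simp [hn]; ring
    rw [e, e2]
    obtain ⟨v, w, hvw⟩ := hlt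
    refine Finset.sum_lt_sum (fun v _ => Finset.sum_le_sum fun w _ => h2 v w)
      ⟨v, Finset.mem_univ _, ?_⟩
    exact Finset.sum_lt_sum (fun w _ => h2 v w) ⟨w, Finset.mem_univ _, hvw⟩
  have : k ≠ 0 := by
    rintro rfl
    obtain ⟨v, w, hvw⟩ := hlt
    have := hcon v
    have : 0 < n := Fintype.card_pos_iff.2 ⟨v⟩
    omega
  have hk : 0 < k := Nat.pos_of_ne_zero this
  have h3 : ∑ v, ∑ w, M v w < n * n := by omega
  have := Nat.mul_lt_mul_of_pos_right h3 hk
  nlinarith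

/-! ### The parent map -/

/-- The standing facts about `A` together with a parent map `p`: `p w` is the in-neighbour of `w`
dominated by all other in-neighbours of `w`. -/
structure Setup {V : Type} (A : V → V → Prop) (k : ℕ) (p : V → V) : Prop where
  three : 3 ≤ k
  walk : ∀ m u, 1 ≤ m → m ≤ k → ¬ Reach A m u u
  tour : ∀ {x u w}, A u x → A w x → u = w ∨ A u w ∨ A w u
  parent : ∀ w, A (p w) w
  last : ∀ {u w}, A u w → u = p w ∨ A u (p w)

namespace Setup

variable {V : Type} {A : V → V → Prop} {k : ℕ} {p : V → V}

theorem irrefl (S : Setup A k p) (u : V) : ¬ A u u := fun h =>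
  S.walk 1 u le_rfl (by have := S.three; omega) ⟨u, rfl, h⟩

theorem asymm (S : Setup A k p) {u v : V} (h : A u v) (h' : A v u) : False :=
  S.walk 2 u (by omega) (by have := S.three; omega) ⟨v, ⟨u, rfl, h⟩, h'⟩

theorem no_three (S : Setup A k p) {u v w : V} (huv : A u v) (hvw : A v w) (hwu : A w u) : False :=
  S.walk 3 u (by omega) S.three ⟨w, ⟨v, ⟨u, rfl, huv⟩, hvw⟩, hwu⟩

/-- Following parents from an out-neighbour of `u`, one stays in the out-neighbourhood of `u`
unless one hits `u` itself. -/
theorem descend (S : Setup A k p) {u w : V} (h : A u w) (m : ℕ) :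
    (∀ a ≤ m, A u (p^[a] w)) ∨ ∃ l, 1 ≤ l ∧ l ≤ m ∧ p^[l] w = u ∧ ∀ a < l, A u (p^[a] w) := by
  induction m with
  | zero => left; intro a ha; obtain rfl : a = 0 := by omega
            exact h
  | succ m ih =>
    rcases ih with ih | ⟨l, h1, h2, h3, h4⟩
    · rcases S.last (ih m le_rfl) with h' | h'
      · right
        refine ⟨m + 1, by omega, le_rfl, ?_, fun a ha => ih a (by omega)⟩
        rw [Function.iterate_succ_apply', ← h']
      · left
        intro a ha
        rcases Nat.lt_or_eq_of_le ha with h'' | rfl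
        · exact ih a (by omega)
        · rwa [Function.iterate_succ_apply']
    · exact Or.inr ⟨l, h1, by omega, h3, h4⟩

end Setup

/-! ### Cycles of the parent map -/

/-- `c` runs forward around a cycle of the parent map. -/
structure PCycle {V : Type} (p : V → V) (c : ℕ → V) : Prop where
  pc : ∀ i, p (c (i + 1)) = c i
  per : ∃ d, 1 ≤ d ∧ ∀ i, c (i + d) = c i

namespace PCycle

variable {V : Type} {p : V → V} {c : ℕ → V}

theorem iter (C : PCycle p c) (s i : ℕ) : p^[s] (c (i + s)) = c i := by
  induction s with
  | zero => rfl
  | succ s ih => rw [Function.iterate_succ_apply, ← add_assoc, C.pc, ih]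

theorem reach_zero (C : PCycle p c) (s : ℕ) : ∃ m, p^[m] (c s) = c 0 :=
  ⟨s, by simpa using C.iter s 0⟩

theorem reach_all (C : PCycle p c) {w : V} (h : ∃ m, p^[m] w = c 0) (s : ℕ) :
    ∃ l, p^[l] w = c s := by
  obtain ⟨m, hm⟩ := h
  obtain ⟨d, hd, hper⟩ := C.per
  have h0 : ∀ j, c (j * d) = c 0 := by
    intro j
    induction j with
    | zero => simp
    | succ j ih => rw [Nat.succ_mul, hper, ih]
  have hsd : s ≤ s * d := Nat.le_mul_of_pos_right s hd
  refine ⟨(s * d - s) + m, ?_⟩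
  rw [Function.iterate_add_apply, hm, ← h0 s]
  have := C.iter (s * d - s) s
  rwa [Nat.add_sub_cancel' hsd] at this

theorem adj {A : V → V → Prop} {k : ℕ} (C : PCycle p c) (S : Setup A k p) (i : ℕ) :
    A (c i) (c (i + 1)) := by
  have := S.parent (c (i + 1))
  rwa [C.pc] at this

/-- The farthest jump: `c t` dominates the stretch from `c (t + 1)` to `c j` but not
`c (j + 1)`. -/
theorem exists_far {A : V → V → Prop} {k : ℕ} (C : PCycle p c) (S : Setup A k p) (t : ℕ) :
    ∃ j, t < j ∧ (∀ s, t < s → s ≤ j → A (c t) (c s)) ∧ ¬ A (c t) (c (j + 1)) := by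
  classical
  obtain ⟨d, hd, hper⟩ := C.per
  have hex : ∃ j, t < j ∧ ¬ A (c t) (c (j + 1)) := by
    refine ⟨t + d + d - 1, by omega, ?_⟩
    rw [show t + d + d - 1 + 1 = t + d + d by omega, hper, hper]
    exact S.irrefl _
  refine ⟨Nat.find hex, (Nat.find_spec hex).1, fun s h1 h2 => ?_, (Nat.find_spec hex).2⟩
  by_cases hs : s = t + 1
  · subst hs; exact C.adj S t
  · have := Nat.find_min hex (m := s - 1) (by omega)
    rw [not_and, not_not] at this
    have := this (by omega)
    rwa [show s - 1 + 1 = s by omega] at this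

/-- Inside the parent-component of the cycle, the out-neighbours of `c t` that descend from `c j`
within the out-neighbourhood of `c t` include a sink of that out-neighbourhood: a parent-deepest
one. -/
theorem exists_sink [Finite V] {A : V → V → Prop} {k : ℕ} (C : PCycle p c) (S : Setup A k p)
    {t j : ℕ} (h : A (c t) (c j)) :
    ∃ x, (∃ m, p^[m] x = c j ∧ ∀ l ≤ m, A (c t) (p^[l] x)) ∧
      ∀ w, (∃ m, p^[m] w = c 0) → A (c t) w → ¬ A x w := by
  classical
  have := Fintype.ofFinite V
  let L : V → ℕ := fun y => if hy : ∃ l, p^[l] y = c t then Nat.find hy else 0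
  let P : ℕ → Prop := fun m => ∃ x, p^[m] x = c j ∧ ∀ l ≤ m, A (c t) (p^[l] x)
  -- the depth is bounded since parents eventually lead to `c t`, which does not dominate itself
  have hb : ∀ m, P m → m ≤ Finset.univ.sup L := by
    rintro m ⟨x, hx, hl⟩
    obtain ⟨a, ha⟩ := C.reach_zero j
    have hy : ∃ l, p^[l] x = c t :=
      C.reach_all ⟨a + m, by rw [Function.iterate_add_apply, hx, ha]⟩ t
    refine le_trans ?_ (Finset.le_sup (f := L) (Finset.mem_univ x))
    simp only [L, dif_pos hy]
    by_contra! hlt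
    have := hl _ hlt.le
    rw [Nat.find_spec hy] at this
    exact S.irrefl _ this
  have h0 : P 0 := ⟨c j, rfl, fun l hl => by obtain rfl : l = 0 := by omega
                                             exact h⟩
  have hspec := Nat.findGreatest_spec (P := P) (Nat.zero_le (Finset.univ.sup L)) h0
  set m := Nat.findGreatest P (Finset.univ.sup L) with hm
  obtain ⟨x, hx, hl⟩ := hspec
  refine ⟨x, ⟨m, hx, hl⟩, fun w hw htw hxw => ?_⟩
  have htx : A (c t) x := hl 0 (by omega)
  obtain ⟨b, hb'⟩ := C.reach_all hw t
  rcases S.descend hxw b with hd | ⟨l, h1, h2, h3, h4⟩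
  · have := hd b le_rfl
    rw [hb'] at this
    exact S.asymm htx this
  · have hP : P (m + l) := by
      refine ⟨w, by rw [Function.iterate_add_apply, h3, hx], fun a ha => ?_⟩
      by_cases hal : l ≤ a
      · obtain ⟨q, rfl⟩ := Nat.exists_eq_add_of_le' hal
        rw [Function.iterate_add_apply, h3]
        exact hl q (by omega)
      · rcases S.descend htw l with hd | ⟨l', g1, g2, g3, g4⟩
        · exact hd a (by omega)
        · by_cases hll : l' < l
          · have := h4 l' hll
            rw [g3] at this
            exact (S.asymm htx this).elim
          · exact g4 a (by omega)
    have := Nat.le_findGreatest (hb _ hP) hP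
    omega

end PCycle

/-! ### Greedy representatives along a parent-cycle -/

/-- A walk `i ↦ c (t i)` around a parent-cycle with representatives `r i`. If the representative
is the walk vertex itself, the walk makes the longest jump along the cycle, and the next
representative is a sink, inside the component, of the out-neighbourhood; otherwise the walk makes
a single step, after which the representative is again the walk vertex. -/
structure Chain {V : Type} (A : V → V → Prop) (p : V → V) (c : ℕ → V) (t : ℕ → ℕ) (r : ℕ → V) :
    Prop where
  t_zero : t 0 = 0
  r_zero : r 0 = c (t 0)
  t_lt : ∀ i, t i < t (i + 1)
  block : ∀ i s, t i < s → s ≤ t (i + 1) → A (c (t i)) (c s)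
  desc : ∀ i, ∃ m, p^[m] (r (i + 1)) = c (t (i + 1)) ∧ ∀ l ≤ m, A (c (t i)) (p^[l] (r (i + 1)))
  far : ∀ i, r i = c (t i) → ¬ A (c (t i)) (c (t (i + 1) + 1))
  sink : ∀ i, r i = c (t i) → ∀ w, (∃ m, p^[m] w = c 0) → A (c (t i)) w → ¬ A (r (i + 1)) w
  prev : ∀ i, r (i + 1) ≠ c (t (i + 1)) → r i = c (t i)
  next_r : ∀ i, r i ≠ c (t i) → r (i + 1) = c (t (i + 1))
  next_t : ∀ i, r i ≠ c (t i) → t (i + 1) = t i + 1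

theorem PCycle.exists_chain {V : Type} [Finite V] {p : V → V} {c : ℕ → V} {A : V → V → Prop}
    {k : ℕ} (C : PCycle p c) (S : Setup A k p) : ∃ t r, Chain A p c t r := by
  classical
  choose F hF1 hF2 hF3 using C.exists_far S
  choose X hX1 hX2 using fun t => C.exists_sink S (hF2 t (F t) (hF1 t) le_rfl)
  let st : ℕ × V → ℕ × V := fun q =>
    if q.2 = c q.1 then (F q.1, X q.1) else (q.1 + 1, c (q.1 + 1))
  let q : ℕ → ℕ × V := fun i => st^[i] (0, c 0)
  have hq : ∀ i, q (i + 1) = st (q i) := fun i => Function.iterate_succ_apply' _ _ _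
  have pos : ∀ i, (q i).2 = c (q i).1 → (q (i + 1)).1 = F (q i).1 ∧ (q (i + 1)).2 = X (q i).1 := by
    intro i h
    rw [hq]
    simp [st, h]
  have neg : ∀ i, (q i).2 ≠ c (q i).1 →
      (q (i + 1)).1 = (q i).1 + 1 ∧ (q (i + 1)).2 = c ((q i).1 + 1) := by
    intro i h
    rw [hq]
    simp [st, h]
  refine ⟨fun i => (q i).1, fun i => (q i).2, rfl, rfl, ?_, ?_, ?_, ?_, ?_, ?_, ?_, ?_⟩
  all_goals intro i
  · by_cases h : (q i).2 = c (q i).1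
    · rw [(pos i h).1]; exact hF1 _
    · rw [(neg i h).1]; omega
  · intro s h1 h2
    by_cases h : (q i).2 = c (q i).1
    · simp only [(pos i h).1] at h2
      exact hF2 _ s h1 h2
    · simp only [(neg i h).1] at h2
      obtain rfl : s = (q i).1 + 1 := by omega
      exact C.adj S _
  · by_cases h : (q i).2 = c (q i).1
    · simp only [(pos i h).1, (pos i h).2]
      exact hX1 _
    · simp only [(neg i h).1, (neg i h).2]
      refine ⟨0, rfl, fun l hl => ?_⟩
      obtain rfl : l = 0 := by omega
      exact C.adj S _
  · intro h
    simp only [(pos i h).1]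
    exact hF3 _
  · intro h
    simp only [(pos i h).2]
    exact hX2 _
  · intro h
    by_contra h'
    apply h
    simp only [(neg i h').1, (neg i h').2]
  · intro h
    simp only [(neg i h).1, (neg i h).2]
  · intro h
    simp only [(neg i h).1]

namespace Chain

variable {V : Type} {A : V → V → Prop} {k : ℕ} {p : V → V} {c : ℕ → V} {t : ℕ → ℕ} {r : ℕ → V}

theorem t_mono (H : Chain A p c t r) {a b : ℕ} (h : a < b) : t a < t b :=
  strictMono_nat_of_lt_succ H.t_lt h

theorem reach (H : Chain A p c t r) (a n : ℕ) : Reach A n (c (t a)) (c (t (a + n))) := by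
  induction n with
  | zero => rfl
  | succ n ih => exact ⟨_, ih, H.block (a + n) _ (H.t_lt _) le_rfl⟩

/-- The walk closes up only after more than `k` steps. -/
theorem not_back (H : Chain A p c t r) (S : Setup A k p) {a b : ℕ} (hab : a ≤ b)
    (hk : b + 1 ≤ a + k) : ¬ A (c (t b)) (c (t a)) := by
  intro h
  obtain ⟨n, rfl⟩ := Nat.exists_eq_add_of_le hab
  exact S.walk (n + 1) _ (by omega) (by omega) ⟨_, H.reach a n, h⟩

theorem adj_r (H : Chain A p c t r) (i : ℕ) : A (c (t i)) (r (i + 1)) := by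
  obtain ⟨m, _, h⟩ := H.desc i
  exact h 0 (by omega)

theorem ne_r (H : Chain A p c t r) (S : Setup A k p) {a b : ℕ} (hab : a < b)
    (hk : b ≤ a + k) : c (t a) ≠ r b := by
  intro h
  obtain ⟨b, rfl⟩ : ∃ b', b = b' + 1 := ⟨b - 1, by omega⟩
  have := H.adj_r b
  rw [← h] at this
  exact H.not_back S (by omega) (by omega) this

theorem not_back_r (H : Chain A p c t r) (S : Setup A k p) {a b : ℕ} (hab : a < b)
    (hk : b + 1 ≤ a + k) : ¬ A (r b) (c (t a)) := by
  intro h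
  obtain ⟨n, rfl⟩ : ∃ n, b = a + n + 1 := ⟨b - a - 1, by omega⟩
  exact S.walk (n + 2) _ (by omega) (by omega) ⟨_, ⟨_, H.reach a n, H.adj_r _⟩, h⟩

theorem ne_v (H : Chain A p c t r) (S : Setup A k p) {a b : ℕ} (hab : a < b)
    (hk : b ≤ a + k) : c (t a) ≠ c (t b) := by
  intro h
  obtain ⟨b, rfl⟩ : ∃ b', b = b' + 1 := ⟨b - 1, by omega⟩
  have := H.block b _ (H.t_lt b) le_rfl
  rw [← h] at this
  exact H.not_back S (by omega) (by omega) this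

/-- Each vertex of the cycle passed by the walk is dominated by the walk vertex before it. -/
theorem covered (H : Chain A p c t r) {a j e : ℕ} (haj : a ≤ j) (h1 : t a < e) (h2 : e ≤ t j) :
    ∃ b, a ≤ b ∧ b < j ∧ A (c (t b)) (c e) := by
  induction j, haj using Nat.le_induction with
  | base => omega
  | succ j hj ih =>
    by_cases h : e ≤ t j
    · obtain ⟨b, h3, h4, h5⟩ := ih h
      exact ⟨b, h3, by omega, h5⟩
    · exact ⟨j, hj, by omega, H.block j e (by omega) h2⟩

/-- An in-neighbour of a cycle vertex dominates, or lies on, the stretch of the cycle leading to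
it. -/
theorem back (C : PCycle p c) (S : Setup A k p) {u : V} {a b : ℕ} (hab : a ≤ b)
    (h : A u (c b)) : A u (c a) ∨ ∃ e, a ≤ e ∧ e < b ∧ u = c e := by
  induction b, hab using Nat.le_induction with
  | base => exact Or.inl h
  | succ b hb ih =>
    have := S.last h
    rw [C.pc] at this
    rcases this with h' | h'
    · exact Or.inr ⟨b, hb, by omega, h'⟩
    · rcases ih h' with h'' | ⟨e, h1, h2, h3⟩
      · exact Or.inl h''
      · exact Or.inr ⟨e, h1, by omega, h3⟩

/-- In-neighbours of a representative dominate the walk vertex or follow the previous one. -/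
theorem to_v (H : Chain A p c t r) (S : Setup A k p) {u : V} {j : ℕ} (h : A u (r (j + 1))) :
    A u (c (t (j + 1))) ∨ A (c (t j)) u := by
  obtain ⟨m, hm, hl⟩ := H.desc j
  rcases S.descend h m with hd | ⟨l, _, h2, h3, _⟩
  · left
    have := hd m le_rfl
    rwa [hm] at this
  · right
    have := hl l h2
    rwa [h3] at this

/-- From a walk vertex that is its own representative, the walk outruns its out-neighbours after two
steps. -/
theorem far_v (H : Chain A p c t r) (C : PCycle p c) (S : Setup A k p) {i j : ℕ}
    (hi : r i = c (t i)) (hij : i + 2 ≤ j) (hk : j ≤ i + k) : ¬ A (c (t i)) (c (t j)) := by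
  intro h
  have hlt := H.t_mono (show i + 1 < j by omega)
  rcases back C S (a := t (i + 1) + 1) (by omega) h with h' | ⟨e, h1, h2, h3⟩
  · exact H.far i hi h'
  · obtain ⟨b, g1, g2, g3⟩ := H.covered (a := i + 1) (j := j) (e := e) (by omega) (by omega) h2.le
    rw [← h3] at g3
    exact H.not_back S (by omega) (by omega) g3

theorem far_r (H : Chain A p c t r) (C : PCycle p c) (S : Setup A k p) {i j : ℕ}
    (hi : r i = c (t i)) (hij : i + 2 ≤ j) (hk : j ≤ i + k) : ¬ A (c (t i)) (r j) := by
  intro h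
  obtain ⟨j, rfl⟩ : ∃ j', j = j' + 1 := ⟨j - 1, by omega⟩
  rcases H.to_v S h with hv | hv
  · exact H.far_v C S hi hij hk hv
  · exact H.not_back S (by omega) (by omega) hv

/-- The out-neighbourhoods of the first `k` representatives are disjoint, except that consecutive
ones may meet outside the component of the cycle, when the first of the two lies on the cycle. -/
theorem common (H : Chain A p c t r) (C : PCycle p c) (S : Setup A k p) {i j : ℕ} {w : V}
    (hij : i < j) (hj : j < k) (hiw : A (r i) w) (hjw : A (r j) w) :
    j = i + 1 ∧ r i = c (t i) ∧ ¬ ∃ m, p^[m] w = c 0 := by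
  by_cases hi : r i = c (t i)
  · rcases S.tour hiw hjw with h | h | h
    · rw [hi] at h
      exact (H.ne_r S hij (by omega) h).elim
    · rw [hi] at h
      by_cases hj' : j = i + 1
      · subst hj'
        rw [hi] at hiw
        exact ⟨rfl, hi, fun hw => H.sink i hi w hw hiw hjw⟩
      · exact (H.far_r C S hi (by omega) (by omega) h).elim
    · rw [hi] at h
      exact (H.not_back_r S hij (by omega) h).elim
  · exfalso
    obtain ⟨i, rfl⟩ : ∃ i', i = i' + 1 := by
      rcases i with _ | i
      · exact (hi H.r_zero).elim
      · exact ⟨i, rfl⟩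
    have hu := H.prev i hi
    have hn := H.next_r _ hi
    have hnt := H.next_t _ hi
    have hur := H.adj_r i
    -- no walk vertex after the single step dominates the exceptional representative
    have key : ∀ b, i + 2 ≤ b → b < k → ¬ A (c (t b)) (r (i + 1)) := by
      intro b h1 h2 h
      rcases S.tour hur h with h' | h' | h'
      · exact H.ne_v S (by omega) (by omega) h'
      · exact H.far_v C S hu h1 (by omega) h'
      · exact H.not_back S (by omega) (by omega) h'
    have hv : ¬ A (r (i + 1)) (c (t (i + 2))) := by
      intro h
      have := S.last h
      rw [hnt, C.pc] at this
      rcases this with h' | h'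
      · exact hi h'
      · exact H.sink i hu _ (C.reach_zero _) (H.block i _ (H.t_lt i) le_rfl) h'
    rcases S.tour hiw hjw with h | h | h
    · rw [h] at hur
      exact H.far_r C S hu (by omega) (by omega) hur
    · by_cases hj' : j = i + 2
      · subst hj'
        rw [hn] at h
        exact hv h
      · obtain ⟨j, rfl⟩ : ∃ j', j = j' + 1 := ⟨j - 1, by omega⟩
        rcases H.to_v S h with h' | h'
        · have hlt := H.t_mono (show i + 2 < j + 1 by omega)
          rcases back C S (a := t (i + 2)) hlt.le h' with h'' | ⟨e, h1, h2, h3⟩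
          · exact hv h''
          · rcases Nat.lt_or_eq_of_le h1 with h4 | h4
            · obtain ⟨b, g1, g2, g3⟩ := H.covered (a := i + 2) (j := j + 1) (by omega) h4 h2.le
              rw [← h3] at g3
              exact key b g1 (by omega) g3
            · rw [h3, ← h4] at hur
              exact H.far_v C S hu le_rfl (by omega) hur
        · exact key j (by omega) (by omega) h'
    · rcases S.tour hur h with huj | huj | huj
      · exact H.ne_r S (by omega) (by omega) huj
      · exact H.far_r C S hu (by omega) (by omega) huj
      · exact H.not_back_r S (by omega) (by omega) huj

/-- Every representative lies in the component of the cycle. -/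
theorem r_comp (H : Chain A p c t r) (C : PCycle p c) (i : ℕ) : ∃ m, p^[m] (r i) = c 0 := by
  rcases i with _ | i
  · rw [H.r_zero]; exact C.reach_zero _
  · obtain ⟨m, hm, _⟩ := H.desc i
    obtain ⟨a, ha⟩ := C.reach_zero (t (i + 1))
    exact ⟨a + m, by rw [Function.iterate_add_apply, hm, ha]⟩

end Chain

/-! ### Assembling the representatives of all components -/

/-- Some positive iterate of a self-map of a finite type is idempotent. -/
theorem exists_idem_iterate {V : Type} [Finite V] (p : V → V) :
    ∃ N, 1 ≤ N ∧ ∀ j v, p^[(j + 1) * N] v = p^[N] v := by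
  obtain ⟨a, b, hab, he⟩ : ∃ a b : ℕ, a < b ∧ p^[a] = p^[b] := by
    obtain ⟨a, b, hne, he⟩ := Finite.exists_ne_map_eq_of_infinite (fun n : ℕ => p^[n])
    rcases lt_or_gt_of_ne hne with h | h
    · exact ⟨a, b, h, he⟩
    · exact ⟨b, a, h, he.symm⟩
  obtain ⟨d, hd, rfl⟩ : ∃ d, 1 ≤ d ∧ b = a + d := ⟨b - a, by omega, by omega⟩
  have step : ∀ m, a ≤ m → p^[m + d] = p^[m] := by
    intro m hm
    obtain ⟨q, rfl⟩ := Nat.exists_eq_add_of_le hm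
    rw [show a + q + d = q + (a + d) by ring, Function.iterate_add, ← he, ← Function.iterate_add,
      add_comm]
  have steps : ∀ l m, a ≤ m → p^[m + l * d] = p^[m] := by
    intro l m hm
    induction l with
    | zero => simp
    | succ l ih => rw [Nat.succ_mul, ← add_assoc, step _ (by omega), ih]
  refine ⟨(a + 1) * d, Nat.mul_pos (by omega) hd, fun j v => ?_⟩
  have hle : a ≤ (a + 1) * d := le_trans (by omega) (Nat.le_mul_of_pos_right (a + 1) hd)
  rw [show (j + 1) * ((a + 1) * d) = (a + 1) * d + (j * (a + 1)) * d by ring, steps _ _ hle]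

/-- The theorem when every vertex has a parent: the representatives of `v` are those of the cycle
reached from `v` along parents. -/
theorem Setup.main {V : Type} [Fintype V] [Nonempty V] {A : V → V → Prop} {k : ℕ} {p : V → V}
    (S : Setup A k p) : ∃ v : V, outDeg A v * k < Fintype.card V := by
  classical
  obtain ⟨N, hN, hid⟩ := exists_idem_iterate p
  -- the parent-cycle below `v`, traversed forward from its vertex `p^[N] v`
  let c : V → ℕ → V := fun v i => p^[(N - 1) * i + N] v
  have hc0 : ∀ v, c v 0 = p^[N] v := fun v => by simp [c]
  have hCy : ∀ v, PCycle p (c v) := by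
    intro v
    have hshift : ∀ q, p^[q + N + N] v = p^[q + N] v := by
      intro q
      rw [add_assoc, Function.iterate_add_apply, ← two_mul, show 2 * N = (1 + 1) * N by ring, hid,
        ← Function.iterate_add_apply]
    refine ⟨fun i => ?_, N, hN, fun i => ?_⟩
    · simp only [c]
      rw [← Function.iterate_succ_apply' p,
        show ((N - 1) * (i + 1) + N).succ = (N - 1) * i + N + N by
          obtain ⟨n, rfl⟩ : ∃ n, N = n + 1 := ⟨N - 1, by omega⟩
          simp only [Nat.add_sub_cancel, Nat.succ_eq_add_one]; ring, hshift]
    · simp only [c]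
      have : ∀ l, p^[(N - 1) * i + l * N + N] v = p^[(N - 1) * i + N] v := by
        intro l
        induction l with
        | zero => simp
        | succ l ih =>
          rw [Nat.succ_mul, ← add_assoc, hshift, ih]
      rw [mul_add, mul_comm (N - 1) N, mul_comm N (N - 1), this]
  choose t r H using fun v => (hCy v).exists_chain S
  let Q : V → V → Prop := fun v w => ∃ m, p^[m] w = c v 0
  have hQself : ∀ v, Q v v := fun v => ⟨N, (hc0 v).symm⟩
  have hQsymm : ∀ {v w}, Q v w → Q w v := by
    rintro v w ⟨m, hm⟩
    refine ⟨(m + 1) * N - m + N, ?_⟩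
    have hle : m ≤ (m + 1) * N := le_trans (by omega) (Nat.le_mul_of_pos_right (m + 1) hN)
    rw [Function.iterate_add_apply, ← hc0, ← hm, ← Function.iterate_add_apply, hc0,
      Nat.sub_add_cancel hle, hid]
  -- a vertex of one component dominating a vertex of another dominates all its ancestors
  have hdom : ∀ {v u w}, Q v u → ¬ Q v w → A u w → ∀ m, A u (p^[m] w) := by
    rintro v u w ⟨a, ha⟩ hw huw m
    rcases S.descend huw m with h | ⟨l, _, _, h3, _⟩
    · exact h m le_rfl
    · exact (hw ⟨a + l, by rw [Function.iterate_add_apply, h3, ha]⟩).elim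
  let B : V → V → Finset ℕ := fun v w => (Finset.range k).filter fun i => A (r v i) w
  have hB : ∀ {v w i}, i ∈ B v w ↔ i < k ∧ A (r v i) w := by simp [B]
  have hle1 : ∀ v w, Q v w → (B v w).card ≤ 1 := by
    intro v w hq
    have hno : ∀ i j, i ∈ B v w → j ∈ B v w → ¬ i < j := by
      intro i j hi hj hij
      exact ((H v).common (hCy v) S hij (hB.1 hj).1 (hB.1 hi).2 (hB.1 hj).2).2.2 hq
    refine Finset.card_le_one.2 fun i hi j hj => ?_
    have h1 := hno i j hi hj
    have h2 := hno j i hj hi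
    omega
  have hle2 : ∀ v w, (B v w).card ≤ 2 := by
    intro v w
    by_contra! hgt
    have hno : ∀ i j, i ∈ B v w → j ∈ B v w → i < j → j = i + 1 := fun i j hi hj hij =>
      ((H v).common (hCy v) S hij (hB.1 hj).1 (hB.1 hi).2 (hB.1 hj).2).1
    obtain ⟨i, j, l, hi, hj, hl, h1, h2, h3⟩ := Finset.two_lt_card_iff.1 hgt
    have a1 := hno i j hi hj
    have a2 := hno j i hj hi
    have a3 := hno i l hi hl
    have a4 := hno l i hl hi
    have a5 := hno j l hj hl
    have a6 := hno l j hl hj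
    omega
  have hzero : ∀ v w, ¬ Q v w → 2 ≤ (B v w).card → (B w v).card = 0 := by
    intro v w hq h2
    obtain ⟨s, hs⟩ : ∃ s, A (c v s) w := by
      obtain ⟨i, hi, j, hj, hne⟩ := Finset.one_lt_card.1 h2
      rw [hB] at hi hj
      rcases lt_or_gt_of_ne hne with h | h
      · obtain ⟨_, h', _⟩ := (H v).common (hCy v) S h hj.1 hi.2 hj.2
        exact ⟨_, h' ▸ hi.2⟩
      · obtain ⟨_, h', _⟩ := (H v).common (hCy v) S h hi.1 hj.2 hi.2
        exact ⟨_, h' ▸ hj.2⟩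
    have hdown := hdom ((hCy v).reach_zero s) hq hs
    rw [Finset.card_eq_zero, Finset.eq_empty_iff_forall_notMem]
    intro j hj
    have hrv := (hB.1 hj).2
    have hup : A (r w j) (c v s) :=
      hdom (v := w) ((H w).r_comp (hCy w) j) (fun h => hq (hQsymm h)) hrv _
    rcases j with _ | j
    · rw [(H w).r_zero] at hup
      exact S.asymm hup (hdown _)
    · exact S.no_three ((H w).adj_r j) hup (hdown _)
  refine exists_small_of_reps A k r (fun v w => (B v w).card) (fun v w => ?_) (fun v w => ?_) ?_
  · rw [← Set.ncard_coe_finset]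
    congr 1
    ext; simp [B]
  · by_cases hq : Q v w
    · have := hle1 v w hq
      have := hle1 w v (hQsymm hq)
      omega
    · have h1 := hle2 v w
      have h2 := hle2 w v
      have h3 := hzero v w hq
      have h4 := hzero w v (fun h => hq (hQsymm h))
      omega
  · obtain ⟨v⟩ := ‹Nonempty V›
    refine ⟨v, c v 0, ?_⟩
    have h0 : (B v (c v 0)).card = 0 := by
      rw [Finset.card_eq_zero, Finset.eq_empty_iff_forall_notMem]
      intro j hj
      obtain ⟨hjk, hA⟩ := hB.1 hj
      rw [← (H v).t_zero] at hA
      rcases j with _ | j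
      · rw [(H v).r_zero] at hA
        exact S.irrefl _ hA
      · exact (H v).not_back_r S (by omega) (by omega) hA
    have h1 := hle1 (c v 0) v (hQsymm ⟨0, rfl⟩)
    have : (B v (c v 0)).card + (B (c v 0) v).card < 2 := by omega
    exact this

/-! ### Existence of parents and removal of sources -/

/-- The parent of `v` exists: the in-neighbourhood, a tournament without 3-cycles, is transitive,
so its vertex with most in-neighbours inside it is dominated by all others. -/
theorem exists_parent {V : Type} [Finite V] {A : V → V → Prop} (hor : IsOriented A)
    (h3 : ∀ u v w, A u v → A v w → ¬ A w u)
    (tour : ∀ {x u w}, A u x → A w x → u = w ∨ A u w ∨ A w u) (v : V) (hv : ∃ u, A u v) :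
    ∃ q, A q v ∧ ∀ u, A u v → u = q ∨ A u q := by
  obtain ⟨q, hq, hmax⟩ := Set.exists_max_image {u | A u v} (fun u => {x | A x v ∧ A x u}.ncard)
    (Set.toFinite _) hv
  refine ⟨q, hq, fun u hu => ?_⟩
  rcases tour hu hq with h | h | h
  · exact Or.inl h
  · exact Or.inr h
  · exfalso
    have hlt : {x | A x v ∧ A x q}.ncard < {x | A x v ∧ A x u}.ncard := by
      refine Set.ncard_lt_ncard ?_ (Set.toFinite _)
      refine ⟨fun x hx => ⟨hx.1, ?_⟩, fun hsub => ?_⟩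
      · rcases tour hx.1 hu with h' | h' | h'
        · subst h'
          exact (hor _ _ h hx.2).elim
        · exact h'
        · exact (h3 _ _ _ hx.2 h h').elim
      · have := (hsub (show q ∈ {x | A x v ∧ A x u} from ⟨hq, h⟩)).2
        exact hor _ _ this this
    exact absurd (hmax u hu) (not_le.2 hlt)

/-- The case of girth greater than three, by deleting vertices of in-degree zero one by one. -/
theorem main_of_three {k : ℕ} (hk : 3 ≤ k) (n : ℕ) : ∀ {V : Type} [Fintype V] (A : V → V → Prop),
    Fintype.card V = n → IsOriented A → Nonempty V →
    (∀ {x u w}, A u x → A w x → u = w ∨ A u w ∨ A w u) →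
    (∀ m, 1 ≤ m → m ≤ k → ∀ f : ℕ → V, (∀ i < m, A (f i) (f (i + 1))) → f 0 ≠ f m) →
    ∃ v : V, outDeg A v * k < Fintype.card V := by
  induction n with
  | zero =>
    intro V _ A hn _ hne
    exact absurd hn Fintype.card_ne_zero
  | succ n ih =>
    intro V _ A hn hor hne tour hw
    classical
    by_cases hin : ∀ v, ∃ u, A u v
    · have hR : ∀ m u, 1 ≤ m → m ≤ k → ¬ Reach A m u u := by
        intro m u h1 h2 h
        obtain ⟨f, g0, gm, hf⟩ := h.exists_fun
        exact hw m h1 h2 f hf (g0.trans gm.symm)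
      have h3 : ∀ u v w, A u v → A v w → ¬ A w u := fun u v w a b d =>
        hR 3 u (by omega) hk ⟨w, ⟨v, ⟨u, rfl, a⟩, b⟩, d⟩
      choose p hp1 hp2 using fun v => exists_parent hor h3 tour v (hin v)
      exact Setup.main (p := p) ⟨hk, hR, tour, hp1, fun h => hp2 _ _ h⟩
    · push Not at hin
      obtain ⟨s, hs⟩ := hin
      by_cases hsub : Nonempty {v : V // v ≠ s}
      · have hcard : Fintype.card {v : V // v ≠ s} = n := by
          rw [Fintype.card_subtype_compl, hn]; simp
        obtain ⟨v, hv⟩ := ih (V := {v : V // v ≠ s}) (fun a b => A a.1 b.1) hcard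
          (fun a b => hor a.1 b.1) hsub
          (fun {x u w} h1 h2 => (tour h1 h2).imp_left Subtype.ext)
          (fun m h1 h2 f hf he => hw m h1 h2 (fun i => (f i).1) hf (congrArg Subtype.val he))
        refine ⟨v.1, ?_⟩
        have : outDeg A v.1 = outDeg (fun a b : {v : V // v ≠ s} => A a.1 b.1) v := by
          unfold outDeg
          rw [← Set.ncard_image_of_injective _ Subtype.val_injective]
          congr 1
          ext w
          simp only [Set.mem_ofPred_eq, Set.mem_image]
          constructor
          · intro h
            exact ⟨⟨w, fun e => hs v.1 (e ▸ h)⟩, h, rfl⟩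
          · rintro ⟨w, h, rfl⟩
            exact h
        rw [this]
        omega
      · refine ⟨s, ?_⟩
        have : {w | A s w} = ∅ := by
          ext w
          simp only [Set.mem_ofPred_eq, Set.mem_empty_iff_false, iff_false]
          intro h
          exact hsub ⟨w, fun e => hs s (e ▸ h)⟩
        simp [outDeg, this, Fintype.card_pos]

/-- Caccetta–Häggkvist for locally in-tournament oriented graphs: if every in-neighbourhood
induces a tournament and there is no directed cycle of length at most `k`, then some vertex
has out-degree strictly less than `n/k`. -/
theorem stmt11 {V : Type} [Fintype V] (A : V → V → Prop) (hor : IsOriented A)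
    (hne : Nonempty V)
    (hloc : ∀ x : V, IsTournament (fun a b : {v : V // A v x} => A a.1 b.1))
    (k : ℕ) (hk : 2 ≤ k)
    (hgirth : ¬ ∃ m : ℕ, 2 ≤ m ∧ m ≤ k ∧ ∃ c : ZMod m → V,
      Function.Injective c ∧ ∀ i : ZMod m, A (c i) (c (i + 1))) :
    ∃ v : V, outDeg A v * k < Fintype.card V := by
  classical
  by_cases hk2 : k = 2
  ·
    -- for `k = 2` let every vertex represent itself twice
    subst hk2
    have hval : ∀ v w, {i ∈ (Finset.range 2 : Set ℕ) | A v w}.ncard = if A v w then 2 else 0 := by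
      intro v w
      split_ifs with h
      · simp only [h, and_true, Set.ofPred_mem_eq]
        rw [Set.ncard_coe_finset]; simp
      · simp [h]
    refine exists_small_of_reps A 2 (fun v _ => v) _ (fun v w => rfl) (fun v w => ?_) ?_
    · rw [hval, hval]
      have := hor v w
      split_ifs <;> simp_all
    · obtain ⟨v⟩ := hne
      refine ⟨v, v, ?_⟩
      rw [hval, if_neg (fun h => hor v v h h)]
      omega
  · refine main_of_three (show 3 ≤ k by omega) _ A rfl hor hne ?_ ?_
    · intro x u w hu hw
      by_cases h : u = w
      · exact Or.inl h
      · exact Or.inr ((hloc x).2 ⟨u, hu⟩ ⟨w, hw⟩ (fun e => h (congrArg Subtype.val e)))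
    · exact fun m h1 h2 f hf => no_closed_walk hor hgirth m h1 h2 f hf
end

section
/- Let D be an oriented graph that is triangle-free (no three vertices are pairwise adjacent) and has no induced subdigraph isomorphic to the directed path P⃗6 on six vertices. Then the dichromatic number of D is at most 382. -/
/-- The directed path on 6 vertices. -/
def P6 : Fin 6 → Fin 6 → Prop := fun i j => (j : ℕ) = (i : ℕ) + 1

namespace DiP6

/-! ### Ranked colourings -/

variable {V : Type}

/-- Adjacency in the underlying undirected graph. -/
def Adj (A : V → V → Prop) (x y : V) : Prop := A x y ∨ A y x

/-- The hereditary hypotheses. Freeness of the induced path on six vertices is recorded in the form: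
every walk on six vertices has a chord joining two of its vertices at distance at least three along
the walk. Chords at distance two are excluded by `tri`, and repeated vertices are harmless. -/
structure Good (A : V → V → Prop) : Prop where
  ori : ∀ u v, A u v → ¬ A v u
  tri : ∀ a b c, Adj A a b → Adj A b c → Adj A a c → False
  p6 : ∀ a b c d e f, A a b → A b c → A c d → A d e → A e f →
    Adj A a d ∨ Adj A b e ∨ Adj A c f ∨ Adj A a e ∨ Adj A b f ∨ Adj A a f

theorem Adj.symm {A : V → V → Prop} {x y : V} (h : Adj A x y) : Adj A y x := Or.symm h

/-- The arcs of `A` with both ends in `U`. -/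
def Res (A : V → V → Prop) (U : Set V) : V → V → Prop := fun u v => A u v ∧ u ∈ U ∧ v ∈ U

/-- A set of vertices has a ranked colouring with `c` colours: `f` is the colouring, and the rank `r`
strictly decreases along each monochromatic arc inside `U`, so that no directed cycle inside `U` is
monochromatic. -/
def Col (A : V → V → Prop) (U : Set V) (c : ℕ) : Prop :=
  ∃ (f : V → ℕ) (r : V → ℤ), (∀ v, f v < c) ∧
    ∀ x ∈ U, ∀ y ∈ U, A x y → f x = f y → r y < r x

theorem Col.mono {A : V → V → Prop} {U W : Set V} {c d : ℕ} (h : Col A U c) (hW : W ⊆ U)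
    (hcd : c ≤ d) : Col A W d := by
  obtain ⟨f, r, hf, hr⟩ := h
  exact ⟨f, r, fun v => (hf v).trans_le hcd, fun x hx y hy => hr x (hW hx) y (hW hy)⟩

theorem Col.rev {A : V → V → Prop} {U : Set V} {c : ℕ} (h : Col (fun x y => A y x) U c) :
    Col A U c := by
  obtain ⟨f, r, hf, hr⟩ := h
  refine ⟨f, fun v => - r v, hf, fun x hx y hy hxy e => ?_⟩
  exact neg_lt_neg (hr y hy x hx hxy e.symm)

theorem Col.union {A : V → V → Prop} {U W : Set V} {c d : ℕ} (h : Col A U c) (h' : Col A W d) :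
    Col A (U ∪ W) (c + d) := by
  classical
  obtain ⟨f, r, hf, hr⟩ := h
  obtain ⟨g, s, hg, hs⟩ := h'
  refine ⟨fun v => if v ∈ U then f v else c + g v, fun v => if v ∈ U then r v else s v,
    fun v => ?_, fun x hx y hy hxy e => ?_⟩
  · have := hf v
    have := hg v
    dsimp only
    split_ifs <;> omega
  · have h1 := hf x
    have h2 := hf y
    by_cases hxU : x ∈ U <;> by_cases hyU : y ∈ U <;> simp only [hxU, hyU, if_true, if_false] at e ⊢
    · exact hr x hxU y hyU hxy e
    · omega
    · omega
    · exact hs x (hx.resolve_left hxU) y (hy.resolve_left hyU) hxy (by omega)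

theorem Col.fiber {A : V → V → Prop} {U : Set V} {m c : ℕ} (g : V → ℕ) (hg : ∀ v, g v < m)
    (h : ∀ i < m, Col A {v | v ∈ U ∧ g v = i} c) : Col A U (m * c) := by
  choose! f r hf hr using h
  refine ⟨fun v => g v * c + f (g v) v, fun v => r (g v) v, fun v => ?_, fun x hx y hy hxy e => ?_⟩
  · have h1 := hf (g v) (hg v) v
    have h2 := hg v
    have h3 : (g v + 1) * c ≤ m * c := Nat.mul_le_mul_right c h2
    dsimp only
    rw [add_mul] at h3
    omega
  · have h1 := hf (g x) (hg x) x
    have h2 := hf (g y) (hg y) y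
    have hc : 0 < c := by omega
    have hgxy : g x = g y := by
      have h3 : (g x * c + f (g x) x) / c = g x := by
        rw [add_comm, Nat.add_mul_div_right _ _ hc, Nat.div_eq_of_lt h1, zero_add]
      have h4 : (g y * c + f (g y) y) / c = g y := by
        rw [add_comm, Nat.add_mul_div_right _ _ hc, Nat.div_eq_of_lt h2, zero_add]
      rw [← h3, ← h4]
      exact congrArg (· / c) e
    dsimp only at e ⊢
    rw [← hgxy] at e ⊢
    exact hr (g x) (hg x) x ⟨hx, rfl⟩ y ⟨hy, hgxy.symm⟩ hxy (by omega)

theorem Col.of_stable {A : V → V → Prop} {U : Set V} (h : ∀ x ∈ U, ∀ y ∈ U, ¬ A x y) : Col A U 1 :=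
  ⟨fun _ => 0, fun _ => 0, fun _ => Nat.one_pos, fun x hx y hy hxy => absurd hxy (h x hx y hy)⟩

/-- An out-closed part and the rest may share their colours, since no directed cycle meets both. -/
theorem Col.layer [Finite V] {A : V → V → Prop} {U S : Set V} {c : ℕ} (hS : Col A S c)
    (hU : Col A (U \ S) c) (hout : ∀ x ∈ S, ∀ y, A x y → y ∈ S) : Col A U c := by
  classical
  have := Fintype.ofFinite V
  obtain ⟨f, r, hf, hr⟩ := hS
  obtain ⟨g, s, hg, hs⟩ := hU
  obtain ⟨M, hM⟩ := (Set.finite_range r).bddAbove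
  obtain ⟨N, hN⟩ := (Set.finite_range s).bddBelow
  refine ⟨fun v => if v ∈ S then f v else g v, fun v => if v ∈ S then r v else s v - N + M + 1,
    fun v => ?_, fun x hx y hy hxy e => ?_⟩
  · have := hf v
    have := hg v
    dsimp only
    split_ifs <;> omega
  · by_cases hxS : x ∈ S <;> by_cases hyS : y ∈ S <;> simp only [hxS, hyS, if_true, if_false] at e ⊢
    · exact hr x hxS y hyS hxy e
    · exact absurd (hout x hxS y hxy) hyS
    · have h1 : r y ≤ M := hM ⟨y, rfl⟩
      have h2 : N ≤ s x := hN ⟨x, rfl⟩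
      omega
    · have := hs x ⟨hx, hxS⟩ y ⟨hy, hyS⟩ hxy e
      omega

/-- If no vertex starts a walk `v → u → t` to two vertices of larger index, two colours suffice:
separate the vertices entered from a smaller index from the others. In each class the index
decreases along arcs. -/
theorem col_two {A : V → V → Prop} {U : Set V} (ι : V → ℕ)
    (h1 : ∀ x ∈ U, ∀ y ∈ U, A x y → ι x ≠ ι y)
    (h2 : ∀ v ∈ U, ∀ u ∈ U, ∀ t ∈ U, A v u → A u t → ι v < ι u → ι v < ι t → False) :
    Col A U 2 := by
  classical
  refine ⟨fun u => if ∃ v ∈ U, A v u ∧ ι v < ι u then 1 else 0, fun v => ι v, fun v => ?_,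
    fun x hx y hy hxy e => ?_⟩
  · dsimp only
    split_ifs <;> omega
  · dsimp only at e ⊢
    by_contra hlt
    have h3 := h1 x hx y hy hxy
    have h4 : ι x < ι y := by omega
    rw [if_pos (⟨x, hx, hxy, h4⟩ : ∃ v ∈ U, A v y ∧ ι v < ι y)] at e
    by_cases h5 : ∃ v ∈ U, A v x ∧ ι v < ι x
    · obtain ⟨v, hv, hvx, h6⟩ := h5
      exact h2 v hv x hx y hy hvx hxy h6 (h6.trans h4)
    · rw [if_neg h5] at e
      omega

/-- Half of `col_five`: `p u` is an in-neighbour of `u`, of smaller index, coming first among the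
neighbours of `u` in the order `ρ` refining `ι`. Indexing `u` by `ρ (p u)` reduces to `col_two`. -/
theorem col_five_half {A : V → V → Prop} (tri : ∀ a b c, Adj A a b → Adj A b c → Adj A a c → False)
    {U T : Set V} (hTU : T ⊆ U) (ι ρ : V → ℕ) (hρ : Function.Injective ρ)
    (hmono : ∀ v w, ρ v < ρ w → ι v ≤ ι w) (p : V → V)
    (hp : ∀ u ∈ T, p u ∈ U ∧ A (p u) u ∧ ι (p u) < ι u ∧ ∀ y ∈ U, Adj A y u → ρ (p u) ≤ ρ y)
    (hP : ∀ v ∈ U, ∀ x ∈ U, ∀ y ∈ U, ∀ z ∈ U, A v x → A x y → A y z →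
      ι v < ι x → ι v < ι y → ι v < ι z → Adj A v z) :
    Col A T 2 := by
  refine col_two (fun u => ρ (p u)) (fun x hx y hy hxy e => ?_)
    (fun v hv u hu t ht hvu hut h1 h2 => ?_)
  · have e' := hρ e
    have hx' := (hp x hx).2.1
    rw [e'] at hx'
    exact tri _ _ _ (Or.inl hx') (Or.inl hxy) (Or.inl (hp y hy).2.1)
  · obtain ⟨a1, a2, a3, -⟩ := hp v hv
    obtain ⟨b1, b2, b3, -⟩ := hp u hu
    obtain ⟨c1, c2, c3, c4⟩ := hp t ht
    have := hmono _ _ h1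
    have := hmono _ _ h2
    have h3 := hP (p v) a1 v (hTU hv) u (hTU hu) t (hTU ht) a2 hvu hut a3 (by omega) (by omega)
    have := c4 _ a1 h3
    omega

/-- If the last vertex of each walk `v → x → y → z` with `x`, `y`, `z` of larger index than `v` is
adjacent to `v`, and dually, then five colours suffice. One is for the vertices of smaller index
than all their neighbours. The others have a first neighbour, with respect to a linear order
refining the index, and are split according to the direction of the arc joining them to it. -/
theorem col_five [Finite V] {A : V → V → Prop}
    (tri : ∀ a b c, Adj A a b → Adj A b c → Adj A a c → False) {U : Set V} (ι : V → ℕ)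
    (h1 : ∀ x ∈ U, ∀ y ∈ U, A x y → ι x ≠ ι y)
    (hP : ∀ v ∈ U, ∀ x ∈ U, ∀ y ∈ U, ∀ z ∈ U, A v x → A x y → A y z →
      ι v < ι x → ι v < ι y → ι v < ι z → Adj A v z)
    (hS : ∀ v ∈ U, ∀ x ∈ U, ∀ y ∈ U, ∀ z ∈ U, A x v → A y x → A z y →
      ι v < ι x → ι v < ι y → ι v < ι z → Adj A v z) :
    Col A U 5 := by
  classical
  obtain ⟨N, ⟨e⟩⟩ := Finite.exists_equiv_fin V
  let ρ : V → ℕ := fun v => ι v * N + e v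
  have hle : ∀ v w, ι v < ι w → ρ v < ρ w := by
    intro v w h
    have h2 : (ι v + 1) * N ≤ ι w * N := Nat.mul_le_mul_right N h
    have h3 := (e v).isLt
    rw [add_mul] at h2
    show ι v * N + e v < ι w * N + e w
    omega
  have hmono : ∀ v w, ρ v < ρ w → ι v ≤ ι w := by
    intro v w h
    by_contra hlt
    exact absurd (hle w v (by omega)) (by omega)
  have hρ : Function.Injective ρ := by
    intro v w h
    have h2 : ι v = ι w := by
      by_contra hne
      rcases Nat.lt_or_gt_of_ne hne with h3 | h3
      · exact absurd (hle _ _ h3) (by omega)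
      · exact absurd (hle _ _ h3) (by omega)
    have h3 : ι v * N + e v = ι w * N + e w := h
    rw [h2] at h3
    exact e.injective (Fin.ext (by omega))
  let L : Set V := {u | u ∈ U ∧ ∀ y ∈ U, Adj A y u → ι u < ι y}
  have hex : ∀ u, u ∈ U \ L → ∃ p, p ∈ U ∧ Adj A p u ∧ ι p < ι u ∧
      ∀ y ∈ U, Adj A y u → ρ p ≤ ρ y := by
    intro u hu
    have h2 : ∃ y ∈ U, Adj A y u ∧ ¬ ι u < ι y := by
      by_contra hne
      push Not at hne
      exact hu.2 ⟨hu.1, hne⟩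
    obtain ⟨y, hy, hyu, hlt⟩ := h2
    obtain ⟨p, hp, hmin⟩ := Set.exists_min_image {y | y ∈ U ∧ Adj A y u} ρ (Set.toFinite _)
      ⟨y, hy, hyu⟩
    refine ⟨p, hp.1, hp.2, ?_, fun z hz hzu => hmin z ⟨hz, hzu⟩⟩
    have h3 : ι y ≠ ι u := by
      rcases hyu with h | h
      · exact h1 y hy u hu.1 h
      · exact (h1 u hu.1 y hy h).symm
    by_contra h4
    exact absurd (hle y p (by omega)) (by have := hmin y ⟨hy, hyu⟩; omega)
  choose! p hp using hex
  have hL : Col A L 1 := Col.of_stable fun x hx y hy hxy => by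
    have := hx.2 y hy.1 (Or.inr hxy)
    have := hy.2 x hx.1 (Or.inl hxy)
    omega
  have hIn : Col A {u | u ∈ U \ L ∧ A (p u) u} 2 :=
    col_five_half tri (U := U) (fun u hu => hu.1.1) ι ρ hρ hmono p
      (fun u hu => ⟨(hp u hu.1).1, hu.2, (hp u hu.1).2.2⟩) hP
  have hOut : Col A {u | u ∈ U \ L ∧ A u (p u)} 2 := by
    refine Col.rev (col_five_half (A := fun x y => A y x)
      (fun a b c h2 h3 h4 => tri a b c h2.symm h3.symm h4.symm) (U := U) (fun u hu => hu.1.1)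
      ι ρ hρ hmono p (fun u hu => ⟨(hp u hu.1).1, hu.2, (hp u hu.1).2.2.1, fun y hy hyu =>
        (hp u hu.1).2.2.2 y hy hyu.symm⟩) ?_)
    intro v hv x hx y hy z hz a b c d e f
    exact (hS v hv x hx y hy z hz a b c d e f).symm
  refine ((hL.union hIn).union hOut).mono (fun u hu => ?_) (by norm_num)
  by_cases huL : u ∈ L
  · exact Or.inl (Or.inl huL)
  · rcases (hp u ⟨hu, huL⟩).2.1 with h | h
    · exact Or.inl (Or.inr ⟨⟨hu, huL⟩, h⟩)
    · exact Or.inr ⟨⟨hu, huL⟩, h⟩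

/-! ### Structured neighbourhoods -/

/-- `v` has a neighbour in `B`. -/
def NB (A : V → V → Prop) (B : Set V) (v : V) : Prop := ∃ b ∈ B, Adj A b v

/-- If a subset `W` of `B` is nonempty and closed under going two arcs back inside `B`, then each
vertex of `B` lies in `W` or sends an arc to `W`. -/
def Par (A : V → V → Prop) (B : Set V) : Prop :=
  ∀ W : Set V, (∃ w ∈ B, w ∈ W) →
    (∀ p ∈ B, ∀ q ∈ B, ∀ s ∈ B, A p q → A q s → s ∈ W → p ∈ W) →
    ∀ t ∈ B, t ∈ W ∨ ∃ t' ∈ B, A t t' ∧ t' ∈ W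

/-- The three ways in which a vertex `v` can limit the walks among vertices of larger index: it
starts none of length two; it ends none of length two; or those of length three starting or
ending at `v` have their other end adjacent to `v`. Kind `0` is for the neighbours of the initial
closed walk, which have the least index and need no condition. -/
def Kind (A : V → V → Prop) (ι : V → ℕ) (k : ℕ) (v : V) : Prop :=
  (k = 0 ∧ ι v = 0) ∨
  (k = 1 ∧ ∀ x y, A v x → A x y → ι v < ι x → ι v < ι y → False) ∨
  (k = 2 ∧ ∀ x y, A x v → A y x → ι v < ι x → ι v < ι y → False) ∨
  (k = 3 ∧
    (∀ x y z, A v x → A x y → A y z → ι v < ι x → ι v < ι y → ι v < ι z → Adj A v z) ∧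
    (∀ x y z, A x v → A y x → A z y → ι v < ι x → ι v < ι y → ι v < ι z → Adj A v z))

/-- A set `B` built from a short closed walk by successively adding ears. The index `ι v` of a
neighbour `v` of `B` is the stage at which it first becomes a neighbour, and is at least `n`
elsewhere; `ℓ v` is the position on that stage's walk of a vertex adjacent to `v`, so that vertices
with equal `ι` and `ℓ` are nonadjacent; `κ v` is the kind of `v`. -/
structure Ears (A : V → V → Prop) (B : Set V) (n : ℕ) (ι κ ℓ : V → ℕ) : Prop where
  ins : ∀ b ∈ B, ∃ a ∈ B, A a b
  outs : ∀ b ∈ B, ∃ a ∈ B, A b a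
  par : Par A B
  idx : ∀ v, ι v < n ↔ NB A B v
  kap : ∀ v, κ v < 4
  lab : ∀ v, ℓ v < 7
  st : ∀ u v, ι u < n → ι u = ι v → ℓ u = ℓ v → ¬ A u v
  ty : ∀ v, ι v < n → Kind A ι (κ v) v

/-- A closed walk of length at most six starts the construction. For `Par`, going two arcs back
repeatedly from a vertex of `W` reaches `t` or its successor, according to parity. -/
theorem ears_base {A : V → V → Prop} (hA : Good A) {m : ℕ} (hm0 : 0 < m) (hm : m ≤ 6) (w : ℕ → V)
    (hw : ∀ i, A (w i) (w (i + 1))) (hper : ∀ i, w (i + m) = w i) :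
    ∃ n ι κ ℓ, Ears A {v | ∃ i, v = w i} n ι κ ℓ := by
  classical
  have hmul : ∀ k i, w (i + k * m) = w i := by
    intro k
    induction k with
    | zero => simp
    | succ k ih => intro i; rw [add_mul, one_mul, ← add_assoc, hper, ih]
  have hmod : ∀ i, w i = w (i % m) := fun i => by
    conv_lhs => rw [← Nat.mod_add_div i m, mul_comm, hmul]
  set B : Set V := {v | ∃ i, v = w i} with hB
  have hlab : ∀ v, ∃ a, a < 7 ∧ (NB A B v → Adj A (w a) v) := by
    intro v
    by_cases h : NB A B v
    · obtain ⟨b, ⟨i, rfl⟩, hb⟩ := h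
      have := Nat.mod_lt i hm0
      exact ⟨i % m, by omega, fun _ => by rwa [← hmod]⟩
    · exact ⟨0, by norm_num, fun h' => absurd h' h⟩
  choose ℓ hℓ using hlab
  have hidx : ∀ v, (if NB A B v then 0 else 1) < 1 ↔ NB A B v := fun v => by
    split_ifs with h <;> simp [h]
  refine ⟨1, fun v => if NB A B v then 0 else 1, fun _ => 0, ℓ, ⟨?_, ?_, ?_, hidx,
    fun _ => by norm_num, fun v => (hℓ v).1, ?_, ?_⟩⟩
  · rintro _ ⟨i, rfl⟩
    refine ⟨w (i + m - 1), ⟨_, rfl⟩, ?_⟩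
    have := hw (i + m - 1)
    rwa [Nat.sub_add_cancel (by omega), hper] at this
  · rintro _ ⟨i, rfl⟩
    exact ⟨w (i + 1), ⟨_, rfl⟩, hw i⟩
  · rintro W ⟨_, ⟨j, rfl⟩, hj⟩ hW _ ⟨i, rfl⟩
    have hdown : ∀ k a, w (a + 2 * k) ∈ W → w a ∈ W := by
      intro k
      induction k with
      | zero => intro a h; exact h
      | succ k ih =>
        intro a h
        exact ih a (hW _ ⟨_, rfl⟩ _ ⟨_, rfl⟩ _ ⟨_, rfl⟩ (hw _) (hw _) h)
    -- `j` may be replaced by a larger index of the same vertex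
    rw [← hmul (i + 1) j] at hj
    have hge : i + 1 ≤ (i + 1) * m := Nat.le_mul_of_pos_right _ hm0
    generalize (i + 1) * m = M at hj hge
    rcases Nat.even_or_odd' (j + M - i) with ⟨k, hk | hk⟩
    · left
      apply hdown k
      rwa [show i + 2 * k = j + M by omega]
    · right
      refine ⟨w (i + 1), ⟨_, rfl⟩, hw i, hdown k _ ?_⟩
      rwa [show i + 1 + 2 * k = j + M by omega]
  · intro u v hu huv hl hAuv
    have hu' := (hidx u).1 hu
    have hv' := (hidx v).1 (huv ▸ hu)
    have h1 := (hℓ u).2 hu'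
    have h2 := (hℓ v).2 hv'
    rw [hl] at h1
    exact hA.tri _ _ _ h1 (Or.inl hAuv) h2
  · intro v hv
    exact Or.inl ⟨rfl, by dsimp only at hv ⊢; omega⟩

/-- Adding an ear. The interior vertices `w 2, …, w 6` are arbitrary; the two vertices of `B` at
each end of the walk make each new neighbour, through its first or its last neighbour on the walk,
continue a directed walk long enough for the chord condition to bite. -/
theorem ears_step {A : V → V → Prop} (hA : Good A) {B : Set V} {n : ℕ} {ι κ ℓ : V → ℕ}
    (hE : Ears A B n ι κ ℓ) (w : ℕ → V) (hw : ∀ i < 8, A (w i) (w (i + 1)))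
    (h0 : w 0 ∈ B) (h1 : w 1 ∈ B) (h7 : w 7 ∈ B) (h8 : w 8 ∈ B) :
    ∃ n ι κ ℓ, Ears A (B ∪ {v | ∃ i ≤ 8, v = w i}) n ι κ ℓ := by
  classical
  set B' : Set V := B ∪ {v | ∃ i ≤ 8, v = w i} with hB'
  have hsub : B ⊆ B' := Set.subset_union_left
  have hwB : ∀ i ≤ 8, w i ∈ B' := fun i hi => Or.inr ⟨i, hi, rfl⟩
  have hNB : ∀ v, NB A B v → NB A B' v := fun v ⟨b, hb, h⟩ => ⟨b, hsub hb, h⟩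
  -- the first and last neighbours on the ear of a new neighbour
  have hab : ∀ v, ∃ a b : ℕ, NB A B' v → ¬ NB A B v →
      (2 ≤ a ∧ a ≤ 6 ∧ Adj A (w a) v ∧ ∀ i < a, ¬ Adj A (w i) v) ∧
      (2 ≤ b ∧ b ≤ 6 ∧ Adj A (w b) v ∧ ∀ i ≤ 8, b < i → ¬ Adj A (w i) v) := by
    intro v
    by_cases hv : NB A B' v ∧ ¬ NB A B v
    · obtain ⟨⟨c, hc | ⟨i, hi, rfl⟩, hcv⟩, hv2⟩ := hv
      · exact absurd ⟨c, hc, hcv⟩ hv2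
      have hends : ∀ j, j = 0 ∨ j = 1 ∨ j = 7 ∨ j = 8 → ¬ Adj A (w j) v := by
        rintro j (rfl | rfl | rfl | rfl) h
        exacts [hv2 ⟨_, h0, h⟩, hv2 ⟨_, h1, h⟩, hv2 ⟨_, h7, h⟩, hv2 ⟨_, h8, h⟩]
      obtain ⟨a, ⟨ha1, ha2⟩, ha3⟩ := Set.exists_min_image {i | i ≤ 8 ∧ Adj A (w i) v} id
        ((Set.finite_Iic 8).subset fun i h => h.1) ⟨i, hi, hcv⟩
      obtain ⟨b, ⟨hb1, hb2⟩, hb3⟩ := Set.exists_max_image {i | i ≤ 8 ∧ Adj A (w i) v} id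
        ((Set.finite_Iic 8).subset fun i h => h.1) ⟨i, hi, hcv⟩
      have hrange : ∀ j ≤ 8, Adj A (w j) v → 2 ≤ j ∧ j ≤ 6 := by
        intro j hj h
        have := hends j
        by_contra hcon
        exact this (by omega) h
      refine ⟨a, b, fun _ _ => ⟨⟨(hrange a ha1 ha2).1, (hrange a ha1 ha2).2, ha2, fun j hj h => ?_⟩,
        (hrange b hb1 hb2).1, (hrange b hb1 hb2).2, hb2, fun j hj hbj h => ?_⟩⟩
      · exact absurd (ha3 j ⟨by omega, h⟩) (by simp; omega)
      · exact absurd (hb3 j ⟨by omega, h⟩) (by simp; omega)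
    · exact ⟨0, 0, fun h1 h2 => absurd ⟨h1, h2⟩ hv⟩
  choose a b hab using hab
  obtain ⟨ι', hι'⟩ : ∃ ι' : V → ℕ, ι' = fun v =>
    if NB A B v then ι v else if NB A B' v then n else n + 1 := ⟨_, rfl⟩
  obtain ⟨κ', hκ'⟩ : ∃ κ' : V → ℕ, κ' = fun v =>
    if NB A B v then κ v else if A (w (a v)) v then 1 else if A v (w (b v)) then 2 else 3 :=
    ⟨_, rfl⟩
  obtain ⟨ℓ', hℓ'⟩ : ∃ ℓ' : V → ℕ, ℓ' = fun v =>
    if NB A B v then ℓ v else if NB A B' v then a v else 0 := ⟨_, rfl⟩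
  have old : ∀ v, NB A B v → ι' v = ι v := fun v h => by simp [hι', h]
  have new : ∀ v, ¬ NB A B v → NB A B' v → ι' v = n := fun v h h' => by simp [hι', h, h']
  have out : ∀ v, ¬ NB A B' v → ι' v = n + 1 := fun v h => by
    simp [hι', h, mt (hNB v) h]
  have lt_n : ∀ v, ι' v < n → NB A B v := by
    intro v h
    by_contra h'
    by_cases h2 : NB A B' v
    · rw [new v h' h2] at h; omega
    · rw [out v h2] at h; omega
  have gt_old : ∀ v x, NB A B v → ι' v < ι' x → ι v < ι x := by
    intro v x hv h
    rw [old v hv] at h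
    have h3 := (hE.idx v).2 hv
    by_cases hx : NB A B x
    · rwa [old x hx] at h
    · have := mt (hE.idx x).1 hx
      omega
  have idx' : ∀ v, ι' v < n + 1 ↔ NB A B' v := by
    intro v
    constructor
    · intro h
      by_contra h'
      rw [out v h'] at h; omega
    · intro h
      by_cases h' : NB A B v
      · rw [old v h']
        have := (hE.idx v).2 h'
        omega
      · rw [new v h' h]; omega
  have gt_new : ∀ x, n < ι' x → ∀ i ≤ 8, ¬ Adj A (w i) x := by
    intro x hx i hi h
    have := (idx' x).2 ⟨w i, hwB i hi, h⟩
    omega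
  refine ⟨n + 1, ι', κ', ℓ', ⟨?_, ?_, ?_, idx', ?_, ?_, ?_, ?_⟩⟩
  · rintro v (hv | ⟨i, hi, rfl⟩)
    · obtain ⟨c, hc, h⟩ := hE.ins v hv
      exact ⟨c, hsub hc, h⟩
    · rcases i with _ | i
      · obtain ⟨c, hc, h⟩ := hE.ins _ h0
        exact ⟨c, hsub hc, h⟩
      · exact ⟨w i, hwB i (by omega), hw i (by omega)⟩
  · rintro v (hv | ⟨i, hi, rfl⟩)
    · obtain ⟨c, hc, h⟩ := hE.outs v hv
      exact ⟨c, hsub hc, h⟩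
    · rcases Nat.lt_or_ge i 8 with h | h
      · exact ⟨w (i + 1), hwB _ (by omega), hw i h⟩
      · obtain rfl : i = 8 := by omega
        obtain ⟨c, hc, h⟩ := hE.outs _ h8
        exact ⟨c, hsub hc, h⟩
  · intro W hne hW
    have hdown : ∀ i ≤ 8, w i ∈ W → ∃ c ∈ B, c ∈ W := by
      intro i
      induction i using Nat.strong_induction_on with
      | _ i ih =>
        intro hi h
        rcases i with _ | _ | i
        · exact ⟨_, h0, h⟩
        · exact ⟨_, h1, h⟩
        · exact ih i (by omega) (by omega) (hW _ (hwB i (by omega)) _ (hwB (i + 1) (by omega)) _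
            (hwB (i + 2) (by omega)) (hw i (by omega)) (hw (i + 1) (by omega)) h)
    have hB : ∀ t ∈ B, t ∈ W ∨ ∃ t' ∈ B', A t t' ∧ t' ∈ W := by
      intro t ht
      have hne' : ∃ c ∈ B, c ∈ W := by
        obtain ⟨c, hc | ⟨i, hi, rfl⟩, hcW⟩ := hne
        · exact ⟨c, hc, hcW⟩
        · exact hdown i hi hcW
      rcases hE.par W hne' (fun p hp q hq s hs => hW p (hsub hp) q (hsub hq) s (hsub hs)) t ht with
        h | ⟨t', ht', h⟩
      · exact Or.inl h
      · exact Or.inr ⟨t', hsub ht', h⟩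
    have hear : ∀ j ≤ 8, w (8 - j) ∈ W ∨ ∃ t' ∈ B', A (w (8 - j)) t' ∧ t' ∈ W := by
      intro j
      induction j with
      | zero => intro _; exact hB _ h8
      | succ j ih =>
        intro hj
        have harc := hw (8 - (j + 1)) (by omega)
        rw [show 8 - (j + 1) + 1 = 8 - j by omega] at harc
        rcases ih (by omega) with h | ⟨t', ht', h, h'⟩
        · exact Or.inr ⟨_, hwB _ (by omega), harc, h⟩
        · exact Or.inl (hW _ (hwB _ (by omega)) _ (hwB _ (by omega)) _ ht' harc h h')
    rintro t (ht | ⟨i, hi, rfl⟩)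
    · exact hB t ht
    · have := hear (8 - i) (by omega)
      rwa [show 8 - (8 - i) = i by omega] at this
  · intro v
    have := hE.kap v
    simp only [hκ']
    split_ifs <;> omega
  · intro v
    have := hE.lab v
    simp only [hℓ']
    split_ifs with h2 h3
    · exact this
    · have := (hab v h3 h2).1; omega
    · norm_num
  · intro u v hu huv hl hAuv
    have hu2 := (idx' u).1 hu
    have hv2 := (idx' v).1 (huv ▸ hu)
    by_cases hu1 : NB A B u
    · have hv1 : NB A B v := by
        apply lt_n
        rw [← huv, old u hu1]
        exact (hE.idx u).2 hu1
      rw [old u hu1, old v hv1] at huv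
      simp only [hℓ', hu1, hv1, if_true] at hl
      exact hE.st u v ((hE.idx u).2 hu1) huv hl hAuv
    · have hv1 : ¬ NB A B v := by
        intro h
        have h3 := (hE.idx v).2 h
        rw [← old v h, ← huv] at h3
        exact hu1 (lt_n u h3)
      simp only [hℓ', hu1, hv1, hu2, hv2, if_true, if_false] at hl
      have h3 := (hab u hu2 hu1).1.2.2.1
      rw [hl] at h3
      exact hA.tri _ _ _ h3 (Or.inl hAuv) (hab v hv2 hv1).1.2.2.1
  · intro v hv
    have hv2 := (idx' v).1 hv
    by_cases hv1 : NB A B v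
    · have hk := hE.ty v ((hE.idx v).2 hv1)
      have g := gt_old v
      simp only [hκ', hv1, if_true]
      rcases hk with ⟨k0, h⟩ | ⟨k1, h⟩ | ⟨k2, h⟩ | ⟨k3, h, h'⟩
      · exact Or.inl ⟨k0, by rw [old v hv1, h]⟩
      · exact Or.inr (Or.inl ⟨k1, fun x y e f l l' => h x y e f (g x hv1 l) (g y hv1 l')⟩)
      · exact Or.inr (Or.inr (Or.inl ⟨k2, fun x y e f l l' => h x y e f (g x hv1 l) (g y hv1 l')⟩))
      · exact Or.inr (Or.inr (Or.inr ⟨k3,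
          fun x y z e f i l l' l'' => h x y z e f i (g x hv1 l) (g y hv1 l') (g z hv1 l''),
          fun x y z e f i l l' l'' => h' x y z e f i (g x hv1 l) (g y hv1 l') (g z hv1 l'')⟩))
    · obtain ⟨⟨a1, a2, a3, a4⟩, b1, b2, b3, b4⟩ := hab v hv2 hv1
      have hn := new v hv1 hv2
      by_cases c1 : A (w (a v)) v
      · refine Or.inr (Or.inl ⟨by simp [hκ', hv1, c1], fun x y e f l l' => ?_⟩)
        rw [hn] at l l'
        have d1 := hw (a v - 2) (by omega)
        have d2 := hw (a v - 1) (by omega)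
        rw [show a v - 2 + 1 = a v - 1 by omega] at d1
        rw [show a v - 1 + 1 = a v by omega] at d2
        have X := gt_new x l
        have Y := gt_new y l'
        rcases hA.p6 _ _ _ _ _ _ d1 d2 c1 e f with h | h | h | h | h | h
        exacts [a4 _ (by omega) h, X _ (by omega) h, Y _ (by omega) h, X _ (by omega) h,
          Y _ (by omega) h, Y _ (by omega) h]
      by_cases c2 : A v (w (b v))
      · refine Or.inr (Or.inr (Or.inl ⟨by simp [hκ', hv1, c1, c2], fun x y e f l l' => ?_⟩))
        rw [hn] at l l'
        have d1 := hw (b v) (by omega)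
        have d2 := hw (b v + 1) (by omega)
        have X := gt_new x l
        have Y := gt_new y l'
        rcases hA.p6 _ _ _ _ _ _ f e c2 d1 d2 with h | h | h | h | h | h
        exacts [Y _ (by omega) h.symm, X _ (by omega) h.symm, b4 _ (by omega) (by omega) h.symm,
          Y _ (by omega) h.symm, X _ (by omega) h.symm, Y _ (by omega) h.symm]
      · refine Or.inr (Or.inr (Or.inr ⟨by simp [hκ', hv1, c1, c2],
          fun x y z e f i l l' l'' => ?_, fun x y z e f i l l' l'' => ?_⟩))
        all_goals
          rw [hn] at l l' l''
          have X := gt_new x l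
          have Y := gt_new y l'
          have Z := gt_new z l''
        · have d1 := hw (b v - 1) (by omega)
          rw [show b v - 1 + 1 = b v by omega] at d1
          rcases hA.p6 _ _ _ _ _ _ d1 (b3.resolve_right c2) e f i with h | h | h | h | h | h
          exacts [absurd h (X _ (by omega)), absurd h (Y _ (by omega)), h,
            absurd h (Y _ (by omega)), absurd h (Z _ (by omega)), absurd h (Z _ (by omega))]
        · have d1 := hw (a v) (by omega)
          rcases hA.p6 _ _ _ _ _ _ i f e (a3.resolve_left c1) d1 with h | h | h | h | h | h
          exacts [h.symm, absurd h.symm (Y _ (by omega)), absurd h.symm (X _ (by omega)),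
            absurd h.symm (Z _ (by omega)), absurd h.symm (Y _ (by omega)),
            absurd h.symm (Z _ (by omega))]

/-! ### Closed sets -/

/-- There is a walk of length exactly `k` from `x` to `B`. -/
def Back (A : V → V → Prop) (B : Set V) : ℕ → V → Prop
  | 0, x => x ∈ B
  | k + 1, x => ∃ y, A x y ∧ Back A B k y

theorem Back.le {A : V → V → Prop} {B : Set V} (hB : ∀ b ∈ B, ∃ a ∈ B, A b a) {k m : ℕ}
    (hkm : k ≤ m) : ∀ {x : V}, Back A B k x → Back A B m x := by
  induction hkm with
  | refl => exact id
  | step _ ih =>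
    have succ : ∀ j x, Back A B j x → Back A B (j + 1) x := by
      intro j
      induction j with
      | zero => exact fun x hx => (hB x hx).imp fun a h => ⟨h.2, h.1⟩
      | succ j ih' => exact fun x ⟨y, hxy, hy⟩ => ⟨y, hxy, ih' y hy⟩
    exact fun {x} h => succ _ x (ih h)

/-- No walk leaves `B` and returns to it with at most five interior vertices. -/
def Closed (A : V → V → Prop) (B : Set V) : Prop :=
  ∀ b ∈ B, ∀ x, A b x → ∀ k ≤ 5, Back A B k x → x ∈ B

/-- A maximal `B` obtained by adding ears is closed: a returning walk, lengthened inside `B` when it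
is short, is an ear. -/
theorem exists_closed [Finite V] {A : V → V → Prop} (hA : Good A) {B₀ : Set V}
    (h₀ : ∃ n ι κ ℓ, Ears A B₀ n ι κ ℓ) :
    ∃ B, B₀ ⊆ B ∧ (∃ n ι κ ℓ, Ears A B n ι κ ℓ) ∧ Closed A B := by
  obtain ⟨B, hB, hmax⟩ := Finite.exists_le_maximal
    (p := fun B : Set V => ∃ n ι κ ℓ, Ears A B n ι κ ℓ) h₀
  refine ⟨B, hB, hmax.prop, fun b hb x₁ hx₁ k hk hback => ?_⟩
  obtain ⟨n, ι, κ, ℓ, hE⟩ := hmax.prop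
  obtain ⟨x₂, a₂, x₃, a₃, x₄, a₄, x₅, a₅, d, a₆, hd⟩ := Back.le hE.outs hk hback
  obtain ⟨b', hb', hbb⟩ := hE.ins b hb
  obtain ⟨d', hd', hdd⟩ := hE.outs d hd
  have step := ears_step hA hE (fun i => [b', b, x₁, x₂, x₃, x₄, x₅, d, d'].getD i b')
    (by intro i hi; interval_cases i <;> assumption) hb' hb hd hd'
  exact hmax.le_of_ge step Set.subset_union_left (Or.inr ⟨2, by norm_num, rfl⟩)

/-- A directed four-cycle with only its vertex `x` adjacent to `B`, entered from `B` at `x`. -/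
def Danger (A : V → V → Prop) (B : Set V) : Prop :=
  ∃ b ∈ B, ∃ x y z w, x ∉ B ∧ ¬ NB A B y ∧ ¬ NB A B z ∧ ¬ NB A B w ∧
    A b x ∧ A x y ∧ A y z ∧ A z w ∧ A w x

/-- The set formed by `B` and the vertices outside at distance one, two and three from it is
out-closed and needs 143 colours: those in `B` or adjacent to it are grouped by kind and label; the
second layer is indexed by a first in-neighbour in the first layer; the third layer is stable. -/
theorem closed_col [Finite V] {A : V → V → Prop} (hA : Good A) {B : Set V} {n : ℕ} {ι κ ℓ : V → ℕ}
    (hE : Ears A B n ι κ ℓ) (hcl : Closed A B) (hD : ¬ Danger A B) :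
    ∃ S, B ⊆ S ∧ (∀ x ∈ S, ∀ y, A x y → y ∈ S) ∧ Col A S 143 := by
  have hBN : ∀ b ∈ B, NB A B b := fun b hb => by
    obtain ⟨a, ha, h⟩ := hE.ins b hb
    exact ⟨a, ha, Or.inl h⟩
  obtain ⟨L1, hL1⟩ : ∃ L : Set V, L = {x | x ∉ B ∧ ∃ b ∈ B, A b x} := ⟨_, rfl⟩
  obtain ⟨L2, hL2⟩ : ∃ L : Set V, L = {y | y ∉ B ∧ y ∉ L1 ∧ ∃ x ∈ L1, A x y} := ⟨_, rfl⟩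
  obtain ⟨L3, hL3⟩ : ∃ L : Set V, L = {z | z ∉ B ∧ z ∉ L1 ∧ z ∉ L2 ∧ ∃ y ∈ L2, A y z} := ⟨_, rfl⟩
  have mem1 : ∀ x, x ∈ L1 ↔ x ∉ B ∧ ∃ b ∈ B, A b x := fun x => by rw [hL1]; rfl
  have mem2 : ∀ x, x ∈ L2 ↔ x ∉ B ∧ x ∉ L1 ∧ ∃ y ∈ L1, A y x := fun x => by rw [hL2]; rfl
  have mem3 : ∀ x, x ∈ L3 ↔ x ∉ B ∧ x ∉ L1 ∧ x ∉ L2 ∧ ∃ y ∈ L2, A y x :=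
    fun x => by rw [hL3]; rfl
  have noback : ∀ x ∈ L1, ∀ k ≤ 5, ¬ Back A B k x := by
    intro x hx k hk h
    obtain ⟨hxB, b, hb, hbx⟩ := (mem1 x).1 hx
    exact hxB (hcl b hb x hbx k hk h)
  -- a vertex outside `B ∪ L1` is not entered from `B`
  have nbout : ∀ v, v ∉ B → v ∉ L1 → NB A B v → ∃ d ∈ B, A v d := by
    rintro v h1 h2 ⟨d, hd, h | h⟩
    · exact absurd ((mem1 v).2 ⟨h1, d, hd, h⟩) h2
    · exact ⟨d, hd, h⟩
  have nb2 : ∀ y ∈ L2, ¬ NB A B y := by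
    intro y hy h
    obtain ⟨h1, h2, x, hx, hxy⟩ := (mem2 y).1 hy
    obtain ⟨d, hd, hyd⟩ := nbout y h1 h2 h
    exact noback x hx 2 (by norm_num) ⟨y, hxy, d, hyd, hd⟩
  have nb3 : ∀ z ∈ L3, ¬ NB A B z := by
    intro z hz h
    obtain ⟨h1, h2, -, y, hy, hyz⟩ := (mem3 z).1 hz
    obtain ⟨-, -, x, hx, hxy⟩ := (mem2 y).1 hy
    obtain ⟨d, hd, hzd⟩ := nbout z h1 h2 h
    exact noback x hx 3 (by norm_num) ⟨y, hxy, z, hyz, d, hzd, hd⟩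
  -- with no danger, a walk leaving through `x` and avoiding the neighbours of `B` afterwards
  -- yields an arc from `x` to its last vertex
  have skip : ∀ x ∈ L1, ∀ y z w, ¬ NB A B y → ¬ NB A B z → ¬ NB A B w → A x y → A y z → A z w →
      A x w := by
    intro x hx y z w hy hz hw hxy hyz hzw
    obtain ⟨hxB, b, hb, hbx⟩ := (mem1 x).1 hx
    obtain ⟨b', hb', hbb⟩ := hE.ins b hb
    rcases hA.p6 _ _ _ _ _ _ hbb hbx hxy hyz hzw with h | h | h | h | h | h
    · exact absurd ⟨_, hb', h⟩ hy
    · exact absurd ⟨_, hb, h⟩ hz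
    · exact h.resolve_right fun h' =>
        hD ⟨b, hb, x, y, z, w, hxB, hy, hz, hw, hbx, hxy, hyz, hzw, h'⟩
    · exact absurd ⟨_, hb', h⟩ hz
    · exact absurd ⟨_, hb, h⟩ hw
    · exact absurd ⟨_, hb', h⟩ hw
  refine ⟨{v | NB A B v ∧ (v ∈ B ∨ v ∈ L1)} ∪ L2 ∪ L3,
    fun b hb => Or.inl (Or.inl ⟨hBN b hb, Or.inl hb⟩), ?_, ?_⟩
  · have in1 : ∀ x ∈ B, ∀ y, A x y → y ∈ B ∨ y ∈ L1 := fun x hx y hxy =>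
      or_iff_not_imp_left.2 fun h => (mem1 y).2 ⟨h, x, hx, hxy⟩
    have nb1 : ∀ x, (x ∈ B ∨ x ∈ L1) → NB A B x := by
      rintro x (h | h)
      · exact hBN x h
      · obtain ⟨-, b, hb, hbx⟩ := (mem1 x).1 h
        exact ⟨b, hb, Or.inl hbx⟩
    have low : ∀ x, (x ∈ B ∨ x ∈ L1) →
        x ∈ {v | NB A B v ∧ (v ∈ B ∨ v ∈ L1)} ∪ L2 ∪ L3 := fun x hx =>
      Or.inl (Or.inl ⟨nb1 x hx, hx⟩)
    rintro x ((⟨-, hx | hx⟩ | hx) | hx) y hxy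
    · exact low y (in1 x hx y hxy)
    · by_cases hy : y ∈ B ∨ y ∈ L1
      · exact low y hy
      · push Not at hy
        exact Or.inl (Or.inr ((mem2 y).2 ⟨hy.1, hy.2, x, hx, hxy⟩))
    · by_cases hy : y ∈ B ∨ y ∈ L1
      · exact low y hy
      by_cases hy2 : y ∈ L2
      · exact Or.inl (Or.inr hy2)
      · push Not at hy
        exact Or.inr ((mem3 y).2 ⟨hy.1, hy.2, hy2, x, hx, hxy⟩)
    · by_cases hy : y ∈ B ∨ y ∈ L1
      · exact low y hy
      push Not at hy
      obtain ⟨-, -, -, v, hv, hvx⟩ := (mem3 x).1 hx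
      obtain ⟨-, -, u, hu, huv⟩ := (mem2 v).1 hv
      have hyN : ¬ NB A B y := by
        intro h
        obtain ⟨d, hd, hyd⟩ := nbout y hy.1 hy.2 h
        exact noback u hu 4 (by norm_num) ⟨v, huv, x, hvx, y, hxy, d, hyd, hd⟩
      exact Or.inl (Or.inr ((mem2 y).2
        ⟨hy.1, hy.2, u, hu, skip u hu v x y (nb2 v hv) (nb3 x hx) hyN huv hvx hxy⟩))
  · have c1 : Col A {v | NB A B v ∧ (v ∈ B ∨ v ∈ L1)} (4 * (7 * 5)) := by
      refine Col.fiber κ hE.kap fun k _ => Col.fiber ℓ hE.lab fun l _ => ?_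
      set U : Set V := {v | v ∈ {v | v ∈ {v | NB A B v ∧ (v ∈ B ∨ v ∈ L1)} ∧ κ v = k} ∧ ℓ v = l}
      have hU : ∀ v ∈ U, ι v < n ∧ κ v = k ∧ ℓ v = l := fun v hv =>
        ⟨(hE.idx v).2 hv.1.1.1, hv.1.2, hv.2⟩
      have hst : ∀ x ∈ U, ∀ y ∈ U, A x y → ι x ≠ ι y := fun x hx y hy hxy e =>
        hE.st x y (hU x hx).1 e ((hU x hx).2.2.trans (hU y hy).2.2.symm) hxy
      have hty : ∀ v ∈ U, Kind A ι k v := fun v hv => by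
        have := hE.ty v (hU v hv).1
        rwa [(hU v hv).2.1] at this
      have hk : k = 0 ∨ k = 1 ∨ k = 2 ∨ k = 3 := by omega
      rcases hk with rfl | rfl | rfl | rfl
      · refine (Col.of_stable fun x hx y hy hxy => ?_).mono subset_rfl (by norm_num : 1 ≤ 5)
        have h1 := hty x hx
        have h2 := hty y hy
        simp only [Kind, true_and, zero_ne_one, false_and, or_false, OfNat.zero_ne_ofNat] at h1 h2
        exact hst x hx y hy hxy (h1.trans h2.symm)
      · refine (col_two ι hst fun v hv x _ y _ e f l l' => ?_).mono subset_rfl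
          (by norm_num : 2 ≤ 5)
        have h1 := hty v hv
        simp only [Kind, true_and, false_and, or_false, false_or, one_ne_zero,
          OfNat.one_ne_ofNat] at h1
        exact h1 x y e f l l'
      · refine (Col.rev (col_two ι (fun x hx y hy h => (hst y hy x hx h).symm)
          fun v hv x _ y _ e f l l' => ?_)).mono subset_rfl (by norm_num : 2 ≤ 5)
        have h1 := hty v hv
        simp only [Kind, true_and, false_and, or_false, false_or, OfNat.ofNat_ne_zero,
          OfNat.ofNat_ne_one, Nat.reduceEqDiff] at h1
        exact h1 x y e f l l'
      · have h3 : ∀ v ∈ U, _ := fun v hv => by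
          have h1 := hty v hv
          simp only [Kind, true_and, false_and, false_or, Nat.reduceEqDiff,
            OfNat.ofNat_ne_zero, OfNat.ofNat_ne_one] at h1
          exact h1
        exact col_five hA.tri ι hst
          (fun v hv x _ y _ z _ e f g l l' l'' => (h3 v hv).1 x y z e f g l l' l'')
          (fun v hv x _ y _ z _ e f g l l' l'' => (h3 v hv).2 x y z e f g l l' l'')
    have c2 : Col A L2 2 := by
      obtain ⟨N, ⟨e⟩⟩ := Finite.exists_equiv_fin V
      have hex : ∀ y ∈ L2, ∃ p, p ∈ L1 ∧ A p y ∧ ∀ x ∈ L1, A x y → e p ≤ e x := by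
        intro y hy
        obtain ⟨-, -, x, hx, hxy⟩ := (mem2 y).1 hy
        obtain ⟨p, hp, hmin⟩ := Set.exists_min_image {x | x ∈ L1 ∧ A x y} e (Set.toFinite _)
          ⟨x, hx, hxy⟩
        exact ⟨p, hp.1, hp.2, fun z hz hzy => hmin z ⟨hz, hzy⟩⟩
      choose! p hp using hex
      refine col_two (fun y => (e (p y) : ℕ)) (fun x hx y hy hxy h => ?_)
        fun v hv u hu t ht hvu hut _ h => ?_
      · have h' := e.injective (Fin.ext h)
        have hx' := (hp x hx).2.1
        rw [h'] at hx'
        exact hA.tri _ _ _ (Or.inl hx') (Or.inl hxy) (Or.inl (hp y hy).2.1)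
      · obtain ⟨a1, a2, -⟩ := hp v hv
        have h1 := (hp t ht).2.2 (p v) a1
          (skip _ a1 v u t (nb2 v hv) (nb2 u hu) (nb2 t ht) a2 hvu hut)
        exact absurd h1 (not_le.2 h)
    have c3 : Col A L3 1 := by
      refine Col.of_stable fun z hz z' hz' h => ?_
      obtain ⟨-, -, -, y, hy, hyz⟩ := (mem3 z).1 hz
      obtain ⟨-, -, x, hx, hxy⟩ := (mem2 y).1 hy
      obtain ⟨h1, h2, h3, -⟩ := (mem3 z').1 hz'
      exact h3 ((mem2 z').2 ⟨h1, h2, x, hx,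
        skip x hx y z z' (nb2 y hy) (nb3 z hz) (nb3 z' hz') hxy hyz h⟩)
    exact (c1.union c2).union c3

/-! ### The initial closed walk -/

/-- The sequence `w` runs periodically along a closed walk of positive length `m`. -/
def ClosedWalk (A : V → V → Prop) (m : ℕ) (w : ℕ → V) : Prop :=
  0 < m ∧ (∀ i, A (w i) (w (i + 1))) ∧ ∀ i, w (i + m) = w i

theorem closedWalk_of {A : V → V → Prop} (m : ℕ) (u : ℕ → V)
    (hu : ∀ i < m, A (u i) (u (i + 1))) (hlast : A (u m) (u 0)) :
    ∃ w, ClosedWalk A (m + 1) w ∧ ∀ i ≤ m, w i = u i := by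
  refine ⟨fun i => u (i % (m + 1)), ⟨by omega, fun i => ?_, fun i => by simp⟩,
    fun i hi => congrArg u (Nat.mod_eq_of_lt (by omega))⟩
  have h1 := Nat.mod_lt i (show 0 < m + 1 by omega)
  dsimp only
  rw [Nat.add_mod]
  generalize i % (m + 1) = j at h1 ⊢
  rcases Nat.lt_or_ge j m with h | h
  · rcases Nat.eq_zero_or_pos m with rfl | hm
    · omega
    · rw [Nat.mod_eq_of_lt (show 1 < m + 1 by omega), Nat.mod_eq_of_lt (show j + 1 < m + 1 by omega)]
      exact hu j h
  · obtain rfl : j = m := by omega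
    rw [Nat.add_mod_mod, Nat.mod_self]
    exact hlast

theorem exists_closedWalk [Finite V] {A : V → V → Prop} {U : Set V} (hne : U.Nonempty)
    (hU : ∀ v ∈ U, ∃ u ∈ U, A v u) : ∃ m w, ClosedWalk A m w := by
  obtain ⟨v, hv⟩ := hne
  choose! g hg using hU
  have hmem : ∀ i, g^[i] v ∈ U := by
    intro i
    induction i with
    | zero => exact hv
    | succ i ih => rw [Function.iterate_succ_apply']; exact (hg _ ih).1
  obtain ⟨i, j, hij, e⟩ := Finite.exists_ne_map_eq_of_infinite fun i : ℕ => g^[i] v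
  wlog hlt : i < j generalizing i j
  · exact this j i hij.symm e.symm (by omega)
  refine ⟨j - i, fun k => g^[k + i] v, by omega, fun k => ?_, fun k => ?_⟩
  · dsimp only
    rw [show k + 1 + i = (k + i) + 1 by omega, Function.iterate_succ_apply']
    exact (hg _ (hmem _)).2
  · dsimp only at e ⊢
    rw [show k + (j - i) + i = k + j by omega, Function.iterate_add_apply, ← e,
      ← Function.iterate_add_apply]

/-- A shortest closed walk has length at most six, as a chord of six consecutive vertices would
shorten a longer one. -/
theorem exists_short_closedWalk {A : V → V → Prop} (hA : Good A)
    (h : ∃ m w, ClosedWalk A m w) : ∃ m ≤ 6, ∃ w, ClosedWalk A m w := by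
  classical
  obtain ⟨w, hm0, hw, hper⟩ := Nat.find_spec h
  have hmin : ∀ k < Nat.find h, ∀ w, ¬ ClosedWalk A k w := fun k hk w hw =>
    Nat.find_min h hk ⟨w, hw⟩
  by_contra hcon
  have hm : 7 ≤ Nat.find h := by
    by_contra h'
    exact hcon ⟨_, by omega, w, hm0, hw, hper⟩
  generalize Nat.find h = m at *
  have nochord : ∀ i d, 2 ≤ d → d ≤ 5 → ¬ Adj A (w i) (w (i + d)) := by
    rintro i d h2 h5 (hc | hc)
    · obtain ⟨u, hu, -⟩ := closedWalk_of (A := A) (m - d)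
        (fun k => if k = 0 then w i else w (i + d + k - 1)) (fun k hk => by
          rcases k with _ | k
          · simpa using hc
          · have := hw (i + d + k)
            simpa [← add_assoc] using this)
        (by
          have := hw (i + m - 1)
          rw [Nat.sub_add_cancel (by omega), hper] at this
          simpa [show m - d ≠ 0 by omega, show i + d + (m - d) - 1 = i + m - 1 by omega] using this)
      exact hmin _ (by omega) u hu
    · obtain ⟨u, hu, -⟩ := closedWalk_of (A := A) d (fun k => w (i + k)) (fun k _ => hw (i + k)) hc
      exact hmin _ (by omega) u hu
  rcases hA.p6 _ _ _ _ _ _ (hw 0) (hw 1) (hw 2) (hw 3) (hw 4) with h | h | h | h | h | h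
  exacts [nochord 0 3 (by norm_num) (by norm_num) h, nochord 1 3 (by norm_num) (by norm_num) h,
    nochord 2 3 (by norm_num) (by norm_num) h, nochord 0 4 (by norm_num) (by norm_num) h,
    nochord 1 4 (by norm_num) (by norm_num) h, nochord 0 5 (by norm_num) (by norm_num) h]

/-- A directed four-cycle, given by its vertices in cyclic order. -/
structure Quad (A : V → V → Prop) where
  (a b c d : V)
  (ab : A a b) (bc : A b c) (cd : A c d) (da : A d a)

namespace Quad

variable {A : V → V → Prop}

/-- The vertex set of a four-cycle. -/
def verts (Q : Quad A) : Set V := {Q.a, Q.b, Q.c, Q.d}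

/-- The four-cycles sending an arc to `Q`. -/
def entering (Q : Quad A) : Set (Quad A) := {P | ∃ u ∈ P.verts, ∃ v ∈ Q.verts, A u v}

instance [Finite V] : Finite (Quad A) :=
  Finite.of_injective (fun Q : Quad A => (Q.a, Q.b, Q.c, Q.d)) fun P Q h => by
    cases P; cases Q; simp only [Prod.mk.injEq] at h; obtain ⟨rfl, rfl, rfl, rfl⟩ := h; rfl

theorem exists_pred (Q : Quad A) {v : V} (hv : v ∈ Q.verts) : ∃ u ∈ Q.verts, A u v := by
  rcases hv with rfl | rfl | rfl | rfl
  exacts [⟨Q.d, by simp [verts], Q.da⟩, ⟨Q.a, by simp [verts], Q.ab⟩, ⟨Q.b, by simp [verts], Q.bc⟩,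
    ⟨Q.c, by simp [verts], Q.cd⟩]

end Quad

/-- If `B` contains a four-cycle entered by as many four-cycles as possible, there is no danger: the
four-cycle of a danger would be entered by all of these, and by itself as well. -/
theorem not_danger [Finite V] {A : V → V → Prop} (hA : Good A) {B : Set V} {n : ℕ} {ι κ ℓ : V → ℕ}
    (hE : Ears A B n ι κ ℓ) (hcl : Closed A B) (Q : Quad A) (hQB : Q.verts ⊆ B)
    (hQ : ∀ P : Quad A, P.entering.ncard ≤ Q.entering.ncard) : ¬ Danger A B := by
  rintro ⟨b, hb, x, y, z, w, hxB, hy, hz, hw, hbx, hxy, hyz, hzw, hwx⟩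
  have noback : ∀ k ≤ 5, ¬ Back A B k x := fun k hk h => hxB (hcl b hb x hbx k hk h)
  let R : Quad A := ⟨x, y, z, w, hxy, hyz, hzw, hwx⟩
  have hxR : x ∈ R.verts := by simp [Quad.verts, R]
  have hyR : y ∈ R.verts := by simp [Quad.verts, R]
  have hzR : z ∈ R.verts := by simp [Quad.verts, R]
  -- the in-neighbours of `x` in `B` are closed under going two arcs back
  have hpar := hE.par {p | A p x} ⟨b, hb, hbx⟩ (by
    intro p hp q hq s hs hpq hqs hsx
    rcases hA.p6 _ _ _ _ _ _ hpq hqs hsx hxy hyz with h | h | h | h | h | h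
    · exact h.resolve_right fun h' => noback 1 (by norm_num) ⟨p, h', hp⟩
    exacts [absurd ⟨_, hq, h⟩ hy, absurd ⟨_, hs, h⟩ hz, absurd ⟨_, hp, h⟩ hy,
      absurd ⟨_, hq, h⟩ hz, absurd ⟨_, hp, h⟩ hz])
  have hsub : Q.entering ⊆ R.entering := by
    rintro P ⟨u, hu, s, hs, hus⟩
    have hsB := hQB hs
    obtain ⟨u', hu', huu⟩ := P.exists_pred hu
    -- an arc between `P` and the danger goes towards the danger, or else `x` would reach `B`
    have enter : ∀ p ∈ P.verts, ∀ q ∈ R.verts, A p q → P ∈ R.entering := fun p hp q hq h =>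
      ⟨p, hp, q, hq, h⟩
    have ux : Adj A u x → P ∈ R.entering := by
      rintro (h | h)
      · exact enter u hu x hxR h
      · exact absurd ⟨u, h, s, hus, hsB⟩ (noback 2 (by norm_num))
    have uy : Adj A u y → P ∈ R.entering := by
      rintro (h | h)
      · exact enter u hu y hyR h
      · exact absurd ⟨y, hxy, u, h, s, hus, hsB⟩ (noback 3 (by norm_num))
    have uz : Adj A u z → P ∈ R.entering := by
      rintro (h | h)
      · exact enter u hu z hzR h
      · exact absurd ⟨y, hxy, z, hyz, u, h, s, hus, hsB⟩ (noback 4 (by norm_num))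
    rcases hpar s hsB with hsx | ⟨t, ht, hst, htx⟩
    · rcases hA.p6 _ _ _ _ _ _ huu hus hsx hxy hyz with h | h | h | h | h | h
      · rcases h with h | h
        · exact enter u' hu' x hxR h
        · exact absurd ⟨u', h, u, huu, s, hus, hsB⟩ (noback 3 (by norm_num))
      · exact uy h
      · exact absurd ⟨_, hsB, h⟩ hz
      · rcases h with h | h
        · exact enter u' hu' y hyR h
        · exact absurd ⟨y, hxy, u', h, u, huu, s, hus, hsB⟩ (noback 4 (by norm_num))
      · exact uz h
      · rcases h with h | h
        · exact enter u' hu' z hzR h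
        · exact absurd ⟨y, hxy, z, hyz, u', h, u, huu, s, hus, hsB⟩ (noback 5 (by norm_num))
    · rcases hA.p6 _ _ _ _ _ _ hus hst htx hxy hyz with h | h | h | h | h | h
      exacts [ux h, absurd ⟨_, hsB, h⟩ hy, absurd ⟨_, ht, h⟩ hz, uy h, absurd ⟨_, hsB, h⟩ hz, uz h]
  have hR : R ∈ R.entering := ⟨x, hxR, y, hyR, hxy⟩
  have hRQ : R ∉ Q.entering := by
    rintro ⟨u, hu, s, hs, hus⟩
    have hsB := hQB hs
    rcases hu with rfl | rfl | rfl | rfl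
    exacts [noback 1 (by norm_num) ⟨s, hus, hsB⟩, hy ⟨s, hsB, Or.inr hus⟩, hz ⟨s, hsB, Or.inr hus⟩,
      hw ⟨s, hsB, Or.inr hus⟩]
  have hlt := Set.ncard_lt_ncard (ssubset_of_subset_of_ne hsub fun e => hRQ (e ▸ hR))
    (Set.toFinite _)
  exact absurd (hQ R) (not_le.2 hlt)

/-! ### The global induction -/

/-- The initial closed walk is a four-cycle entered by the most four-cycles, which excludes dangers
by `not_danger`; without four-cycles there is no danger, and a shortest closed walk will do. -/
theorem exists_outclosed [Finite V] {A : V → V → Prop} (hA : Good A) {U : Set V} (hne : U.Nonempty)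
    (hU : ∀ v ∈ U, ∃ u ∈ U, A v u) :
    ∃ S, (∃ s ∈ S, ∃ t, A s t) ∧ (∀ x ∈ S, ∀ y, A x y → y ∈ S) ∧ Col A S 143 := by
  have key : ∃ B₀ : Set V, B₀.Nonempty ∧ (∃ n ι κ ℓ, Ears A B₀ n ι κ ℓ) ∧
      ∀ B, B₀ ⊆ B → (∃ n ι κ ℓ, Ears A B n ι κ ℓ) → Closed A B → ¬ Danger A B := by
    by_cases hq : Nonempty (Quad A)
    · obtain ⟨Q, hQ⟩ := Finite.exists_max fun Q : Quad A => Q.entering.ncard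
      obtain ⟨w, ⟨h0, hw, hper⟩, hval⟩ := closedWalk_of (A := A) 3
        (fun i => [Q.a, Q.b, Q.c, Q.d].getD i Q.a)
        (by
          intro i hi
          interval_cases i
          exacts [Q.ab, Q.bc, Q.cd]) Q.da
      refine ⟨{v | ∃ i, v = w i}, ⟨w 0, 0, rfl⟩, ears_base hA h0 (by norm_num) w hw hper, ?_⟩
      rintro B hB ⟨n, ι, κ, ℓ, hE⟩ hcl
      refine not_danger hA hE hcl Q ?_ hQ
      rintro v (rfl | rfl | rfl | rfl)
      exacts [hB ⟨0, (hval 0 (by norm_num)).symm⟩, hB ⟨1, (hval 1 (by norm_num)).symm⟩,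
        hB ⟨2, (hval 2 (by norm_num)).symm⟩, hB ⟨3, (hval 3 (by norm_num)).symm⟩]
    · obtain ⟨m, hm, w, h0, hw, hper⟩ := exists_short_closedWalk hA (exists_closedWalk hne hU)
      refine ⟨{v | ∃ i, v = w i}, ⟨w 0, 0, rfl⟩, ears_base hA h0 hm w hw hper, ?_⟩
      rintro B - - - ⟨b, -, x, y, z, v, -, -, -, -, -, h1, h2, h3, h4⟩
      exact hq ⟨⟨x, y, z, v, h1, h2, h3, h4⟩⟩
  obtain ⟨B₀, ⟨s, hs⟩, h₀, hD⟩ := key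
  obtain ⟨B, hB, hEx, hcl⟩ := exists_closed hA h₀
  obtain ⟨n, ι, κ, ℓ, hE⟩ := hEx
  obtain ⟨S, hBS, hout, hcol⟩ := closed_col hA hE hcl (hD B hB ⟨n, ι, κ, ℓ, hE⟩ hcl)
  obtain ⟨t, -, hst⟩ := hE.outs s (hB hs)
  exact ⟨S, ⟨s, hBS (hB hs), t, hst⟩, hout, hcol⟩

theorem Good.res {A : V → V → Prop} (hA : Good A) (U : Set V) : Good (Res A U) := by
  have hadj : ∀ {x y}, Adj (Res A U) x y → Adj A x y := fun h => h.imp And.left And.left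
  have hback : ∀ {x y}, x ∈ U → y ∈ U → Adj A x y → Adj (Res A U) x y := fun hx hy h =>
    h.imp (fun h => ⟨h, hx, hy⟩) fun h => ⟨h, hy, hx⟩
  refine ⟨fun u v h h' => hA.ori u v h.1 h'.1,
    fun a b c h h' h'' => hA.tri a b c (hadj h) (hadj h') (hadj h''),
    fun a b c d e f h1 h2 h3 h4 h5 => ?_⟩
  rcases hA.p6 _ _ _ _ _ _ h1.1 h2.1 h3.1 h4.1 h5.1 with h | h | h | h | h | h
  exacts [Or.inl (hback h1.2.1 h4.2.1 h), Or.inr (Or.inl (hback h2.2.1 h5.2.1 h)),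
    Or.inr (Or.inr (Or.inl (hback h3.2.1 h5.2.2 h))),
    Or.inr (Or.inr (Or.inr (Or.inl (hback h1.2.1 h5.2.1 h)))),
    Or.inr (Or.inr (Or.inr (Or.inr (Or.inl (hback h2.2.1 h5.2.2 h))))),
    Or.inr (Or.inr (Or.inr (Or.inr (Or.inr (hback h1.2.1 h5.2.2 h)))))]

theorem col_all [Finite V] {A : V → V → Prop} (hA : Good A) (U : Set V) : Col A U 143 := by
  induction hn : U.ncard using Nat.strong_induction_on generalizing U with
  | _ n ih =>
    have lift : ∀ {W}, Col (Res A U) W 143 → W ⊆ U → Col A W 143 := by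
      rintro W ⟨f, r, hf, hr⟩ hWU
      exact ⟨f, r, hf, fun x hx y hy h => hr x hx y hy ⟨h, hWU hx, hWU hy⟩⟩
    -- it suffices to colour an out-closed part of `U`
    have step : ∀ S, (∃ s ∈ S, s ∈ U) → (∀ x ∈ S, ∀ y, Res A U x y → y ∈ S) →
        Col (Res A U) S 143 → Col A U 143 := by
      rintro S ⟨s, hsS, hsU⟩ hout hS
      refine lift (Col.layer hS ?_ hout) subset_rfl
      obtain ⟨f, r, hf, hr⟩ := ih (U \ S).ncard (by
        rw [← hn]
        exact Set.ncard_lt_ncard ⟨Set.sdiff_subset, fun h => (h hsU).2 hsS⟩ (Set.toFinite _)) _ rfl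
      exact ⟨f, r, hf, fun x hx y hy h => hr x hx y hy h.1⟩
    by_cases hsink : ∃ v ∈ U, ∀ u ∈ U, ¬ A v u
    · obtain ⟨v, hv, hsink⟩ := hsink
      refine step {v} ⟨v, rfl, hv⟩ ?_ ((Col.of_stable ?_).mono subset_rfl (by norm_num : 1 ≤ 143))
      · rintro _ rfl y h
        exact absurd h.1 (hsink y h.2.2)
      · rintro _ rfl y - h
        exact hsink y h.2.2 h.1
    push Not at hsink
    rcases U.eq_empty_or_nonempty with rfl | hne
    · exact ⟨fun _ => 0, fun _ => 0, fun _ => by norm_num, fun x hx => absurd hx (by simp)⟩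
    obtain ⟨S, ⟨s, hs, t, hst⟩, hout, hcol⟩ := exists_outclosed (hA.res U) hne
      fun v hv => by
        obtain ⟨u, hu, h⟩ := hsink v hv
        exact ⟨u, hu, h, hv, hu⟩
    exact step S ⟨s, hs, hst.2.1⟩ hout hcol

theorem good_of {A : V → V → Prop} (hor : IsOriented A)
    (htf : ¬ ∃ a b c : V, a ≠ b ∧ a ≠ c ∧ b ≠ c ∧
      (A a b ∨ A b a) ∧ (A a c ∨ A c a) ∧ (A b c ∨ A c b))
    (hP6 : ¬ HasInducedCopy A P6) : Good A := by
  have irr : ∀ {u v}, Adj A u v → u ≠ v := by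
    rintro u _ (h | h) rfl <;> exact hor _ _ h h
  have tri : ∀ a b c, Adj A a b → Adj A b c → Adj A a c → False := fun a b c h1 h2 h3 =>
    htf ⟨a, b, c, irr h1, irr h3, irr h2, h1, h3, h2⟩
  refine ⟨hor, tri, fun a b c d e f ab bc cd de ef => ?_⟩
  by_contra hcon
  simp only [not_or] at hcon
  obtain ⟨n1, n2, n3, n4, n5, n6⟩ := hcon
  have m1 : ¬ Adj A a c := fun h => tri _ _ _ (Or.inl ab) (Or.inl bc) h
  have m2 : ¬ Adj A b d := fun h => tri _ _ _ (Or.inl bc) (Or.inl cd) h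
  have m3 : ¬ Adj A c e := fun h => tri _ _ _ (Or.inl cd) (Or.inl de) h
  have m4 : ¬ Adj A d f := fun h => tri _ _ _ (Or.inl de) (Or.inl ef) h
  have hw : ∀ i j : Fin 6, P6 i j ↔ A (![a, b, c, d, e, f] i) (![a, b, c, d, e, f] j) := by
    have l : ∀ v, ¬ A v v := fun v h => hor v v h h
    simp only [Adj, not_or] at n1 n2 n3 n4 n5 n6 m1 m2 m3 m4
    intro i j
    fin_cases i <;> fin_cases j <;>
      simp [P6, l, n1, n2, n3, n4, n5, n6, m1, m2, m3, m4, ab, bc, cd, de, ef, hor _ _ ab,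
        hor _ _ bc, hor _ _ cd, hor _ _ de, hor _ _ ef]
  refine hP6 ⟨_, fun i j hij => ?_, hw⟩
  -- distinct vertices of the path have different in- or out-neighbourhoods
  have e1 : ∀ k, P6 i k ↔ P6 j k := fun k => by rw [hw, hw, hij]
  have e2 : ∀ k, P6 k i ↔ P6 k j := fun k => by rw [hw, hw, hij]
  simp only [P6] at e1 e2
  revert e1 e2
  clear hij
  revert i j
  decide

end DiP6

/-- Triangle-free, `P⃗6`-free oriented graphs have dichromatic number at most 382. -/
theorem stmt12 {V : Type} [Fintype V] (A : V → V → Prop) (hor : IsOriented A)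
    (htf : ¬ ∃ a b c : V, a ≠ b ∧ a ≠ c ∧ b ≠ c ∧
      (A a b ∨ A b a) ∧ (A a c ∨ A c a) ∧ (A b c ∨ A c b))
    (hP6 : ¬ HasInducedCopy A P6) :
    dichrom A ≤ 382 := by
  obtain ⟨f, r, hf, hr⟩ := DiP6.col_all (DiP6.good_of hor htf hP6) Set.univ
  refine Nat.sInf_le ⟨fun v => ⟨f v, (hf v).trans (by norm_num)⟩, fun c v _ h => ?_⟩
  have hdec : ∀ {a b : V}, Relation.TransGen (fun a b => A a b ∧
      (⟨f a, (hf a).trans (by norm_num)⟩ : Fin 382) = c ∧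
      (⟨f b, (hf b).trans (by norm_num)⟩ : Fin 382) = c) a b → r b < r a := by
    intro a b h
    have one : ∀ {a b : V}, (A a b ∧ (⟨f a, (hf a).trans (by norm_num)⟩ : Fin 382) = c ∧
        (⟨f b, (hf b).trans (by norm_num)⟩ : Fin 382) = c) → r b < r a := fun ⟨h1, h2, h3⟩ =>
      hr _ trivial _ trivial h1 (congrArg Fin.val (h2.trans h3.symm))
    induction h with
    | single h => exact one h
    | tail _ h ih => exact (one h).trans ih
  exact lt_irrefl _ (hdec h)
end

section
/- Let C be a class of digraphs closed under taking induced subdigraphs, and let c be a nonnegative integer such that every nonempty digraph D in C has a nonempty dipolar set S with χ⃗(D[S]) ≤ c. Then every digraph in C has dichromatic number at most 2c. -/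
/-- A walk that starts in a set closed under successors stays in it. -/
lemma walk_restrict {V : Type} {R : V → V → Prop} {P : Set V}
    (h : ∀ a b, R a b → a ∈ P → b ∈ P) {a b : V} (ha : a ∈ P) (t : Relation.TransGen R a b) :
    ∃ hb : b ∈ P, Relation.TransGen (fun x y : P => R x.1 y.1) ⟨a, ha⟩ ⟨b, hb⟩ := by
  induction t with
  | single r => exact ⟨h _ _ r ha, .single r⟩
  | tail _ r ih =>
    obtain ⟨hb, t'⟩ := ih
    exact ⟨h _ _ r hb, t'.tail r⟩

/-- If arcs can cross the boundary of `P` in one direction only, then a closed walk meeting `P` lies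
in `P`. -/
lemma closedWalk_restrict {V : Type} {R : V → V → Prop} {P : Set V}
    (h : (∀ a b, R a b → a ∈ P → b ∈ P) ∨ (∀ a b, R a b → b ∈ P → a ∈ P))
    {v : V} (hv : v ∈ P) (t : Relation.TransGen R v v) :
    Relation.TransGen (fun x y : P => R x.1 y.1) ⟨v, hv⟩ ⟨v, hv⟩ := by
  rcases h with h | h
  · exact (walk_restrict h hv t).2
  · exact (walk_restrict (R := Function.swap R) (fun a b => h b a) hv t.swap).2.swap

/-- A finite loopless digraph has a good colouring with exactly `dichrom A` colours, so the infimum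
defining `dichrom` is over a nonempty set. -/
lemma exists_goodColouring_dichrom {V : Type} [Finite V] (A : V → V → Prop)
    (hA : Irreflexive A) : ∃ φ : V → Fin (dichrom A), GoodColouring A φ := by
  refine Nat.sInf_mem (s := {k : ℕ | ∃ φ : V → Fin k, GoodColouring A φ}) ?_
  refine ⟨Nat.card V, Finite.equivFin V, fun c v _ t => ?_⟩
  obtain ⟨w, ⟨hA', h1, h2⟩, -⟩ := Relation.TransGen.head'_iff.1 t
  obtain rfl := (Finite.equivFin V).injective (h1.trans h2.symm)
  exact hA _ hA'

lemma GoodColouring.castLE {V : Type} {A : V → V → Prop} {k l : ℕ} (h : k ≤ l)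
    {φ : V → Fin k} (hφ : GoodColouring A φ) : GoodColouring A (fun v => Fin.castLE h (φ v)) := by
  rintro _ v rfl t
  exact hφ _ v rfl (Relation.TransGen.mono (fun a b ⟨h1, h2, h3⟩ =>
    ⟨h1, Fin.castLE_injective h h2, Fin.castLE_injective h h3⟩) _ _ t)

/-- Good colourings of a dipolar set and of its complement combine to one of the whole digraph. -/
lemma exists_goodColouring_of_dipolar {V : Type} {A : V → V → Prop} {c : ℕ} {S : Set V}
    (hS : ∀ x ∈ S, (∀ y, A x y → y ∈ S) ∨ (∀ y, A y x → y ∈ S))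
    {σ : S → Fin c} (hσ : GoodColouring (fun a b : S => A a.1 b.1) σ)
    {τ : (Sᶜ : Set V) → Fin (2 * c)}
    (hτ : GoodColouring (fun a b : (Sᶜ : Set V) => A a.1 b.1) τ) :
    ∃ φ : V → Fin (2 * c), GoodColouring A φ := by
  classical
  let e : Fin c ⊕ Fin c ≃ Fin (2 * c) := finSumFinEquiv.trans (finCongr (two_mul c).symm)
  let φ : V → Fin (2 * c) := fun x =>
    if hx : x ∈ S then
      (if ∀ y, A x y → y ∈ S then e (.inl (σ ⟨x, hx⟩)) else e (.inr (σ ⟨x, hx⟩)))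
    else τ ⟨x, hx⟩
  have hin : ∀ x (hx : x ∈ S), φ x =
      if ∀ y, A x y → y ∈ S then e (.inl (σ ⟨x, hx⟩)) else e (.inr (σ ⟨x, hx⟩)) :=
    fun x hx => dif_pos hx
  have hout : ∀ x (hx : x ∉ S), φ x = τ ⟨x, hx⟩ := fun x hx => dif_neg hx
  refine ⟨φ, fun k v hv t => ?_⟩
  have hinl : ∀ i x, x ∈ S → φ x = e (.inl i) → ∀ y, A x y → y ∈ S := by
    intro i x hx hi
    rw [hin x hx] at hi
    split_ifs at hi with h
    · exact h
    · simp at hi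
  have hinr : ∀ i x, x ∈ S → φ x = e (.inr i) → ∀ y, A y x → y ∈ S := by
    intro i x hx hi
    rw [hin x hx] at hi
    split_ifs at hi with h
    · simp at hi
    · exact (hS x hx).resolve_left h
  have hcol : ∀ x (hx : x ∈ S), φ x = k → σ ⟨x, hx⟩ = (e.symm k).elim id id := by
    intro x hx hk
    rw [← hk, hin x hx]
    split_ifs <;> simp
  -- Within colour class `k`, arcs cross the boundary of `S` in at most one direction.
  have key : (∀ a b, (A a b ∧ φ a = k ∧ φ b = k) → a ∈ S → b ∈ S) ∨
      (∀ a b, (A a b ∧ φ a = k ∧ φ b = k) → b ∈ S → a ∈ S) := by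
    obtain ⟨i | i, rfl⟩ := e.surjective k
    · exact .inl fun a b h ha => hinl i a ha h.2.1 b h.1
    · exact .inr fun a b h hb => hinr i b hb h.2.2 a h.1
  by_cases hvS : v ∈ S
  · exact hσ _ ⟨v, hvS⟩ (hcol v hvS hv) (Relation.TransGen.mono
      (fun a b h => ⟨h.1, hcol _ a.2 h.2.1, hcol _ b.2 h.2.2⟩) _ _ (closedWalk_restrict key hvS t))
  · have key' : (∀ a b, (A a b ∧ φ a = k ∧ φ b = k) → a ∈ Sᶜ → b ∈ Sᶜ) ∨
        (∀ a b, (A a b ∧ φ a = k ∧ φ b = k) → b ∈ Sᶜ → a ∈ Sᶜ) :=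
      key.symm.imp (fun H a b h => mt (H a b h)) (fun H a b h => mt (H a b h))
    exact hτ k ⟨v, hvS⟩ ((hout v hvS).symm.trans hv) (Relation.TransGen.mono
      (fun a b h => ⟨h.1, (hout _ a.2).symm.trans h.2.1, (hout _ b.2).symm.trans h.2.2⟩) _ _
      (closedWalk_restrict key' hvS t))

/-- Lemma 9.2.1: if every nonempty digraph in a class `C` closed under induced subdigraphs
has a nonempty dipolar set inducing a subdigraph of dichromatic number at most `c`,
then every digraph in `C` has dichromatic number at most `2c`. -/
theorem stmt13 (C : ∀ V : Type, (V → V → Prop) → Prop)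
    (hclosed : ∀ (V : Type) (A : V → V → Prop), C V A →
      ∀ S : Set V, C ↥S (fun a b => A a.1 b.1))
    (c : ℕ)
    (hdip : ∀ (V : Type) [Fintype V] (A : V → V → Prop), Irreflexive A → C V A →
      Nonempty V → ∃ S : Set V, S.Nonempty ∧
        (∀ x ∈ S, (∀ y, A x y → y ∈ S) ∨ (∀ y, A y x → y ∈ S)) ∧
        dichrom (fun a b : S => A a.1 b.1) ≤ c) :
    ∀ (V : Type) [Fintype V] (A : V → V → Prop), Irreflexive A → C V A →
      dichrom A ≤ 2 * c := by
  intro V _ A hA hC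
  refine Nat.sInf_le (m := 2 * c) ?_
  induction hn : Nat.card V using Nat.strong_induction_on generalizing V with
  | _ n ih =>
  rcases isEmpty_or_nonempty V with hV | hV
  · exact ⟨isEmptyElim, fun _ v => isEmptyElim v⟩
  obtain ⟨S, ⟨x, hx⟩, hS, hc⟩ := hdip V A hA hC hV
  obtain ⟨σ, hσ⟩ := exists_goodColouring_dichrom (fun a b : S => A a.1 b.1) fun a => hA a.1
  have hlt : Nat.card (Sᶜ : Set V) < n :=
    hn ▸ Finite.card_subtype_lt (p := (· ∈ Sᶜ)) (x := x) (not_not.2 hx)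
  have : Fintype (Sᶜ : Set V) := Fintype.ofFinite _
  obtain ⟨τ, hτ⟩ := ih _ hlt (Sᶜ : Set V) (fun a b => A a.1 b.1) (fun a => hA a.1)
    (hclosed V A hC Sᶜ) rfl
  exact exists_goodColouring_of_dipolar hS (hσ.castLE hc) hτ
end
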